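/- Let d ≥ 2, let L : B(0,1)×S^{d−1} → ℝ^{d×d} be a map such that (z,ω) ↦ |z|·L(z,ω) is bounded and Lipschitz on B(0,1)×S^{d−1}, and assume L satisfies the cancellation condition: there exists α ∈ ℝ such that ∫_{B(0,1)} L(z,ω) |z|^{1−d} dz = α ( ω⊗ω − (1/d) I_d ) for every ω ∈ S^{d−1}. Then for every 1 < q < ∞, with q* = q/(q−1) and q̄ = min(q, q*), there exists a constant C (depending only on d, q and L, not on h) such that for every h ∈ (0,1/2) and all Schwartz functions A : ℝ^d → ℝ^{d×d} and g : ℝ^d → ℝ, there exist measurable functions u, v on ℝ^d with Q(A,g) = u + v almost everywhere and ‖u‖_{L¹(ℝ^d)} + ‖v‖_{L^q(ℝ^d)} ≤ C |log h|^{1/q̄} ( ‖g‖_{L^∞(ℝ^d)} + ‖g‖_{L²(ℝ^d)} ) ‖A‖_{L^q(ℝ^d)}. -/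

import Mathlib

open MeasureTheory

/-- The operator
`Q(A,g)(x) = ∫₀¹∫_{B(0,1)}∫_{S^{d−1}} (r^d/(r+h)^{d+1}) L(z,ω):A(x+rz) g(x+rω) dσ(ω) |z|^{1−d} dz dr`,
where matrices are encoded as elements of `EuclideanSpace ℝ (Fin d × Fin d)` and `σ` is the
`(d−1)`-dimensional Hausdorff (surface) measure on the unit sphere. -/
noncomputable def Qop (d : ℕ) (h : ℝ)
    (L : EuclideanSpace ℝ (Fin d) → EuclideanSpace ℝ (Fin d) →
      EuclideanSpace ℝ (Fin d × Fin d))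
    (A : EuclideanSpace ℝ (Fin d) → EuclideanSpace ℝ (Fin d × Fin d))
    (g : EuclideanSpace ℝ (Fin d) → ℝ)
    (x : EuclideanSpace ℝ (Fin d)) : ℝ :=
  ∫ r in Set.Ioc (0 : ℝ) 1,
    ∫ z in Metric.ball (0 : EuclideanSpace ℝ (Fin d)) 1,
      ∫ ω in Metric.sphere (0 : EuclideanSpace ℝ (Fin d)) 1,
        (r ^ d / (r + h) ^ (d + 1)) * (‖z‖ ^ (1 - (d : ℝ))) *
          (∑ kl : Fin d × Fin d, L z ω kl * A (x + r • z) kl) * g (x + r • ω)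
        ∂(μH[(d : ℝ) - 1])

open Filter Topology Metric Set
open scoped ENNReal NNReal

namespace QopBound

/-- For measures giving the same mass to all balls of equal radius, `μ` is dominated on open sets
by the lower density of `μ` with respect to `ν`. -/
lemma measure_open_le_liminf_ratio {X : Type*} [MetricSpace X] [SecondCountableTopology X]
    [MeasurableSpace X] [BorelSpace X] (μ ν : Measure X) [IsFiniteMeasure μ] [IsFiniteMeasure ν]
    (hμ : ∀ r x y, μ (ball x r) = μ (ball y r)) (hν : ∀ r x y, ν (ball x r) = ν (ball y r))
    (x₀ : X) (h0 : ∀ n : ℕ, ν (ball x₀ (1 / ((n : ℝ) + 1))) ≠ 0) {U : Set X} (hU : IsOpen U) :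
    μ U ≤ ν U * liminf (fun n : ℕ => μ (ball x₀ (1 / ((n : ℝ) + 1))) /
      ν (ball x₀ (1 / ((n : ℝ) + 1)))) atTop := by
  set ρ : ℕ → ℝ := fun n => 1 / ((n : ℝ) + 1) with hρ
  have hmeas : ∀ n, MeasurableSet {p : X × X | dist p.2 p.1 < ρ n} := fun n =>
    (isOpen_lt (by fun_prop) (by fun_prop)).measurableSet
  have hB : ∀ n, Measurable fun x => ν.restrict U (ball x (ρ n)) := fun n =>
    measurable_measure_prodMk_left (ν := ν.restrict U) (hmeas n)
  have hF : ∀ n, Measurable fun x => ν.restrict U (ball x (ρ n)) / ν (ball x₀ (ρ n)) := fun n =>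
    (hB n).div_const _
  have hpt : ∀ x ∈ U, (1 : ℝ≥0∞) ≤
      liminf (fun n => ν.restrict U (ball x (ρ n)) / ν (ball x₀ (ρ n))) atTop := by
    intro x hx
    obtain ⟨ε, hε, hsub⟩ := Metric.isOpen_iff.1 hU x hx
    refine le_liminf_of_le (by isBoundedDefault) ?_
    filter_upwards [tendsto_one_div_add_atTop_nhds_zero_nat.eventually (gt_mem_nhds hε)] with n hn
    have : ν.restrict U (ball x (ρ n)) = ν (ball x₀ (ρ n)) := by
      rw [Measure.restrict_apply measurableSet_ball,
        inter_eq_left.2 ((ball_subset_ball hn.le).trans hsub), hν _ x x₀]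
    rw [this, ENNReal.div_self (h0 n) (measure_ne_top _ _)]
  have h_int : ∀ n, ∫⁻ x in U, ν.restrict U (ball x (ρ n)) / ν (ball x₀ (ρ n)) ∂μ ≤
      ν U * (μ (ball x₀ (ρ n)) / ν (ball x₀ (ρ n))) := by
    intro n
    simp only [div_eq_mul_inv]
    rw [lintegral_mul_const _ (hB n), ← mul_assoc]
    gcongr
    calc ∫⁻ x in U, ν.restrict U (ball x (ρ n)) ∂μ
        = ((μ.restrict U).prod (ν.restrict U)) {p : X × X | dist p.2 p.1 < ρ n} :=
          (Measure.prod_apply (hmeas n)).symm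
      _ = ∫⁻ y in U, μ.restrict U (ball y (ρ n)) ∂ν := by
          rw [Measure.prod_apply_symm (hmeas n)]
          congr 1
          ext y
          congr 1
          ext x
          simp [dist_comm]
      _ ≤ ∫⁻ y in U, μ (ball x₀ (ρ n)) ∂ν := by
          refine lintegral_mono fun y => ?_
          exact (Measure.restrict_apply_le _ _).trans (hμ _ y x₀).le
      _ = ν U * μ (ball x₀ (ρ n)) := by simp [mul_comm]
  calc μ U = ∫⁻ x in U, 1 ∂μ := by simp
    _ ≤ ∫⁻ x in U, liminf (fun n => ν.restrict U (ball x (ρ n)) / ν (ball x₀ (ρ n))) atTop ∂μ :=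
        setLIntegral_mono' hU.measurableSet hpt
    _ ≤ liminf (fun n => ∫⁻ x in U, ν.restrict U (ball x (ρ n)) / ν (ball x₀ (ρ n)) ∂μ) atTop :=
        lintegral_liminf_le hF
    _ ≤ liminf (fun n => ν U * (μ (ball x₀ (ρ n)) / ν (ball x₀ (ρ n)))) atTop :=
        liminf_le_liminf (Eventually.of_forall h_int)
    _ ≤ _ := by
        rcases eq_or_ne (ν U) 0 with h | h
        · simp [h]
        · refine (ENNReal.liminf_mul_le (u := fun _ => ν U) (Or.inl ?_) (Or.inl ?_)).trans ?_
          · simpa using h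
          · simp
          · rw [limsup_const]

/-- Two finite measures on a separable metric space, each giving the same mass to all balls of
equal radius, are proportional. -/
theorem exists_eq_smul_of_uniform {X : Type*} [MetricSpace X] [SecondCountableTopology X]
    [MeasurableSpace X] [BorelSpace X] (μ ν : Measure X) [IsFiniteMeasure μ] [IsFiniteMeasure ν]
    (hμ : ∀ r x y, μ (ball x r) = μ (ball y r)) (hν : ∀ r x y, ν (ball x r) = ν (ball y r))
    (hν0 : ν ≠ 0) : ∃ c : ℝ≥0, μ = c • ν := by
  rcases eq_or_ne μ 0 with rfl | hμ0
  · exact ⟨0, by simp⟩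
  have hne : Nonempty X := by
    by_contra h
    rw [not_nonempty_iff] at h
    exact hν0 (Measure.eq_zero_of_isEmpty ν)
  obtain ⟨x₀⟩ := hne
  have pos : ∀ (κ : Measure X), (∀ r x y, κ (ball x r) = κ (ball y r)) → κ ≠ 0 →
      ∀ n : ℕ, κ (ball x₀ (1 / ((n : ℝ) + 1))) ≠ 0 := by
    intro κ hκ hκ0 n hn
    apply hκ0
    rw [← Measure.measure_univ_eq_zero]
    refine measure_null_of_locally_null _ fun x _ => ⟨ball x (1 / ((n : ℝ) + 1)), ?_, ?_⟩
    · exact mem_nhdsWithin_of_mem_nhds (ball_mem_nhds _ (by positivity))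
    · rw [hκ _ x x₀, hn]
  set a : ℕ → ℝ≥0∞ := fun n => μ (ball x₀ (1 / ((n : ℝ) + 1)))
  set b : ℕ → ℝ≥0∞ := fun n => ν (ball x₀ (1 / ((n : ℝ) + 1)))
  set c := liminf (fun n => a n / b n) atTop
  set c' := liminf (fun n => b n / a n) atTop
  have h1 : ∀ U, IsOpen U → μ U ≤ ν U * c := fun U hU =>
    measure_open_le_liminf_ratio μ ν hμ hν x₀ (pos ν hν hν0) hU
  have h2 : ∀ U, IsOpen U → ν U ≤ μ U * c' := fun U hU =>
    measure_open_le_liminf_ratio ν μ hν hμ x₀ (pos μ hμ hμ0) hU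
  have hcc : c * c' ≤ 1 := by
    refine ENNReal.le_liminf_mul.trans ?_
    have : (fun n => a n / b n) * (fun n => b n / a n) = fun _ => (1 : ℝ≥0∞) := by
      ext n
      have ha := pos μ hμ hμ0 n
      have hb := pos ν hν hν0 n
      have ha' : a n ≠ ∞ := measure_ne_top _ _
      have hb' : b n ≠ ∞ := measure_ne_top _ _
      change a n / b n * (b n / a n) = 1
      rw [div_eq_mul_inv, div_eq_mul_inv, mul_assoc, ← mul_assoc (b n)⁻¹,
        ENNReal.inv_mul_cancel hb hb', one_mul, ENNReal.mul_inv_cancel ha ha']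
    rw [this]
    simp
  have hc'0 : c' ≠ 0 := fun h => by
    have := h2 univ isOpen_univ
    rw [h, mul_zero, nonpos_iff_eq_zero, Measure.measure_univ_eq_zero] at this
    exact hν0 this
  have hct : c ≠ ∞ := fun h => by
    rw [h, ENNReal.top_mul hc'0] at hcc
    simp at hcc
  have heq : ∀ U, IsOpen U → μ U = c * ν U := by
    intro U hU
    refine le_antisymm ((h1 U hU).trans_eq (mul_comm _ _)) ?_
    calc c * ν U ≤ c * (μ U * c') := by gcongr; exact h2 U hU
      _ = μ U * (c * c') := by ring
      _ ≤ μ U * 1 := by gcongr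
      _ = μ U := mul_one _
  refine ⟨c.toNNReal, ?_⟩
  refine ext_of_generate_finite {U : Set X | IsOpen U} (BorelSpace.measurable_eq) isPiSystem_isOpen (fun U hU => ?_) ?_
  · rw [heq U hU]; simp [ENNReal.smul_def, ENNReal.coe_toNNReal hct]
  · rw [heq univ isOpen_univ]; simp [ENNReal.smul_def, ENNReal.coe_toNNReal hct]

/-- `d`-dimensional Euclidean space. -/
abbrev Eu (d : ℕ) := EuclideanSpace ℝ (Fin d)

lemma lipschitzOnWith_normalize (E : Type*) [NormedAddCommGroup E] [NormedSpace ℝ E] :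
    LipschitzOnWith 2 (fun x : E => ‖x‖⁻¹ • x) {x | 1 ≤ ‖x‖} := by
  refine LipschitzOnWith.of_dist_le_mul fun x hx y hy => ?_
  simp only [mem_ofPred_eq] at hx hy
  have hx0 : 0 < ‖x‖ := by linarith
  have hy0 : 0 < ‖y‖ := by linarith
  have e : ‖x‖⁻¹ • x - ‖y‖⁻¹ • y = ‖x‖⁻¹ • (x - y) + (‖x‖⁻¹ * (‖y‖ - ‖x‖) * ‖y‖⁻¹) • y := by
    have h : ‖x‖⁻¹ * (‖y‖ - ‖x‖) * ‖y‖⁻¹ = ‖x‖⁻¹ - ‖y‖⁻¹ := by field_simp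
    rw [h]; module
  have hinv : ‖x‖⁻¹ ≤ 1 := inv_le_one_of_one_le₀ hx
  have h1 : |‖y‖ - ‖x‖| ≤ ‖x - y‖ := by
    rw [abs_sub_comm]; exact abs_norm_sub_norm_le x y
  rw [dist_eq_norm, dist_eq_norm, e]
  refine (norm_add_le _ _).trans ?_
  rw [norm_smul, norm_smul, norm_mul, norm_mul, norm_inv, norm_norm, norm_inv, norm_norm,
    Real.norm_eq_abs, mul_assoc, inv_mul_cancel₀ hy0.ne', mul_one]
  have h2 : ‖x‖⁻¹ * ‖x - y‖ ≤ 1 * ‖x - y‖ := by gcongr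
  have h3 : ‖x‖⁻¹ * |‖y‖ - ‖x‖| ≤ 1 * ‖x - y‖ := by gcongr
  simp only [NNReal.coe_ofNat]
  linarith

/-- The unit sphere of `ℝ^(m+1)` has finite `m`-dimensional Hausdorff measure. -/
lemma hausdorffMeasure_sphere_lt_top (m : ℕ) :
    μH[(m : ℝ)] (sphere (0 : Eu (m + 1)) 1) < ∞ := by
  set f : Fin (m + 1) → ℝ → (Fin m → ℝ) → Eu (m + 1) := fun i s y =>
    WithLp.toLp 2 (Fin.insertNth i s y : Fin (m + 1) → ℝ)
  have hf : ∀ i s, ∃ K, LipschitzWith K (f i s) := by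
    intro i s
    have h : LipschitzWith 1 (fun y : Fin m → ℝ => (Fin.insertNth i s y : Fin (m + 1) → ℝ)) := by
      refine LipschitzWith.of_dist_le_mul fun x y => ?_
      rw [NNReal.coe_one, one_mul, dist_pi_le_iff dist_nonneg]
      intro j
      induction j using Fin.succAboveCases i with
      | x => simp
      | p j => simpa using dist_le_pi_dist x y j
    exact ⟨_, (PiLp.lipschitzWith_toLp 2 (fun _ : Fin (m + 1) => ℝ)).comp h⟩
  have hnorm : ∀ i s y, |s| = 1 → 1 ≤ ‖f i s y‖ := by
    intro i s y hs
    have := PiLp.norm_apply_le (f i s y) i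
    simpa [f, hs] using this
  set N : Eu (m + 1) → Eu (m + 1) := fun x => ‖x‖⁻¹ • x
  have hcov : sphere (0 : Eu (m + 1)) 1 ⊆
      ⋃ i, ⋃ s ∈ ({1, -1} : Finset ℝ), (N ∘ f i s) '' closedBall 0 1 := by
    intro ω hω
    have hω1 : ‖ω‖ = 1 := by simpa using hω
    obtain ⟨i, -, hi⟩ := Finset.exists_max_image Finset.univ (fun i => |ω i|) ⟨0, by simp⟩
    have hi0 : 0 < |ω i| := by
      by_contra h
      have : ω = 0 := by
        ext j
        have := hi j (by simp)
        exact abs_nonpos_iff.1 (this.trans (not_lt.1 h))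
      simp [this] at hω1
    refine mem_iUnion.2 ⟨i, mem_iUnion₂.2 ⟨ω i / |ω i|, ?_, ?_⟩⟩
    · rcases lt_or_gt_of_ne (abs_pos.1 hi0) with h | h
      · simp [abs_of_neg h, h.ne]
      · simp [abs_of_pos h, h.ne']
    · refine ⟨fun j => ω (i.succAbove j) / |ω i|, ?_, ?_⟩
      · rw [mem_closedBall_zero_iff, pi_norm_le_iff_of_nonneg zero_le_one]
        intro j
        rw [norm_div, Real.norm_eq_abs, Real.norm_eq_abs, abs_abs, div_le_one hi0]
        exact hi _ (by simp)
      · have e : f i (ω i / |ω i|) (fun j => ω (i.succAbove j) / |ω i|) = |ω i|⁻¹ • ω := by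
          ext j
          induction j using Fin.succAboveCases i with
          | x => simp [f, div_eq_inv_mul]
          | p j => simp [f, div_eq_inv_mul]
        simp only [Function.comp, e, N]
        rw [norm_smul, hω1, smul_smul]
        simp [hi0.ne']
  refine (measure_mono hcov).trans_lt ?_
  refine (measure_iUnion_le _).trans_lt ?_
  rw [tsum_fintype]
  refine ENNReal.sum_lt_top.2 fun i _ => ?_
  refine measure_biUnion_lt_top (Finset.finite_toSet _) fun s hs => ?_
  have hs' : |s| = 1 := by
    simp only [Finset.coe_insert, Finset.coe_singleton, mem_insert_iff, mem_singleton_iff] at hs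
    rcases hs with rfl | rfl <;> simp
  obtain ⟨K, hK⟩ := hf i s
  have hl : LipschitzOnWith (2 * K) (N ∘ f i s) (closedBall 0 1) :=
    (lipschitzOnWith_normalize (Eu (m + 1))).comp hK.lipschitzOnWith
      fun y _ => hnorm i s y hs'
  refine (hl.hausdorffMeasure_image_le (Nat.cast_nonneg m)).trans_lt ?_
  refine ENNReal.mul_lt_top (ENNReal.rpow_lt_top_of_nonneg (Nat.cast_nonneg m)
    ENNReal.coe_ne_top) ?_
  have := hausdorffMeasure_pi_real (ι := Fin m)
  rw [Fintype.card_fin] at this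
  rw [this]
  exact measure_closedBall_lt_top

/-- The surface measure on the unit sphere, as a measure on the ambient space. -/
noncomputable def surf (d : ℕ) : Measure (Eu d) := (μH[(d : ℝ) - 1]).restrict (sphere 0 1)

lemma isFiniteMeasure_surf {d : ℕ} (hd : 2 ≤ d) : IsFiniteMeasure (surf d) := by
  obtain ⟨m, rfl⟩ : ∃ m, d = m + 1 := ⟨d - 1, by omega⟩
  refine ⟨?_⟩
  rw [surf, Measure.restrict_apply_univ]
  simpa using hausdorffMeasure_sphere_lt_top m

open scoped Pointwise in
/-- The surface measure is proportional to the one coming from polar coordinates. -/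
lemma exists_surf_eq {d : ℕ} (hd : 2 ≤ d) :
    ∃ c : ℝ≥0, surf d = c • (volume : Measure (Eu d)).toSphere.map Subtype.val := by
  have := isFiniteMeasure_surf hd
  have hnt : Nontrivial (Eu d) := by
    have : Nonempty (Fin d) := ⟨⟨0, by omega⟩⟩
    infer_instance
  have hms : MeasurableSet (sphere (0 : Eu d) 1) := isClosed_sphere.measurableSet
  set μ : Measure (sphere (0 : Eu d) 1) := (μH[(d : ℝ) - 1]).comap Subtype.val
  have hmap : μ.map Subtype.val = surf d := by
    rw [map_comap_subtype_coe hms, surf]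
  have hfin : IsFiniteMeasure μ := by
    refine ⟨?_⟩
    have h : μ univ = μ.map Subtype.val univ := by
      rw [Measure.map_apply measurable_subtype_coe MeasurableSet.univ, preimage_univ]
    rw [h, hmap]
    exact measure_lt_top _ _
  have hrefl : ∀ x y : sphere (0 : Eu d) 1, ∃ e : Eu d ≃ₗᵢ[ℝ] Eu d, e x = y := fun x y =>
    ⟨(ℝ ∙ ((x : Eu d) - y))ᗮ.reflection, Submodule.reflection_sub (by simp)⟩
  have himg : ∀ (r : ℝ) (x y : sphere (0 : Eu d) 1) (e : Eu d ≃ₗᵢ[ℝ] Eu d), e x = y →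
      e '' (Subtype.val '' ball x r) = Subtype.val '' ball y r := by
    intro r x y e he
    rw [Subtype.image_ball, Subtype.image_ball, image_inter e.injective]
    have h2 := e.image_sphere 0 1
    rw [map_zero] at h2
    have h3 : {a : Eu d | a ∈ sphere (0 : Eu d) 1} = sphere 0 1 := rfl
    rw [h3, h2, e.image_ball, he]
  have hμ : ∀ r x y, μ (ball x r) = μ (ball y r) := by
    intro r x y
    obtain ⟨e, he⟩ := hrefl x y
    rw [(MeasurableEmbedding.subtype_coe hms).comap_apply,
      (MeasurableEmbedding.subtype_coe hms).comap_apply, ← himg r x y e he]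
    exact (e.toIsometryEquiv.hausdorffMeasure_image _ _).symm
  have hν : ∀ r x y, (volume : Measure (Eu d)).toSphere (ball x r) =
      (volume : Measure (Eu d)).toSphere (ball y r) := by
    intro r x y
    obtain ⟨e, he⟩ := hrefl x y
    rw [Measure.toSphere_apply' _ measurableSet_ball, Measure.toSphere_apply' _ measurableSet_ball,
      ← himg r x y e he]
    congr 1
    have : Ioo (0 : ℝ) 1 • (e '' (Subtype.val '' ball x r)) =
        e '' (Ioo (0 : ℝ) 1 • (Subtype.val '' ball x r)) := by
      rw [← image2_smul, ← image2_smul, image_image2, image2_image_right]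
      simp
    rw [this]
    have h := e.measurePreserving.measure_preimage_emb
      e.toMeasurableEquiv.measurableEmbedding
      (e '' (Ioo (0 : ℝ) 1 • (Subtype.val '' ball x r)))
    rwa [preimage_image_eq _ e.injective] at h
  obtain ⟨c, hc⟩ := exists_eq_smul_of_uniform μ _ hμ hν (Measure.toSphere_ne_zero _)
  refine ⟨c, ?_⟩
  rw [← hmap, hc, Measure.map_smul]

/-- The measure `dρ/ρ` on `(1/2, 1]`. -/
noncomputable def rad : Measure ℝ :=
  (volume.restrict (Ioc (1 / 2 : ℝ) 1)).withDensity fun ρ => ENNReal.ofReal ρ⁻¹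

instance : IsFiniteMeasure rad := by
  refine isFiniteMeasure_withDensity ?_
  refine ((setLIntegral_mono' (g := fun _ => 2) measurableSet_Ioc fun ρ hρ => ?_).trans_lt
    ?_).ne
  · rw [← ENNReal.ofReal_ofNat 2]
    refine ENNReal.ofReal_le_ofReal ?_
    rw [inv_le_comm₀ (by linarith [hρ.1]) (by norm_num)]
    linarith [hρ.1]
  · simp only [lintegral_const]
    exact ENNReal.mul_lt_top (by simp) (by simp)

/-- The measure `dρ/ρ dσ(ω)` on `(1/2, 1] × S^{d-1}`. -/
noncomputable def par (d : ℕ) : Measure (ℝ × Eu d) := rad.prod (surf d)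

lemma isFiniteMeasure_par {d : ℕ} (hd : 2 ≤ d) : IsFiniteMeasure (par d) := by
  have := isFiniteMeasure_surf hd
  unfold par
  infer_instance

lemma ae_par_mem {d : ℕ} (hd : 2 ≤ d) :
    ∀ᵐ p ∂(par d), p.1 ∈ Ioc (1 / 2 : ℝ) 1 ∧ p.2 ∈ sphere (0 : Eu d) 1 := by
  have := isFiniteMeasure_surf hd
  have h1 : ∀ᵐ ρ ∂rad, ρ ∈ Ioc (1 / 2 : ℝ) 1 :=
    (withDensity_absolutelyContinuous _ _).ae_le (ae_restrict_mem measurableSet_Ioc)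
  have h2 : ∀ᵐ ω ∂(surf d), ω ∈ sphere (0 : Eu d) 1 :=
    ae_restrict_mem isClosed_sphere.measurableSet
  filter_upwards [Measure.quasiMeasurePreserving_fst.ae h1,
    Measure.quasiMeasurePreserving_snd.ae h2] with p hp hp' using ⟨hp, hp'⟩

/-- The half-open annulus `1/2 < |y| ≤ 1`. -/
def ann (d : ℕ) : Set (Eu d) := {y | ‖y‖ ∈ Ioc (1 / 2 : ℝ) 1}

lemma measurableSet_ann (d : ℕ) : MeasurableSet (ann d) :=
  measurable_norm measurableSet_Ioc

/-- Polar coordinates on the annulus for the Hausdorff measure on the sphere. -/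
lemma exists_lintegral_par_eq {d : ℕ} (hd : 2 ≤ d) : ∃ c : ℝ≥0, ∀ Φ : Eu d → ℝ≥0∞, Measurable Φ →
    ∫⁻ p, Φ (p.1 • p.2) ∂(par d) =
      c * ∫⁻ y in ann d, ENNReal.ofReal (‖y‖ ^ d)⁻¹ * Φ y := by
  have := isFiniteMeasure_surf hd
  have hnt : Nontrivial (Eu d) := by
    have : Nonempty (Fin d) := ⟨⟨0, by omega⟩⟩
    infer_instance
  obtain ⟨c, hc⟩ := exists_surf_eq hd
  refine ⟨c, fun Φ hΦ => ?_⟩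
  have hsub : Ioc (1 / 2 : ℝ) 1 ⊆ Ioi 0 := fun x hx => lt_trans (by norm_num) hx.1
  have hval : Measurable (Subtype.val : sphere (0 : Eu d) 1 → Eu d) := measurable_subtype_coe
  have hin : Measurable fun ρ : ℝ =>
      ∫⁻ ω, Φ (ρ • (ω : Eu d)) ∂(volume : Measure (Eu d)).toSphere :=
    Measurable.lintegral_prod_right' (f := fun p : ℝ × sphere (0 : Eu d) 1 => Φ (p.1 • p.2))
      (hΦ.comp (by fun_prop))
  have hL : ∫⁻ p, Φ (p.1 • p.2) ∂(par d) = c * ∫⁻ ρ in Ioc (1 / 2 : ℝ) 1, ENNReal.ofReal ρ⁻¹ *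
      ∫⁻ ω, Φ (ρ • (ω : Eu d)) ∂(volume : Measure (Eu d)).toSphere := by
    have h0 : Measurable fun p : ℝ × Eu d => Φ (p.1 • p.2) := hΦ.comp (by fun_prop)
    rw [par, lintegral_prod _ h0.aemeasurable]
    have h1 : ∀ ρ : ℝ, ∫⁻ ω, Φ (ρ • ω) ∂(surf d) =
        c * ∫⁻ ω, Φ (ρ • (ω : Eu d)) ∂(volume : Measure (Eu d)).toSphere := by
      intro ρ
      have h2 : Measurable fun ω : Eu d => Φ (ρ • ω) := hΦ.comp (by fun_prop)
      rw [hc, lintegral_smul_measure, lintegral_map h2 hval]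
      rfl
    simp only [h1]
    rw [lintegral_const_mul _ hin, rad,
      lintegral_withDensity_eq_lintegral_mul _ (by fun_prop) hin]
    rfl
  rw [hL]
  congr 1
  set Ψ : Eu d → ℝ≥0∞ := (ann d).indicator fun y => ENNReal.ofReal (‖y‖ ^ d)⁻¹ * Φ y
  have hΨ : Measurable Ψ := by
    refine Measurable.indicator ?_ (measurableSet_ann d)
    fun_prop
  have hmp := (volume : Measure (Eu d)).measurePreserving_homeomorphUnitSphereProd
  calc ∫⁻ ρ in Ioc (1 / 2 : ℝ) 1, ENNReal.ofReal ρ⁻¹ *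
        ∫⁻ ω, Φ (ρ • (ω : Eu d)) ∂(volume : Measure (Eu d)).toSphere
      = ∫⁻ ρ in Ioi (0 : ℝ), (Ioc (1 / 2 : ℝ) 1).indicator (fun ρ => ENNReal.ofReal ρ⁻¹ *
        ∫⁻ ω, Φ (ρ • (ω : Eu d)) ∂(volume : Measure (Eu d)).toSphere) ρ := by
        rw [lintegral_indicator measurableSet_Ioc, Measure.restrict_restrict measurableSet_Ioc,
          inter_eq_left.2 hsub]
    _ = ∫⁻ ρ : Ioi (0 : ℝ), ENNReal.ofReal (ρ.1 ^ (d - 1)) *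
        ∫⁻ ω, Ψ (ρ.1 • (ω : Eu d)) ∂(volume : Measure (Eu d)).toSphere
          ∂(Measure.comap Subtype.val volume) := by
        rw [← lintegral_subtype_comap measurableSet_Ioi]
        refine lintegral_congr fun ρ => ?_
        have hρ : 0 < ρ.1 := ρ.2
        have hn : ∀ ω : sphere (0 : Eu d) 1, ‖ρ.1 • (ω : Eu d)‖ = ρ.1 := fun ω => by
          rw [norm_smul, norm_eq_of_mem_sphere, mul_one, Real.norm_of_nonneg hρ.le]
        by_cases h : ρ.1 ∈ Ioc (1 / 2 : ℝ) 1
        · have h2 : ∀ ω : sphere (0 : Eu d) 1, Ψ (ρ.1 • (ω : Eu d)) =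
              ENNReal.ofReal (ρ.1 ^ d)⁻¹ * Φ (ρ.1 • (ω : Eu d)) := fun ω => by
            have : ρ.1 • (ω : Eu d) ∈ ann d := by simpa only [ann, mem_ofPred_eq, hn] using h
            simp only [Ψ, indicator_of_mem this, hn]
          rw [indicator_of_mem h]
          simp only [h2]
          have h3 : Measurable fun ω : sphere (0 : Eu d) 1 => Φ (ρ.1 • (ω : Eu d)) :=
            hΦ.comp (by fun_prop)
          rw [lintegral_const_mul _ h3, ← mul_assoc,
            ← ENNReal.ofReal_mul (by positivity)]
          congr 2
          obtain ⟨m, rfl⟩ : ∃ m, d = m + 1 := ⟨d - 1, by omega⟩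
          simp only [Nat.add_sub_cancel]
          field_simp
          ring
        · have h2 : ∀ ω : sphere (0 : Eu d) 1, Ψ (ρ.1 • (ω : Eu d)) = 0 := fun ω => by
            have : ρ.1 • (ω : Eu d) ∉ ann d := by simpa only [ann, mem_ofPred_eq, hn] using h
            simp only [Ψ, indicator_of_notMem this]
          rw [indicator_of_notMem h]
          simp [h2]
    _ = ∫⁻ ρ : Ioi (0 : ℝ),
        ∫⁻ ω, Ψ (ρ.1 • (ω : Eu d)) ∂(volume : Measure (Eu d)).toSphere
          ∂(Measure.volumeIoiPow (d - 1)) := by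
        rw [Measure.volumeIoiPow, lintegral_withDensity_eq_lintegral_mul _ (by fun_prop)]
        · rfl
        · exact Measurable.lintegral_prod_right'
            (f := fun p : Ioi (0 : ℝ) × sphere (0 : Eu d) 1 => Ψ (p.1.1 • p.2))
            (hΨ.comp (by fun_prop))
    _ = ∫⁻ p, Ψ (p.2.1 • (p.1 : Eu d))
          ∂((volume : Measure (Eu d)).toSphere.prod (Measure.volumeIoiPow (d - 1))) := by
        have h3 : Measurable fun p : sphere (0 : Eu d) 1 × Ioi (0 : ℝ) =>
            Ψ (p.2.1 • (p.1 : Eu d)) := hΨ.comp (by fun_prop)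
        rw [lintegral_prod_symm _ h3.aemeasurable]
    _ = ∫⁻ y : ({0}ᶜ : Set (Eu d)), Ψ y ∂(Measure.comap Subtype.val volume) := by
        have hd' : Module.finrank ℝ (Eu d) = d := by simp
        rw [hd'] at hmp
        rw [← hmp.lintegral_comp_emb (Homeomorph.measurableEmbedding _)]
        refine lintegral_congr fun y => ?_
        have := homeomorphUnitSphereProd_symm_apply_coe (Eu d) (homeomorphUnitSphereProd (Eu d) y)
        rw [← this, Homeomorph.symm_apply_apply]
    _ = ∫⁻ y in ann d, ENNReal.ofReal (‖y‖ ^ d)⁻¹ * Φ y := by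
        rw [lintegral_subtype_comap (measurableSet_singleton _).compl, restrict_compl_singleton,
          lintegral_indicator (measurableSet_ann d)]

/-- Integral form of `exists_lintegral_par_eq`. -/
lemma exists_integral_par_eq {d : ℕ} (hd : 2 ≤ d) : ∃ c : ℝ≥0, ∀ Φ : Eu d → ℝ, Measurable Φ →
    ∫ p, Φ (p.1 • p.2) ∂(par d) = ∫ y, (ann d).indicator (fun y => c * (‖y‖ ^ d)⁻¹) y * Φ y := by
  obtain ⟨c, hc⟩ := exists_lintegral_par_eq hd
  refine ⟨c, fun Φ hΦ => ?_⟩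
  have hm : (par d).map (fun p => p.1 • p.2) =
      (volume.restrict (ann d)).withDensity fun y => ENNReal.ofReal (c * (‖y‖ ^ d)⁻¹) := by
    refine Measure.ext_of_lintegral _ fun f hf => ?_
    rw [lintegral_map hf (by fun_prop), hc f hf,
      lintegral_withDensity_eq_lintegral_mul _ (by fun_prop) hf, ← lintegral_const_mul _
      (by fun_prop)]
    refine lintegral_congr fun y => ?_
    rw [Pi.mul_apply, ENNReal.ofReal_mul (NNReal.coe_nonneg c), ENNReal.ofReal_coe_nnreal, mul_assoc]
  rw [← integral_map (φ := fun p : ℝ × Eu d => p.1 • p.2) (by fun_prop)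
    hΦ.aestronglyMeasurable, hm,
    integral_withDensity_eq_integral_toReal_smul (by fun_prop)
      (Eventually.of_forall fun _ => ENNReal.ofReal_lt_top),
    ← integral_indicator (measurableSet_ann d)]
  refine integral_congr_ae (Eventually.of_forall fun y => ?_)
  by_cases h : y ∈ ann d
  · simp only [indicator_of_mem h, smul_eq_mul]
    rw [ENNReal.toReal_ofReal (by positivity)]
  · simp [indicator_of_notMem h]

/-- Jensen's inequality for powers of a Lebesgue integral against a finite measure. -/
lemma lintegral_rpow_le {P : Type*} [MeasurableSpace P] (ν : Measure P) [IsFiniteMeasure ν]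
    {q : ℝ} (hq : 1 ≤ q) {f : P → ℝ≥0∞} (hf : AEMeasurable f ν) :
    (∫⁻ p, f p ∂ν) ^ q ≤ ν univ ^ (q - 1) * ∫⁻ p, f p ^ q ∂ν := by
  rcases hq.eq_or_lt with rfl | hq
  · simp
  have hc := Real.HolderConjugate.conjExponent hq
  have h := ENNReal.lintegral_mul_le_Lp_mul_Lq ν hc hf (g := fun _ => 1) aemeasurable_const
  simp only [Pi.mul_apply, mul_one, ENNReal.one_rpow, lintegral_const, one_mul] at h
  have hq0 : 0 < q := by linarith
  calc (∫⁻ p, f p ∂ν) ^ q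
      ≤ ((∫⁻ p, f p ^ q ∂ν) ^ (1 / q) * ν univ ^ (1 / q.conjExponent)) ^ q := by gcongr
    _ = ν univ ^ (q - 1) * ∫⁻ p, f p ^ q ∂ν := by
      rw [ENNReal.mul_rpow_of_nonneg _ _ hq0.le, ← ENNReal.rpow_mul, ← ENNReal.rpow_mul,
        one_div_mul_cancel hq0.ne', ENNReal.rpow_one, mul_comm]
      congr 2
      have : q - 1 ≠ 0 := by linarith
      rw [Real.conjExponent]
      field_simp

/-- Minkowski's inequality for averages of translates. -/
lemma lintegral_rpow_translates_le {d : ℕ} {P : Type*} [MeasurableSpace P] (ν : Measure P)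
    [IsFiniteMeasure ν] {θ : P → Eu d} (hθ : Measurable θ) {q : ℝ} (hq : 1 ≤ q)
    {f : Eu d → ℝ≥0∞} (hf : Measurable f) :
    ∫⁻ x, (∫⁻ p, f (x + θ p) ∂ν) ^ q ≤ ν univ ^ q * ∫⁻ x, f x ^ q := by
  have hm : Measurable fun y : Eu d × P => f (y.1 + θ y.2) := hf.comp (by fun_prop)
  calc ∫⁻ x, (∫⁻ p, f (x + θ p) ∂ν) ^ q
      ≤ ∫⁻ x, ν univ ^ (q - 1) * ∫⁻ p, f (x + θ p) ^ q ∂ν := by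
        refine lintegral_mono fun x => lintegral_rpow_le ν hq ?_
        exact (hf.comp (by fun_prop)).aemeasurable
    _ = ν univ ^ (q - 1) * ∫⁻ p, (∫⁻ x, f (x + θ p) ^ q) ∂ν := by
        rw [lintegral_const_mul _ (hm.pow_const q).lintegral_prod_right',
          lintegral_lintegral_swap (hm.pow_const q).aemeasurable]
    _ = ν univ ^ q * ∫⁻ x, f x ^ q := by
        have : ∀ p, ∫⁻ x, f (x + θ p) ^ q = ∫⁻ x, f x ^ q := fun p =>
          lintegral_add_right_eq_self (fun x => f x ^ q) (θ p)
        simp only [this, lintegral_const]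
        have h1 : ν univ ^ q = ν univ ^ (q - 1) * ν univ := by
          conv_rhs => rw [← ENNReal.rpow_one (ν univ), ← ENNReal.rpow_mul, one_mul,
            ← ENNReal.rpow_add_of_nonneg _ _ (by linarith) zero_le_one, sub_add_cancel]
        rw [h1, mul_comm (∫⁻ x, f x ^ q), mul_assoc]

/-- Bounded integrable measurable functions. -/
structure BddInt {d : ℕ} (f : Eu d → ℝ) : Prop where
  meas : Measurable f
  int : Integrable f
  bdd : ∃ B, ∀ x, |f x| ≤ B

/-- The average of `f` at scale `δ` against the kernel `ψ`. -/
noncomputable def avg {d : ℕ} (ψ : Eu d → ℝ) (δ : ℝ) (f : Eu d → ℝ) (x : Eu d) : ℝ :=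
  ∫ z, ψ z * f (x + δ • z)

section avg

variable {d : ℕ} {ψ f g : Eu d → ℝ} {δ : ℝ}

lemma BddInt.integrable_mul (hf : BddInt f) (hg : Integrable g) :
    Integrable fun x => f x * g x := by
  obtain ⟨B, hB⟩ := hf.bdd
  exact hg.bdd_mul hf.meas.aestronglyMeasurable (Eventually.of_forall hB)

lemma BddInt.integrable_sq (hf : BddInt f) : Integrable fun x => f x ^ 2 := by
  simpa only [pow_two] using hf.integrable_mul hf.int

lemma measurable_avg (hψ : Measurable ψ) (hf : Measurable f) : Measurable (avg ψ δ f) :=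
  (StronglyMeasurable.integral_prod_right' (f := fun p : Eu d × Eu d => ψ p.2 * f (p.1 + δ • p.2))
    ((hψ.comp measurable_snd).mul (hf.comp (by fun_prop))).stronglyMeasurable).measurable

lemma integrable_avg_kernel (hψ : Integrable ψ) (hf : Integrable f)
    (hψm : Measurable ψ) (hfm : Measurable f) :
    Integrable fun p : Eu d × Eu d => ψ p.2 * f (p.1 + δ • p.2) := by
  refine ⟨((hψm.comp measurable_snd).mul (hfm.comp (by fun_prop))).aestronglyMeasurable, ?_⟩
  have hm : Measurable fun p : Eu d × Eu d => ‖ψ p.2 * f (p.1 + δ • p.2)‖ₑ :=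
    ((hψm.comp measurable_snd).mul (hfm.comp (by fun_prop))).enorm
  rw [hasFiniteIntegral_iff_enorm, Measure.volume_eq_prod, lintegral_prod_symm _ hm.aemeasurable]
  have : ∀ z, ∫⁻ x, ‖ψ z * f (x + δ • z)‖ₑ = ‖ψ z‖ₑ * ∫⁻ x, ‖f x‖ₑ := fun z => by
    simp only [enorm_mul]
    rw [lintegral_const_mul' _ _ enorm_ne_top,
      lintegral_add_right_eq_self (fun x => ‖f x‖ₑ) (δ • z)]
  simp only [this]
  rw [lintegral_mul_const' _ _ hf.2.ne]
  exact ENNReal.mul_lt_top hψ.2 hf.2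

lemma integrable_avg (hψ : Integrable ψ) (hf : Integrable f)
    (hψm : Measurable ψ) (hfm : Measurable f) : Integrable (avg ψ δ f) :=
  (integrable_avg_kernel hψ hf hψm hfm).integral_prod_left

lemma abs_avg_le (hψ : Integrable ψ) {B : ℝ} (hB : ∀ x, |f x| ≤ B) (x : Eu d) :
    |avg ψ δ f x| ≤ (∫ z, |ψ z|) * B := by
  rw [← integral_mul_const]
  refine norm_integral_le_of_norm_le (f := fun z => ψ z * f (x + δ • z)) (hψ.abs.mul_const B)
    (Eventually.of_forall fun z => ?_)
  rw [norm_mul]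
  exact mul_le_mul_of_nonneg_left (hB _) (norm_nonneg _)

lemma BddInt.avg (hf : BddInt f) (hψ : Integrable ψ) (hψm : Measurable ψ) :
    BddInt (avg ψ δ f) := by
  obtain ⟨B, hB⟩ := hf.bdd
  exact ⟨measurable_avg hψm hf.meas, integrable_avg hψ hf.int hψm hf.meas,
    _, abs_avg_le hψ hB⟩

lemma enorm_avg_le (x : Eu d) : ‖avg ψ δ f x‖ₑ ≤ ∫⁻ z, ‖ψ z‖ₑ * ‖f (x + δ • z)‖ₑ := by
  simpa only [enorm_mul, avg] using enorm_integral_le_lintegral_enorm fun z => ψ z * f (x + δ • z)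

lemma lintegral_rpow_avg_le {q : ℝ} (hq : 1 ≤ q) (hψ : Integrable ψ) (hψm : Measurable ψ)
    (hfm : Measurable f) :
    ∫⁻ x, ‖avg ψ δ f x‖ₑ ^ q ≤ (∫⁻ z, ‖ψ z‖ₑ) ^ q * ∫⁻ x, ‖f x‖ₑ ^ q := by
  have hfin : IsFiniteMeasure (volume.withDensity fun z => ‖ψ z‖ₑ) :=
    isFiniteMeasure_withDensity hψ.2.ne
  have h := lintegral_rpow_translates_le (volume.withDensity fun z => ‖ψ z‖ₑ)
    (θ := fun z : Eu d => δ • z) (by fun_prop) hq hfm.enorm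
  rw [withDensity_apply _ MeasurableSet.univ, Measure.restrict_univ] at h
  refine le_trans (lintegral_mono fun x => ?_) h
  refine ENNReal.rpow_le_rpow ((enorm_avg_le x).trans_eq ?_) (by linarith)
  have hm : Measurable fun z => ‖f (x + δ • z)‖ₑ := (hfm.comp (by fun_prop)).enorm
  rw [lintegral_withDensity_eq_lintegral_mul _ hψm.enorm hm]
  rfl

lemma integral_sq_eq_lintegral (f : Eu d → ℝ) (hf : Measurable f) :
    ∫ x, f x ^ 2 = (∫⁻ x, ‖f x‖ₑ ^ (2 : ℝ)).toReal := by
  rw [integral_eq_lintegral_of_nonneg_ae (Eventually.of_forall fun x => sq_nonneg _)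
    (hf.pow_const 2).aestronglyMeasurable]
  congr 1
  refine lintegral_congr fun x => ?_
  rw [← sq_abs, ENNReal.ofReal_pow (abs_nonneg _), ← Real.enorm_eq_ofReal_abs,
    ENNReal.rpow_ofNat]

lemma BddInt.lintegral_sq_eq (hf : BddInt f) :
    ∫⁻ x, ‖f x‖ₑ ^ (2 : ℝ) = ENNReal.ofReal (∫ x, f x ^ 2) := by
  rw [ofReal_integral_eq_lintegral_ofReal hf.integrable_sq
    (Eventually.of_forall fun x => sq_nonneg _)]
  refine lintegral_congr fun x => ?_
  rw [← sq_abs, ENNReal.ofReal_pow (abs_nonneg _), ← Real.enorm_eq_ofReal_abs,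
    ENNReal.rpow_ofNat]

lemma integral_avg_sq_le (hψ : Integrable ψ) (hψm : Measurable ψ) (hf : BddInt f)
    {N : ℝ} (hN : ∫ z, |ψ z| ≤ N) :
    ∫ x, avg ψ δ f x ^ 2 ≤ N ^ 2 * ∫ x, f x ^ 2 := by
  have hN0 : 0 ≤ N := le_trans (integral_nonneg fun _ => abs_nonneg _) hN
  rw [integral_sq_eq_lintegral _ (measurable_avg hψm hf.meas)]
  refine ENNReal.toReal_le_of_le_ofReal
    (mul_nonneg (sq_nonneg _) (integral_nonneg fun _ => sq_nonneg _)) ?_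
  refine (lintegral_rpow_avg_le one_le_two hψ hψm hf.meas).trans ?_
  rw [ENNReal.ofReal_mul (sq_nonneg _), ← hf.lintegral_sq_eq, ENNReal.ofReal_pow hN0,
    ENNReal.rpow_ofNat]
  gcongr
  rw [← ofReal_integral_norm_eq_lintegral_enorm hψ]
  exact ENNReal.ofReal_le_ofReal hN

lemma integral_mul_avg (hψ : Integrable ψ) (hψm : Measurable ψ) (hf : BddInt f) (hg : BddInt g) :
    ∫ x, f x * avg ψ δ g x = ∫ x, avg ψ (-δ) f x * g x := by
  obtain ⟨B, hB⟩ := hf.bdd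
  obtain ⟨B', hB'⟩ := hg.bdd
  have h1 : Integrable (Function.uncurry fun x z : Eu d => f x * (ψ z * g (x + δ • z))) :=
    (integrable_avg_kernel hψ hg.int hψm hg.meas).bdd_mul
      (hf.meas.comp measurable_fst).aestronglyMeasurable (Eventually.of_forall fun p => hB p.1)
  have h2 : Integrable (Function.uncurry fun x z : Eu d => g x * (ψ z * f (x + (-δ) • z))) :=
    (integrable_avg_kernel hψ hf.int hψm hf.meas).bdd_mul
      (hg.meas.comp measurable_fst).aestronglyMeasurable (Eventually.of_forall fun p => hB' p.1)
  calc ∫ x, f x * avg ψ δ g x = ∫ x, ∫ z, f x * (ψ z * g (x + δ • z)) := by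
        simp only [QopBound.avg, integral_const_mul]
    _ = ∫ z, ∫ x, f x * (ψ z * g (x + δ • z)) := integral_integral_swap h1
    _ = ∫ z, ∫ x, g x * (ψ z * f (x + (-δ) • z)) := by
        congr 1
        ext z
        rw [← integral_add_right_eq_self _ ((-δ) • z)]
        congr 1
        ext x
        rw [show x + -δ • z + δ • z = x by simp [add_assoc]]
        ring
    _ = ∫ x, ∫ z, g x * (ψ z * f (x + (-δ) • z)) := (integral_integral_swap h2).symm
    _ = ∫ x, avg ψ (-δ) f x * g x := by
        simp only [QopBound.avg, integral_const_mul, mul_comm]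

lemma avg_avg (hψ : Integrable ψ) (hψm : Measurable ψ) (hf : BddInt f) (t : ℝ) (x : Eu d) :
    avg ψ δ (avg ψ (-(δ * t)) f) x = avg (avg ψ t ψ) δ f x := by
  obtain ⟨B, hB⟩ := hf.bdd
  have h0 : Integrable fun p : Eu d × Eu d => ψ p.1 * ψ p.2 := hψ.mul_prod hψ
  have h1 : Integrable (Function.uncurry fun z y : Eu d =>
      f (x + δ • z + (-(δ * t)) • y) * (ψ z * ψ y)) :=
    h0.bdd_mul (hf.meas.comp (by fun_prop)).aestronglyMeasurable
      (Eventually.of_forall fun p => hB _)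
  have h2 : Integrable (Function.uncurry fun z y : Eu d =>
      f (x + δ • z) * (ψ y * ψ (z + t • y))) :=
    (integrable_avg_kernel hψ hψ hψm hψm).bdd_mul
      (hf.meas.comp (by fun_prop)).aestronglyMeasurable (Eventually.of_forall fun p => hB _)
  calc avg ψ δ (avg ψ (-(δ * t)) f) x
      = ∫ z, ∫ y, f (x + δ • z + (-(δ * t)) • y) * (ψ z * ψ y) := by
        simp only [QopBound.avg, ← integral_const_mul]
        congr! 4
        ring
    _ = ∫ y, ∫ z, f (x + δ • z + (-(δ * t)) • y) * (ψ z * ψ y) := integral_integral_swap h1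
    _ = ∫ y, ∫ z, f (x + δ • z) * (ψ y * ψ (z + t • y)) := by
        congr 1
        ext y
        rw [← integral_add_right_eq_self _ (t • y)]
        congr 1
        ext z
        rw [show x + δ • (z + t • y) + -(δ * t) • y = x + δ • z by module]
        ring
    _ = ∫ z, ∫ y, f (x + δ • z) * (ψ y * ψ (z + t • y)) := (integral_integral_swap h2).symm
    _ = avg (avg ψ t ψ) δ f x := by
        simp only [QopBound.avg, integral_const_mul, mul_comm]

end avg

lemma sum_pow_dist_le {x : ℝ} (hx0 : 0 ≤ x) (hx1 : x < 1) (n k : ℕ) :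
    ∑ j ∈ Finset.range n, x ^ ((k - j) + (j - k)) ≤ 2 / (1 - x) := by
  have hs := summable_geometric_of_lt_one hx0 hx1
  have ht := tsum_geometric_of_lt_one hx0 hx1
  have key : ∀ (s : Finset ℕ) (e : ℕ → ℕ), Set.InjOn e s →
      ∑ j ∈ s, x ^ e j ≤ (1 - x)⁻¹ := fun s e he => by
    rw [← ht, ← Finset.sum_image (f := fun i => x ^ i) he]
    exact hs.sum_le_tsum _ fun i _ => pow_nonneg hx0 i
  rw [← Finset.sum_filter_add_sum_filter_not _ (fun j => j ≤ k)]
  have h1 := key ((Finset.range n).filter fun j => j ≤ k) (fun j => (k - j) + (j - k))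
    (fun a ha b hb hab => by simp at ha hb hab; omega)
  have h2 := key ((Finset.range n).filter fun j => ¬ j ≤ k) (fun j => (k - j) + (j - k))
    (fun a ha b hb hab => by simp at ha hb hab; omega)
  calc _ ≤ (1 - x)⁻¹ + (1 - x)⁻¹ := add_le_add h1 h2
    _ = 2 / (1 - x) := by ring

/-- A mean-zero kernel tested against itself at a smaller scale has small `L¹` norm. -/
lemma integral_abs_avg_self_le {d : ℕ} {ψ : Eu d → ℝ} {N C₀ R s t : ℝ} (hψm : Measurable ψ)
    (hψ : Integrable ψ) (h0 : ∫ z, ψ z = 0) (hR : ∀ z, R < ‖z‖ → ψ z = 0)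
    (hN : ∫ z, |ψ z| ≤ N) (hC : 0 ≤ C₀) (hs : 0 ≤ s) (ht : 0 ≤ t)
    (hmod : ∀ τ, ∫ z, |ψ (z + τ) - ψ z| ≤ C₀ * ‖τ‖ ^ s) (hR0 : 0 ≤ R) :
    ∫ z, |avg ψ t ψ z| ≤ N * (C₀ * (t * R) ^ s) := by
  have h_int : Integrable (Function.uncurry fun z y : Eu d => ψ y * (ψ (z + t • y) - ψ z)) := by
    refine ((integrable_avg_kernel (δ := t) hψ hψ hψm hψm).sub (hψ.mul_prod hψ)).congr
      (Eventually.of_forall fun p => ?_)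
    simp only [Pi.sub_apply, Function.uncurry]
    ring
  have heq : ∀ z, avg ψ t ψ z = ∫ y, ψ y * (ψ (z + t • y) - ψ z) := by
    intro z
    have hz : Integrable fun y => ψ y * ψ z := hψ.mul_const _
    simp only [mul_sub, avg]
    by_cases h : Integrable fun y => ψ y * ψ (z + t • y)
    · rw [integral_sub h hz, integral_mul_const, h0, zero_mul, sub_zero]
    · rw [integral_undef h, integral_undef]
      intro h'
      exact h ((h'.add hz).congr (Eventually.of_forall fun y => by simp))
  calc ∫ z, |avg ψ t ψ z| ≤ ∫ z, ∫ y, |ψ y * (ψ (z + t • y) - ψ z)| := by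
        refine integral_mono ?_ ?_ fun z => ?_
        · exact (integrable_avg hψ hψ hψm hψm).abs
        · exact h_int.abs.integral_prod_left
        · rw [heq]
          exact abs_integral_le_integral_abs
    _ = ∫ y, ∫ z, |ψ y * (ψ (z + t • y) - ψ z)| := integral_integral_swap h_int.abs
    _ ≤ ∫ y, |ψ y| * (C₀ * (t * R) ^ s) := by
        refine integral_mono h_int.abs.integral_prod_right (hψ.abs.mul_const _) fun y => ?_
        simp only [abs_mul, integral_const_mul]
        by_cases hy : R < ‖y‖
        · simp [hR y hy]
        · refine mul_le_mul_of_nonneg_left ((hmod _).trans ?_) (abs_nonneg _)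
          rw [norm_smul, Real.norm_of_nonneg ht]
          gcongr
          exact not_lt.1 hy
    _ ≤ N * (C₀ * (t * R) ^ s) := by
        rw [integral_mul_const]
        gcongr

/-- Square function estimate for a mean-zero kernel with an `L¹` Hölder modulus of continuity. -/
theorem sum_integral_avg_sq_le {d : ℕ} {ψ f : Eu d → ℝ} {N C₀ R s δ : ℝ} (hψm : Measurable ψ)
    (hψ : Integrable ψ) (h0 : ∫ z, ψ z = 0) (hR : ∀ z, R < ‖z‖ → ψ z = 0)
    (hN : ∫ z, |ψ z| ≤ N) (hN0 : 0 < N) (hC : 0 < C₀) (hs : 0 < s)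
    (hmod : ∀ τ, ∫ z, |ψ (z + τ) - ψ z| ≤ C₀ * ‖τ‖ ^ s) (hR0 : 0 < R) (hf : BddInt f)
    (n : ℕ) :
    ∑ k ∈ Finset.range n, ∫ x, avg ψ (δ * (1 / 2) ^ k) f x ^ 2 ≤
      N * C₀ * R ^ s * (2 / (1 - (1 / 2) ^ s)) * ∫ x, f x ^ 2 := by
  set D : ℝ := N * C₀ * R ^ s with hD
  have hD0 : 0 < D := by positivity
  set b : ℝ := (1 / 2) ^ s with hb
  have hb0 : 0 < b := by positivity
  have hb1 : b < 1 := Real.rpow_lt_one (by norm_num) (by norm_num) hs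
  have hb2 : 0 < 1 - b := by linarith
  set F : ℕ → Eu d → ℝ := fun k => avg ψ (δ * (1 / 2) ^ k) f with hF
  have hFb : ∀ k, BddInt (F k) := fun k => hf.avg hψ hψm
  set W : ℕ → Eu d → ℝ := fun k => avg ψ (-(δ * (1 / 2) ^ k)) (F k) with hW
  have hWb : ∀ k, BddInt (W k) := fun k => (hFb k).avg hψ hψm
  set X : ℕ → ℝ := fun k => ∫ x, F k x ^ 2 with hX
  have hXW : ∀ k, X k = ∫ x, W k x * f x := fun k => by
    simp only [hX, hW, pow_two]
    exact integral_mul_avg hψ hψm (hFb k) hf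
  have hWle : ∀ k j, k ≤ j → |∫ x, W k x * W j x| ≤ D * b ^ (j - k) * ((X k + X j) / 2) := by
    intro k j hkj
    set t : ℝ := (1 / 2) ^ (j - k) with ht
    have ht0 : 0 < t := by positivity
    have hscale : δ * (1 / 2) ^ j = δ * (1 / 2) ^ k * t := by
      rw [mul_assoc, ht, ← pow_add, Nat.add_sub_cancel' hkj]
    have hts : t ^ s = b ^ (j - k) := by
      rw [ht, hb, ← Real.rpow_natCast, ← Real.rpow_mul (by norm_num), mul_comm,
        Real.rpow_mul (by norm_num), Real.rpow_natCast]
    set η : ℝ := D * b ^ (j - k) with hη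
    have hη0 : 0 < η := by positivity
    have hΘ : ∫ z, |avg ψ t ψ z| ≤ η := by
      refine (integral_abs_avg_self_le hψm hψ h0 hR hN hC.le hs.le ht0.le hmod hR0.le).trans_eq ?_
      rw [Real.mul_rpow ht0.le hR0.le, hts, hη, hD]
      ring
    have hΘi : Integrable (avg ψ t ψ) := integrable_avg hψ hψ hψm hψm
    have hΘm : Measurable (avg ψ t ψ) := measurable_avg hψm hψm
    set V : Eu d → ℝ := avg (avg ψ t ψ) (δ * (1 / 2) ^ k) (F j) with hV
    have hVb : BddInt V := (hFb j).avg hΘi hΘm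
    have hV2 : ∫ x, V x ^ 2 ≤ η ^ 2 * X j := integral_avg_sq_le hΘi hΘm (hFb j) hΘ
    have hWV : ∫ x, W k x * W j x = ∫ x, F k x * V x := by
      have h1 := integral_mul_avg (δ := δ * (1 / 2) ^ k) hψ hψm (hFb k) (hWb j)
      rw [← h1]
      congr 1
      ext x
      rw [hV, ← avg_avg hψ hψm (hFb j), ← hscale]
    rw [hWV]
    have hpt : ∀ x, |F k x * V x| ≤ η / 2 * F k x ^ 2 + (2 * η)⁻¹ * V x ^ 2 := fun x => by
      have h1 : η / 2 * F k x ^ 2 + (2 * η)⁻¹ * V x ^ 2 - |F k x * V x| =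
          (2 * η)⁻¹ * (η * |F k x| - |V x|) ^ 2 := by
        rw [abs_mul, sub_sq, mul_pow, sq_abs, sq_abs]
        field_simp
        ring
      have h2 : 0 ≤ (2 * η)⁻¹ * (η * |F k x| - |V x|) ^ 2 := by positivity
      linarith
    calc |∫ x, F k x * V x| ≤ ∫ x, |F k x * V x| := abs_integral_le_integral_abs
      _ ≤ ∫ x, (η / 2 * F k x ^ 2 + (2 * η)⁻¹ * V x ^ 2) :=
        integral_mono ((hFb k).integrable_mul hVb.int).abs
          (((hFb k).integrable_sq.const_mul _).add (hVb.integrable_sq.const_mul _)) hpt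
      _ = η / 2 * X k + (2 * η)⁻¹ * ∫ x, V x ^ 2 := by
        rw [integral_add ((hFb k).integrable_sq.const_mul _) (hVb.integrable_sq.const_mul _),
          integral_const_mul, integral_const_mul]
      _ ≤ η / 2 * X k + (2 * η)⁻¹ * (η ^ 2 * X j) := by gcongr
      _ = η * ((X k + X j) / 2) := by
        field_simp
  have hW' : ∀ k j, ∫ x, W k x * W j x ≤ D * b ^ ((k - j) + (j - k)) * ((X k + X j) / 2) := by
    intro k j
    refine (le_abs_self _).trans ?_
    rcases le_total k j with h | h
    · simpa [Nat.sub_eq_zero_of_le h] using hWle k j h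
    · simpa [Nat.sub_eq_zero_of_le h, mul_comm (W k _), add_comm (X k)] using hWle j k h
  have hWW : ∫ x, (∑ k ∈ Finset.range n, W k x) ^ 2 ≤
      D * (2 / (1 - b)) * ∑ k ∈ Finset.range n, X k := by
    have hX0 : ∀ k, 0 ≤ X k := fun k => integral_nonneg fun _ => sq_nonneg _
    have hsum := sum_pow_dist_le hb0.le hb1 n
    calc ∫ x, (∑ k ∈ Finset.range n, W k x) ^ 2
        = ∑ k ∈ Finset.range n, ∑ j ∈ Finset.range n, ∫ x, W k x * W j x := by
          simp only [pow_two, Finset.sum_mul_sum]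
          rw [integral_finsetSum _ fun k _ => integrable_finsetSum _ fun j _ =>
            (hWb k).integrable_mul (hWb j).int]
          refine Finset.sum_congr rfl fun k _ => ?_
          rw [integral_finsetSum _ fun j _ => (hWb k).integrable_mul (hWb j).int]
      _ ≤ ∑ k ∈ Finset.range n, ∑ j ∈ Finset.range n,
          D * b ^ ((k - j) + (j - k)) * ((X k + X j) / 2) :=
          Finset.sum_le_sum fun k _ => Finset.sum_le_sum fun j _ => hW' k j
      _ = ∑ k ∈ Finset.range n, ∑ j ∈ Finset.range n, D * b ^ ((k - j) + (j - k)) * (X k / 2) +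
          ∑ k ∈ Finset.range n, ∑ j ∈ Finset.range n, D * b ^ ((k - j) + (j - k)) * (X j / 2) := by
          simp only [← Finset.sum_add_distrib]
          refine Finset.sum_congr rfl fun k _ => Finset.sum_congr rfl fun j _ => ?_
          ring
      _ = ∑ k ∈ Finset.range n, ∑ j ∈ Finset.range n, D * b ^ ((k - j) + (j - k)) * (X k / 2) +
          ∑ k ∈ Finset.range n, ∑ j ∈ Finset.range n, D * b ^ ((k - j) + (j - k)) * (X k / 2) := by
          congr 1
          rw [Finset.sum_comm]
          refine Finset.sum_congr rfl fun k _ => Finset.sum_congr rfl fun j _ => ?_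
          rw [add_comm (j - k)]
      _ = ∑ k ∈ Finset.range n, D * (∑ j ∈ Finset.range n, b ^ ((k - j) + (j - k))) * X k := by
          rw [← Finset.sum_add_distrib]
          refine Finset.sum_congr rfl fun k _ => ?_
          rw [Finset.mul_sum, Finset.sum_mul, ← Finset.sum_add_distrib]
          refine Finset.sum_congr rfl fun j _ => ?_
          ring
      _ ≤ ∑ k ∈ Finset.range n, D * (2 / (1 - b)) * X k := by
          refine Finset.sum_le_sum fun k _ => ?_
          have := hX0 k
          gcongr
          exact hsum k
      _ = D * (2 / (1 - b)) * ∑ k ∈ Finset.range n, X k := by rw [Finset.mul_sum]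
  set Λ := D * (2 / (1 - b)) with hΛ
  have hΛ0 : 0 < Λ := by positivity
  have hWs : Integrable fun x => (∑ k ∈ Finset.range n, W k x) ^ 2 := by
    simp only [pow_two, Finset.sum_mul_sum]
    exact integrable_finsetSum _ fun k _ => integrable_finsetSum _ fun j _ =>
      (hWb k).integrable_mul (hWb j).int
  have hpt : ∀ x, (∑ k ∈ Finset.range n, W k x) * f x ≤
      (2 * Λ)⁻¹ * (∑ k ∈ Finset.range n, W k x) ^ 2 + Λ / 2 * f x ^ 2 := fun x => by
    have h1 : (2 * Λ)⁻¹ * (∑ k ∈ Finset.range n, W k x) ^ 2 + Λ / 2 * f x ^ 2 -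
        (∑ k ∈ Finset.range n, W k x) * f x =
        (2 * Λ)⁻¹ * (∑ k ∈ Finset.range n, W k x - Λ * f x) ^ 2 := by
      field_simp
      ring
    have h2 : 0 ≤ (2 * Λ)⁻¹ * (∑ k ∈ Finset.range n, W k x - Λ * f x) ^ 2 := by positivity
    linarith
  have h_int : Integrable fun x => (∑ k ∈ Finset.range n, W k x) * f x := by
    simp only [Finset.sum_mul]
    exact integrable_finsetSum _ fun k _ => (hWb k).integrable_mul hf.int
  have hfin : ∑ k ∈ Finset.range n, X k ≤
      (2 * Λ)⁻¹ * (Λ * ∑ k ∈ Finset.range n, X k) + Λ / 2 * ∫ x, f x ^ 2 := by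
    calc ∑ k ∈ Finset.range n, X k = ∫ x, (∑ k ∈ Finset.range n, W k x) * f x := by
          simp only [Finset.sum_mul]
          rw [integral_finsetSum _ fun k _ => (hWb k).integrable_mul hf.int]
          exact Finset.sum_congr rfl fun k _ => hXW k
      _ ≤ ∫ x, ((2 * Λ)⁻¹ * (∑ k ∈ Finset.range n, W k x) ^ 2 + Λ / 2 * f x ^ 2) :=
          integral_mono h_int ((hWs.const_mul _).add (hf.integrable_sq.const_mul _)) hpt
      _ = (2 * Λ)⁻¹ * (∫ x, (∑ k ∈ Finset.range n, W k x) ^ 2) + Λ / 2 * ∫ x, f x ^ 2 := by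
          rw [integral_add (hWs.const_mul _) (hf.integrable_sq.const_mul _), integral_const_mul,
            integral_const_mul]
      _ ≤ _ := by gcongr
  have h3 : (2 * Λ)⁻¹ * (Λ * ∑ k ∈ Finset.range n, X k) = (∑ k ∈ Finset.range n, X k) / 2 := by
    field_simp
  linarith

lemma lintegral_rpow_Ioo {a s : ℝ} (ha : 0 < a) (hs : 0 ≤ s) :
    ∫⁻ t in Ioi (0 : ℝ), ENNReal.ofReal (t ^ (a - 1)) * (Iio s).indicator 1 t =
      ENNReal.ofReal (s ^ a / a) := by
  have h1 : ∀ t : ℝ, ENNReal.ofReal (t ^ (a - 1)) * (Iio s).indicator (1 : ℝ → ℝ≥0∞) t =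
      (Iio s).indicator (fun t => ENNReal.ofReal (t ^ (a - 1))) t := fun t => by
    by_cases h : t ∈ Iio s <;> simp [h]
  simp only [h1]
  rw [lintegral_indicator measurableSet_Iio, Measure.restrict_restrict measurableSet_Iio,
    Iio_inter_Ioi, restrict_Ioo_eq_restrict_Ioc]
  have hi : IntervalIntegrable (fun t : ℝ => t ^ (a - 1)) volume 0 s :=
    intervalIntegral.intervalIntegrable_rpow' (by linarith)
  rw [← ofReal_integral_eq_lintegral_ofReal ((intervalIntegrable_iff_integrableOn_Ioc_of_le hs).1 hi)
    ((ae_restrict_iff' measurableSet_Ioc).2 (Eventually.of_forall fun t ht =>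
      Real.rpow_nonneg ht.1.le _)), ← intervalIntegral.integral_of_le hs,
    integral_rpow (Or.inl (by linarith))]
  simp [Real.zero_rpow ha.ne']

lemma lintegral_rpow_Ici {b s : ℝ} (hb : 0 < b) (hs : 0 < s) :
    ∫⁻ t in Ioi (0 : ℝ), ENNReal.ofReal (t ^ (-b - 1)) * (Ici s).indicator 1 t =
      ENNReal.ofReal (s ^ (-b) / b) := by
  have h1 : ∀ t : ℝ, ENNReal.ofReal (t ^ (-b - 1)) * (Ici s).indicator (1 : ℝ → ℝ≥0∞) t =
      (Ici s).indicator (fun t => ENNReal.ofReal (t ^ (-b - 1))) t := fun t => by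
    by_cases h : t ∈ Ici s
    · simp only [indicator_of_mem h, Pi.one_apply, mul_one]
    · simp only [indicator_of_notMem h, mul_zero]
  simp only [h1]
  rw [lintegral_indicator measurableSet_Ici, Measure.restrict_restrict measurableSet_Ici,
    inter_eq_left.2 (Ici_subset_Ioi.2 hs), Measure.restrict_congr_set Ioi_ae_eq_Ici.symm,
    ← ofReal_integral_eq_lintegral_ofReal (integrableOn_Ioi_rpow_of_lt (by linarith) hs)
    ((ae_restrict_iff' measurableSet_Ioi).2 (Eventually.of_forall fun t ht =>
      Real.rpow_nonneg (hs.trans ht).le _)), integral_Ioi_rpow_of_lt (by linarith) hs]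
  congr 1
  rw [sub_add_cancel]
  field_simp

section

variable {d : ℕ} {f : Eu d → ℝ}

/-- Integrating the part of `|f|^p` above the level `t / c` against `t^(a-1)`. -/
lemma lintegral_rpow_above (hf : Measurable f) {a p c : ℝ} (ha : 0 < a) (hp : 0 < p)
    (hc : 0 < c) :
    ∫⁻ t in Ioi (0 : ℝ), ENNReal.ofReal (t ^ (a - 1)) *
        ∫⁻ x, ‖{x | t < c * |f x|}.indicator f x‖ₑ ^ p =
      ENNReal.ofReal (c ^ a / a) * ∫⁻ x, ‖f x‖ₑ ^ (p + a) := by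
  have hpt : ∀ t x, ‖{x | t < c * |f x|}.indicator f x‖ₑ ^ p =
      ‖f x‖ₑ ^ p * (Iio (c * |f x|)).indicator 1 t := fun t x => by
    by_cases h : t < c * |f x|
    · rw [indicator_of_mem (show x ∈ {x | t < c * |f x|} from h),
        indicator_of_mem (show t ∈ Iio (c * |f x|) from h)]
      simp
    · rw [indicator_of_notMem (show x ∉ {x | t < c * |f x|} from h),
        indicator_of_notMem (show t ∉ Iio (c * |f x|) from h)]
      simp [hp]
  have hmeas : Measurable fun y : ℝ × Eu d => ENNReal.ofReal (y.1 ^ (a - 1)) *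
      (‖f y.2‖ₑ ^ p * (Iio (c * |f y.2|)).indicator (1 : ℝ → ℝ≥0∞) y.1) := by
    have hs : MeasurableSet {y : ℝ × Eu d | y.1 < c * |f y.2|} :=
      measurableSet_lt (by fun_prop) (by fun_prop)
    have : (fun y : ℝ × Eu d => (Iio (c * |f y.2|)).indicator (1 : ℝ → ℝ≥0∞) y.1) =
        {y : ℝ × Eu d | y.1 < c * |f y.2|}.indicator 1 := by
      ext y
      simp [indicator_apply]
    exact Measurable.mul (by fun_prop)
      (Measurable.mul (by fun_prop) (this ▸ measurable_one.indicator hs))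
  calc _ = ∫⁻ t in Ioi (0 : ℝ), ∫⁻ x, ENNReal.ofReal (t ^ (a - 1)) *
        (‖f x‖ₑ ^ p * (Iio (c * |f x|)).indicator 1 t) := by
        refine lintegral_congr fun t => ?_
        rw [← lintegral_const_mul' _ _ ENNReal.ofReal_ne_top]
        simp only [hpt]
    _ = ∫⁻ x, ∫⁻ t in Ioi (0 : ℝ), ENNReal.ofReal (t ^ (a - 1)) *
        (‖f x‖ₑ ^ p * (Iio (c * |f x|)).indicator 1 t) :=
        lintegral_lintegral_swap hmeas.aemeasurable
    _ = ∫⁻ x, ENNReal.ofReal (c ^ a / a) * ‖f x‖ₑ ^ (p + a) := by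
        refine lintegral_congr fun x => ?_
        simp only [mul_left_comm _ (‖f x‖ₑ ^ p)]
        rw [lintegral_const_mul' _ _ (by finiteness), lintegral_rpow_Ioo ha (by positivity),
          Real.mul_rpow hc.le (abs_nonneg _), mul_div_right_comm,
          ENNReal.ofReal_mul (by positivity), ← ENNReal.ofReal_rpow_of_nonneg (abs_nonneg _) ha.le,
          ← Real.enorm_eq_ofReal_abs, ENNReal.rpow_add_of_nonneg _ _ hp.le ha.le]
        ring
    _ = _ := lintegral_const_mul' _ _ ENNReal.ofReal_ne_top

/-- Integrating the part of `|f|^p` below the level `t` against `t^(-b-1)`. -/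
lemma lintegral_rpow_below (hf : Measurable f) {b p : ℝ} (hb : 0 < b) (hp : b < p) :
    ∫⁻ t in Ioi (0 : ℝ), ENNReal.ofReal (t ^ (-b - 1)) *
        ∫⁻ x, ‖{x | |f x| ≤ t}.indicator f x‖ₑ ^ p =
      ENNReal.ofReal (1 / b) * ∫⁻ x, ‖f x‖ₑ ^ (p - b) := by
  have hp0 : 0 < p := hb.trans hp
  have hpt : ∀ t x, ‖{x | |f x| ≤ t}.indicator f x‖ₑ ^ p =
      ‖f x‖ₑ ^ p * (Ici |f x|).indicator 1 t := fun t x => by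
    by_cases h : |f x| ≤ t
    · rw [indicator_of_mem (show x ∈ {x | |f x| ≤ t} from h),
        indicator_of_mem (show t ∈ Ici |f x| from h)]
      simp
    · rw [indicator_of_notMem (show x ∉ {x | |f x| ≤ t} from h),
        indicator_of_notMem (show t ∉ Ici |f x| from h)]
      simp [hp0]
  have hmeas : Measurable fun y : ℝ × Eu d => ENNReal.ofReal (y.1 ^ (-b - 1)) *
      (‖f y.2‖ₑ ^ p * (Ici |f y.2|).indicator (1 : ℝ → ℝ≥0∞) y.1) := by
    have hs : MeasurableSet {y : ℝ × Eu d | |f y.2| ≤ y.1} :=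
      measurableSet_le (by fun_prop) (by fun_prop)
    have : (fun y : ℝ × Eu d => (Ici |f y.2|).indicator (1 : ℝ → ℝ≥0∞) y.1) =
        {y : ℝ × Eu d | |f y.2| ≤ y.1}.indicator 1 := by
      ext y
      simp [indicator_apply]
    exact Measurable.mul (by fun_prop)
      (Measurable.mul (by fun_prop) (this ▸ measurable_one.indicator hs))
  calc _ = ∫⁻ t in Ioi (0 : ℝ), ∫⁻ x, ENNReal.ofReal (t ^ (-b - 1)) *
        (‖f x‖ₑ ^ p * (Ici |f x|).indicator 1 t) := by
        refine lintegral_congr fun t => ?_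
        rw [← lintegral_const_mul' _ _ ENNReal.ofReal_ne_top]
        simp only [hpt]
    _ = ∫⁻ x, ∫⁻ t in Ioi (0 : ℝ), ENNReal.ofReal (t ^ (-b - 1)) *
        (‖f x‖ₑ ^ p * (Ici |f x|).indicator 1 t) :=
        lintegral_lintegral_swap hmeas.aemeasurable
    _ = ∫⁻ x, ENNReal.ofReal (1 / b) * ‖f x‖ₑ ^ (p - b) := by
        refine lintegral_congr fun x => ?_
        by_cases h0 : f x = 0
        · simp [h0, hp0, ENNReal.zero_rpow_of_pos (sub_pos.2 hp)]
        have h0' : 0 < |f x| := abs_pos.2 h0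
        simp only [mul_left_comm _ (‖f x‖ₑ ^ p)]
        rw [lintegral_const_mul' _ _ (by finiteness), lintegral_rpow_Ici hb h0', div_eq_mul_one_div,
          ENNReal.ofReal_mul (by positivity), ← ENNReal.ofReal_rpow_of_pos h0',
          ← Real.enorm_eq_ofReal_abs, sub_eq_add_neg p b,
          ENNReal.rpow_add _ _ (by simpa using h0) enorm_ne_top]
        ring
    _ = _ := lintegral_const_mul' _ _ ENNReal.ofReal_ne_top

lemma BddInt.indicator (hf : BddInt f) {s : Set (Eu d)} (hs : MeasurableSet s) :
    BddInt (s.indicator f) := by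
  obtain ⟨B, hB⟩ := hf.bdd
  refine ⟨hf.meas.indicator hs, hf.int.indicator hs, B, fun x => le_trans ?_ (hB x)⟩
  exact norm_indicator_le_norm_self f x

lemma meas_lt_le_lintegral {u : Eu d → ℝ} (hu : Measurable u) {p t : ℝ}
    (hp : 0 < p) (ht : 0 < t) :
    volume {x | t < u x} ≤ ENNReal.ofReal (t ^ (-p)) * ∫⁻ x, ‖u x‖ₑ ^ p := by
  have h := meas_ge_le_lintegral_div (μ := volume) (f := fun x => ‖u x‖ₑ ^ p)
    (hu.enorm.pow_const p).aemeasurable (ε := ENNReal.ofReal (t ^ p))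
    (by simpa using Real.rpow_pos_of_pos ht p) ENNReal.ofReal_ne_top
  rw [Real.rpow_neg ht.le, ENNReal.ofReal_inv_of_pos (by positivity), mul_comm, ← div_eq_mul_inv]
  refine le_trans (measure_mono fun x (hx : t < u x) => ?_) h
  rw [mem_ofPred_eq, ← ENNReal.ofReal_rpow_of_nonneg ht.le hp.le]
  refine ENNReal.rpow_le_rpow ?_ hp.le
  rw [Real.enorm_eq_ofReal_abs]
  exact ENNReal.ofReal_le_ofReal (hx.le.trans (le_abs_self _))

lemma lintegral_enorm_rpow_eq {u : Eu d → ℝ} (hu : Measurable u) (hu0 : ∀ x, 0 ≤ u x) {q : ℝ}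
    (hq : 0 < q) : ∫⁻ x, ‖u x‖ₑ ^ q =
      ENNReal.ofReal q * ∫⁻ t in Ioi (0 : ℝ), volume {x | t < u x} * ENNReal.ofReal (t ^ (q - 1)) := by
  rw [← lintegral_rpow_eq_lintegral_meas_lt_mul volume (Eventually.of_forall hu0) hu.aemeasurable hq]
  refine lintegral_congr fun x => ?_
  rw [← ENNReal.ofReal_rpow_of_nonneg (hu0 x) hq.le, Real.enorm_of_nonneg (hu0 x)]

lemma indicator_above_add_below (f : Eu d → ℝ) {c t : ℝ} (hc : 0 < c) :
    {x | t < c * |f x|}.indicator f + {x | |f x| ≤ c⁻¹ * t}.indicator f = f := by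
  have : {x | |f x| ≤ c⁻¹ * t} = {x | t < c * |f x|}ᶜ := by
    ext x
    simp only [mem_ofPred_eq, mem_compl_iff, not_lt]
    rw [le_inv_mul_iff₀ hc]
  rw [this, indicator_self_add_compl]

/-- Interpolation between `L¹` and `L²` for sublinear operators. -/
theorem lintegral_rpow_le_of_L1_L2 {S : (Eu d → ℝ) → Eu d → ℝ}
    (hSm : ∀ f, BddInt f → Measurable (S f)) (hS0 : ∀ f x, 0 ≤ S f x)
    (hS : ∀ f g, BddInt f → BddInt g → ∀ x, S (f + g) x ≤ S f x + S g x) {N : ℝ≥0}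
    (h1 : ∀ f, BddInt f → ∫⁻ x, ‖S f x‖ₑ ^ (1 : ℝ) ≤ N * ∫⁻ x, ‖f x‖ₑ ^ (1 : ℝ))
    (h2 : ∀ f, BddInt f → ∫⁻ x, ‖S f x‖ₑ ^ (2 : ℝ) ≤ N * ∫⁻ x, ‖f x‖ₑ ^ (2 : ℝ))
    {q : ℝ} (hq1 : 1 < q) (hq2 : q < 2) (hf : BddInt f) :
    ∫⁻ x, ‖S f x‖ₑ ^ q ≤
      ENNReal.ofReal (q * (2 / (q - 1) + 4 / (2 - q))) * N * ∫⁻ x, ‖f x‖ₑ ^ q := by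
  have hq0 : 0 < q := by linarith
  have ha : 0 < q - 1 := by linarith
  have hb : 0 < 2 - q := by linarith
  set I1 : ℝ → ℝ≥0∞ := fun t => ∫⁻ x, ‖{x | t < 1 * |f x|}.indicator f x‖ₑ ^ (1 : ℝ) with hI1
  set I2 : ℝ → ℝ≥0∞ := fun t => ∫⁻ x, ‖{x | |f x| ≤ t}.indicator f x‖ₑ ^ (2 : ℝ) with hI2
  have hlevel : ∀ t ∈ Ioi (0 : ℝ), volume {x | t < S f x} * ENNReal.ofReal (t ^ (q - 1)) ≤
      2 * N * (ENNReal.ofReal (t ^ (q - 1 - 1)) * I1 t) +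
        4 * N * (ENNReal.ofReal (t ^ (-(2 - q) - 1)) * I2 t) := by
    intro t ht
    have ht : 0 < t := ht
    have ht2 : 0 < t / 2 := by positivity
    set f₁ := {x | t < 1 * |f x|}.indicator f with hf₁
    set f₂ := {x | |f x| ≤ t}.indicator f with hf₂
    have hb1 : BddInt f₁ := hf.indicator (measurableSet_lt (by fun_prop)
      ((hf.meas.abs).const_mul 1))
    have hb2 : BddInt f₂ := hf.indicator (measurableSet_le hf.meas.abs (by fun_prop))
    have hsum : f₁ + f₂ = f := by
      simpa [hf₁, hf₂] using indicator_above_add_below f (c := 1) (t := t) one_pos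
    have hsub : {x | t < S f x} ⊆ {x | t / 2 < S f₁ x} ∪ {x | t / 2 < S f₂ x} := by
      intro x hx
      by_contra hcon
      simp only [mem_union, mem_ofPred_eq, not_or, not_lt] at hcon hx
      have := hS f₁ f₂ hb1 hb2 x
      rw [hsum] at this
      linarith
    have hA : ENNReal.ofReal ((t / 2) ^ (-(1 : ℝ))) * ENNReal.ofReal (t ^ (q - 1)) =
        2 * ENNReal.ofReal (t ^ (q - 1 - 1)) := by
      rw [← ENNReal.ofReal_mul (by positivity), ← ENNReal.ofReal_ofNat 2,
        ← ENNReal.ofReal_mul (by positivity), show q - 1 - 1 = -1 + (q - 1) by ring,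
        Real.rpow_add ht, Real.rpow_neg_one, Real.rpow_neg_one]
      congr 1
      field_simp
    have hB : ENNReal.ofReal ((t / 2) ^ (-(2 : ℝ))) * ENNReal.ofReal (t ^ (q - 1)) =
        4 * ENNReal.ofReal (t ^ (-(2 - q) - 1)) := by
      rw [← ENNReal.ofReal_mul (by positivity), ← ENNReal.ofReal_ofNat 4,
        ← ENNReal.ofReal_mul (by positivity), Real.div_rpow ht.le (by norm_num),
        show -(2 - q) - 1 = -2 + (q - 1) by ring, Real.rpow_add ht,
        show (2 : ℝ) ^ (-2 : ℝ) = 1 / 4 by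
          rw [Real.rpow_neg (by norm_num)]; norm_num]
      congr 1
      field_simp
    calc volume {x | t < S f x} * ENNReal.ofReal (t ^ (q - 1))
        ≤ (volume {x | t / 2 < S f₁ x} + volume {x | t / 2 < S f₂ x}) *
          ENNReal.ofReal (t ^ (q - 1)) := by
          gcongr
          exact (measure_mono hsub).trans (measure_union_le _ _)
      _ ≤ (ENNReal.ofReal ((t / 2) ^ (-(1 : ℝ))) * (N * I1 t) +
          ENNReal.ofReal ((t / 2) ^ (-(2 : ℝ))) * (N * I2 t)) * ENNReal.ofReal (t ^ (q - 1)) := by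
          gcongr
          · exact (meas_lt_le_lintegral (hSm _ hb1) one_pos ht2).trans (by gcongr; exact h1 _ hb1)
          · exact (meas_lt_le_lintegral (hSm _ hb2) two_pos ht2).trans (by gcongr; exact h2 _ hb2)
      _ = ENNReal.ofReal ((t / 2) ^ (-(1 : ℝ))) * ENNReal.ofReal (t ^ (q - 1)) * (N * I1 t) +
          ENNReal.ofReal ((t / 2) ^ (-(2 : ℝ))) * ENNReal.ofReal (t ^ (q - 1)) * (N * I2 t) := by
          ring
      _ = _ := by
          rw [hA, hB]
          ring
  have hm1 : Measurable I1 := by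
    refine Antitone.measurable fun s t hst => lintegral_mono fun x => ?_
    refine ENNReal.rpow_le_rpow ?_ zero_le_one
    rw [enorm_indicator_eq_indicator_enorm, enorm_indicator_eq_indicator_enorm]
    exact indicator_le_indicator_of_subset (fun x (hx : t < _) => lt_of_le_of_lt hst hx)
      (fun _ => zero_le) x
  rw [lintegral_enorm_rpow_eq (hSm f hf) (hS0 f) hq0]
  have hA := lintegral_rpow_above hf.meas ha one_pos one_pos
  have hB := lintegral_rpow_below hf.meas hb (show 2 - q < 2 by linarith)
  rw [add_sub_cancel] at hA
  rw [sub_sub_cancel] at hB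
  calc _ ≤ ENNReal.ofReal q * ∫⁻ t in Ioi (0 : ℝ),
          (2 * N * (ENNReal.ofReal (t ^ (q - 1 - 1)) * I1 t) +
            4 * N * (ENNReal.ofReal (t ^ (-(2 - q) - 1)) * I2 t)) := by
        exact mul_le_mul_right (setLIntegral_mono' measurableSet_Ioi hlevel) _
    _ = ENNReal.ofReal q * (2 * N * (ENNReal.ofReal (1 ^ (q - 1) / (q - 1)) * ∫⁻ x, ‖f x‖ₑ ^ q) +
          4 * N * (ENNReal.ofReal (1 / (2 - q)) * ∫⁻ x, ‖f x‖ₑ ^ q)) := by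
        rw [lintegral_add_left (by fun_prop), lintegral_const_mul' _ _ (by finiteness),
          lintegral_const_mul' _ _ (by finiteness), hA, hB]
    _ = _ := by
        rw [Real.one_rpow, ENNReal.ofReal_mul hq0.le, ENNReal.ofReal_add (by positivity)
          (by positivity), div_eq_mul_one_div 2, div_eq_mul_one_div 4,
          ENNReal.ofReal_mul zero_le_two, ENNReal.ofReal_mul zero_le_four, ENNReal.ofReal_ofNat,
          ENNReal.ofReal_ofNat]
        ring

/-- Interpolation between `L²` and `L^∞` for sublinear operators. -/
theorem lintegral_rpow_le_of_L2_bdd {S : (Eu d → ℝ) → Eu d → ℝ}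
    (hSm : ∀ f, BddInt f → Measurable (S f)) (hS0 : ∀ f x, 0 ≤ S f x)
    (hS : ∀ f g, BddInt f → BddInt g → ∀ x, S (f + g) x ≤ S f x + S g x) {N : ℝ≥0} {c : ℝ}
    (hc : 0 < c)
    (h2 : ∀ f, BddInt f → ∫⁻ x, ‖S f x‖ₑ ^ (2 : ℝ) ≤ N * ∫⁻ x, ‖f x‖ₑ ^ (2 : ℝ))
    (hbd : ∀ f B, BddInt f → (∀ x, |f x| ≤ B) → ∀ x, S f x ≤ c * B)
    {q : ℝ} (hq : 2 < q) (hf : BddInt f) :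
    ∫⁻ x, ‖S f x‖ₑ ^ q ≤
      ENNReal.ofReal (q * 4 * ((2 * c) ^ (q - 2) / (q - 2))) * N * ∫⁻ x, ‖f x‖ₑ ^ q := by
  have hq0 : 0 < q := by linarith
  have ha : 0 < q - 2 := by linarith
  have hc2 : 0 < 2 * c := by positivity
  set I : ℝ → ℝ≥0∞ := fun t => ∫⁻ x, ‖{x | t < 2 * c * |f x|}.indicator f x‖ₑ ^ (2 : ℝ) with hI
  have hlevel : ∀ t ∈ Ioi (0 : ℝ), volume {x | t < S f x} * ENNReal.ofReal (t ^ (q - 1)) ≤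
      4 * N * (ENNReal.ofReal (t ^ (q - 2 - 1)) * I t) := by
    intro t ht
    have ht : 0 < t := ht
    have ht2 : 0 < t / 2 := by positivity
    set f₁ := {x | t < 2 * c * |f x|}.indicator f with hf₁
    set f₂ := {x | |f x| ≤ (2 * c)⁻¹ * t}.indicator f with hf₂
    have hb1 : BddInt f₁ := hf.indicator (measurableSet_lt (by fun_prop)
      ((hf.meas.abs).const_mul _))
    have hb2 : BddInt f₂ := hf.indicator (measurableSet_le hf.meas.abs (by fun_prop))
    have hsum : f₁ + f₂ = f := indicator_above_add_below f hc2
    have hf₂b : ∀ x, |f₂ x| ≤ (2 * c)⁻¹ * t := fun x => by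
      by_cases hx : |f x| ≤ (2 * c)⁻¹ * t
      · rwa [hf₂, indicator_of_mem (show x ∈ {x | |f x| ≤ (2 * c)⁻¹ * t} from hx)]
      · rw [hf₂, indicator_of_notMem (show x ∉ {x | |f x| ≤ (2 * c)⁻¹ * t} from hx), abs_zero]
        positivity
    have hsub : {x | t < S f x} ⊆ {x | t / 2 < S f₁ x} := by
      intro x hx
      have h1 := hS f₁ f₂ hb1 hb2 x
      have h3 := hbd f₂ _ hb2 hf₂b x
      have h4 : c * ((2 * c)⁻¹ * t) = t / 2 := by field_simp
      rw [hsum] at h1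
      simp only [mem_ofPred_eq] at hx ⊢
      linarith
    have hB : ENNReal.ofReal ((t / 2) ^ (-(2 : ℝ))) * ENNReal.ofReal (t ^ (q - 1)) =
        4 * ENNReal.ofReal (t ^ (q - 2 - 1)) := by
      rw [← ENNReal.ofReal_mul (by positivity), ← ENNReal.ofReal_ofNat 4,
        ← ENNReal.ofReal_mul (by positivity), Real.div_rpow ht.le (by norm_num),
        show q - 2 - 1 = -2 + (q - 1) by ring, Real.rpow_add ht,
        show (2 : ℝ) ^ (-2 : ℝ) = 1 / 4 by
          rw [Real.rpow_neg (by norm_num)]; norm_num]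
      congr 1
      field_simp
    calc volume {x | t < S f x} * ENNReal.ofReal (t ^ (q - 1))
        ≤ ENNReal.ofReal ((t / 2) ^ (-(2 : ℝ))) * (N * I t) * ENNReal.ofReal (t ^ (q - 1)) := by
          gcongr
          exact (measure_mono hsub).trans ((meas_lt_le_lintegral (hSm _ hb1) two_pos ht2).trans
            (by gcongr; exact h2 _ hb1))
      _ = ENNReal.ofReal ((t / 2) ^ (-(2 : ℝ))) * ENNReal.ofReal (t ^ (q - 1)) * (N * I t) := by
          ring
      _ = _ := by
          rw [hB]
          ring
  rw [lintegral_enorm_rpow_eq (hSm f hf) (hS0 f) hq0]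
  have hA := lintegral_rpow_above hf.meas ha two_pos hc2
  rw [add_sub_cancel] at hA
  calc _ ≤ ENNReal.ofReal q * ∫⁻ t in Ioi (0 : ℝ),
          4 * N * (ENNReal.ofReal (t ^ (q - 2 - 1)) * I t) := by
        exact mul_le_mul_right (setLIntegral_mono' measurableSet_Ioi hlevel) _
    _ = ENNReal.ofReal q *
          (4 * N * (ENNReal.ofReal ((2 * c) ^ (q - 2) / (q - 2)) * ∫⁻ x, ‖f x‖ₑ ^ q)) := by
        rw [lintegral_const_mul' _ _ (by finiteness), hA]
    _ = _ := by
        rw [ENNReal.ofReal_mul (by positivity), ENNReal.ofReal_mul hq0.le, ENNReal.ofReal_ofNat]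
        ring

end

/-- Mean-zero kernels supported in a ball with a quantitative `L¹` modulus of continuity. -/
structure IsOscKernel {d : ℕ} (ψ : Eu d → ℝ) (N C₀ R s : ℝ) : Prop where
  meas : Measurable ψ
  int : Integrable ψ
  integral_eq_zero : ∫ z, ψ z = 0
  supp : ∀ z, R < ‖z‖ → ψ z = 0
  norm_le : ∫ z, |ψ z| ≤ N
  modulus : ∀ τ, ∫ z, |ψ (z + τ) - ψ z| ≤ C₀ * ‖τ‖ ^ s

lemma avg_add {d : ℕ} {ψ f g : Eu d → ℝ} {δ : ℝ} (hψ : Integrable ψ) (hf : BddInt f)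
    (hg : BddInt g) (x : Eu d) : avg ψ δ (f + g) x = avg ψ δ f x + avg ψ δ g x := by
  have h : ∀ f : Eu d → ℝ, BddInt f → Integrable fun z => ψ z * f (x + δ • z) := fun f hf => by
    obtain ⟨B, hB⟩ := hf.bdd
    exact hψ.mul_bdd (hf.meas.comp (by fun_prop)).aestronglyMeasurable
      (Eventually.of_forall fun z => hB _)
  simp only [avg, Pi.add_apply, mul_add]
  exact integral_add (h f hf) (h g hg)

lemma BddInt.sum_abs {d : ℕ} {ι : Type*} (s : Finset ι) {f : ι → Eu d → ℝ}
    (hf : ∀ i, BddInt (f i)) : BddInt fun x => ∑ i ∈ s, |f i x| := by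
  choose B hB using fun i => (hf i).bdd
  refine ⟨Finset.measurable_sum _ fun i _ => (hf i).meas.abs,
    integrable_finsetSum _ fun i _ => (hf i).int.abs, ∑ i ∈ s, B i, fun x => ?_⟩
  rw [abs_of_nonneg (Finset.sum_nonneg fun i _ => abs_nonneg _)]
  exact Finset.sum_le_sum fun i _ => hB i x

/-- `L^q` bound for the sum over `n` dyadic scales of the averages against an oscillating
kernel. -/
theorem exists_lintegral_sum_avg_rpow_le (d : ℕ) {N C₀ R s q : ℝ} (hN : 0 < N) (hC : 0 < C₀)
    (hR : 0 < R) (hs : 0 < s) (hq : 1 < q) :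
    ∃ C : ℝ≥0, ∀ (ψ f : Eu d → ℝ) (δ : ℝ) (n : ℕ), IsOscKernel ψ N C₀ R s → BddInt f → 1 ≤ n →
      ∫⁻ x, ‖∑ k ∈ Finset.range n, |avg ψ (δ * (1 / 2) ^ k) f x|‖ₑ ^ q ≤
        C * (n : ℝ≥0∞) ^ max 1 (q - 1) * ∫⁻ x, ‖f x‖ₑ ^ q := by
  set D : ℝ := N * C₀ * R ^ s * (2 / (1 - (1 / 2) ^ s)) with hD
  have hb1 : ((1 : ℝ) / 2) ^ s < 1 := Real.rpow_lt_one (by norm_num) (by norm_num) hs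
  have hD0 : 0 < D := by
    have : 0 < 1 - ((1 : ℝ) / 2) ^ s := by linarith
    positivity
  set M : ℝ≥0 := Real.toNNReal (N + D) with hM
  have hMr : (M : ℝ≥0∞) = ENNReal.ofReal (N + D) := rfl
  set S : (Eu d → ℝ) → ℝ → ℕ → (Eu d → ℝ) → Eu d → ℝ := fun ψ δ n f x =>
    ∑ k ∈ Finset.range n, |avg ψ (δ * (1 / 2) ^ k) f x| with hS
  have hS0 : ∀ ψ δ n f x, 0 ≤ S ψ δ n f x := fun ψ δ n f x =>
    Finset.sum_nonneg fun _ _ => abs_nonneg _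
  have hSb : ∀ ψ δ n f, IsOscKernel ψ N C₀ R s → BddInt f → BddInt (S ψ δ n f) :=
    fun ψ δ n f hψ hf => BddInt.sum_abs _ fun k => hf.avg hψ.int hψ.meas
  have hSadd : ∀ ψ δ n, IsOscKernel ψ N C₀ R s → ∀ f g, BddInt f → BddInt g → ∀ x,
      S ψ δ n (f + g) x ≤ S ψ δ n f x + S ψ δ n g x := by
    intro ψ δ n hψ f g hf hg x
    simp only [hS, ← Finset.sum_add_distrib]
    refine Finset.sum_le_sum fun k _ => ?_
    rw [avg_add hψ.int hf hg]
    exact abs_add_le _ _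
  have hS1 : ∀ ψ δ n, IsOscKernel ψ N C₀ R s → ∀ f, BddInt f →
      ∫⁻ x, ‖S ψ δ n f x‖ₑ ^ (1 : ℝ) ≤ ((n * M : ℝ≥0) : ℝ≥0∞) * ∫⁻ x, ‖f x‖ₑ ^ (1 : ℝ) := by
    intro ψ δ n hψ f hf
    simp only [ENNReal.rpow_one]
    calc ∫⁻ x, ‖S ψ δ n f x‖ₑ
        ≤ ∫⁻ x, ∑ k ∈ Finset.range n, ‖avg ψ (δ * (1 / 2) ^ k) f x‖ₑ := by
          refine lintegral_mono fun x => (enorm_sum_le _ _).trans_eq ?_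
          simp
      _ = ∑ k ∈ Finset.range n, ∫⁻ x, ‖avg ψ (δ * (1 / 2) ^ k) f x‖ₑ :=
          lintegral_finsetSum _ fun k _ => (measurable_avg hψ.meas hf.meas).enorm
      _ ≤ ∑ k ∈ Finset.range n, M * ∫⁻ x, ‖f x‖ₑ := by
          refine Finset.sum_le_sum fun k _ => ?_
          have h := lintegral_rpow_avg_le (δ := δ * (1 / 2) ^ k) le_rfl hψ.int hψ.meas hf.meas
          simp only [ENNReal.rpow_one] at h
          refine h.trans ?_
          gcongr
          rw [← ofReal_integral_norm_eq_lintegral_enorm hψ.int, hMr]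
          exact ENNReal.ofReal_le_ofReal (hψ.norm_le.trans (by linarith))
      _ = _ := by
          simp [mul_assoc]
  have hS2 : ∀ ψ δ n, IsOscKernel ψ N C₀ R s → ∀ f, BddInt f →
      ∫⁻ x, ‖S ψ δ n f x‖ₑ ^ (2 : ℝ) ≤ ((n * M : ℝ≥0) : ℝ≥0∞) * ∫⁻ x, ‖f x‖ₑ ^ (2 : ℝ) := by
    intro ψ δ n hψ f hf
    rw [(hSb ψ δ n f hψ hf).lintegral_sq_eq, hf.lintegral_sq_eq, ENNReal.coe_mul, hMr,
      ENNReal.coe_natCast, ← ENNReal.ofReal_natCast, ← ENNReal.ofReal_mul (by positivity),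
      ← ENNReal.ofReal_mul (by positivity)]
    refine ENNReal.ofReal_le_ofReal ?_
    have hk : ∀ k, BddInt (avg ψ (δ * (1 / 2) ^ k) f) := fun k => hf.avg hψ.int hψ.meas
    have hf2 : 0 ≤ ∫ x, f x ^ 2 := integral_nonneg fun _ => sq_nonneg _
    calc ∫ x, S ψ δ n f x ^ 2
        ≤ ∫ x, (n : ℝ) * ∑ k ∈ Finset.range n, avg ψ (δ * (1 / 2) ^ k) f x ^ 2 := by
          refine integral_mono (hSb ψ δ n f hψ hf).integrable_sq
            ((integrable_finsetSum _ fun k _ => (hk k).integrable_sq).const_mul _) fun x => ?_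
          have := sq_sum_le_card_mul_sum_sq (s := Finset.range n)
            (f := fun k => |avg ψ (δ * (1 / 2) ^ k) f x|)
          simpa [hS] using this
      _ = n * ∑ k ∈ Finset.range n, ∫ x, avg ψ (δ * (1 / 2) ^ k) f x ^ 2 := by
          rw [integral_const_mul, integral_finsetSum _ fun k _ => (hk k).integrable_sq]
      _ ≤ n * (D * ∫ x, f x ^ 2) := by
          gcongr
          exact sum_integral_avg_sq_le hψ.meas hψ.int hψ.integral_eq_zero hψ.supp hψ.norm_le hN hC
            hs hψ.modulus hR hf n
      _ ≤ n * (N + D) * ∫ x, f x ^ 2 := by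
          rw [mul_assoc (n : ℝ)]
          gcongr
          linarith
  have hSi : ∀ ψ δ n, IsOscKernel ψ N C₀ R s → ∀ f B, BddInt f → (∀ x, |f x| ≤ B) → ∀ x,
      S ψ δ n f x ≤ (n * N) * B := by
    intro ψ δ n hψ f B hf hB x
    have hB0 : 0 ≤ B := (abs_nonneg _).trans (hB 0)
    calc S ψ δ n f x ≤ ∑ k ∈ Finset.range n, N * B := Finset.sum_le_sum fun k _ =>
          (abs_avg_le hψ.int hB x).trans (mul_le_mul_of_nonneg_right hψ.norm_le hB0)
      _ = (n * N) * B := by simp [mul_assoc]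
  rcases lt_trichotomy q 2 with h | h | h
  · refine ⟨Real.toNNReal (q * (2 / (q - 1) + 4 / (2 - q))) * M, fun ψ f δ n hψ hf hn => ?_⟩
    refine (lintegral_rpow_le_of_L1_L2 (S := S ψ δ n) (fun f hf => (hSb ψ δ n f hψ hf).meas)
      (hS0 ψ δ n) (hSadd ψ δ n hψ) (hS1 ψ δ n hψ) (hS2 ψ δ n hψ) hq h hf).trans_eq ?_
    rw [max_eq_left (by linarith), ENNReal.rpow_one]
    push_cast
    rw [ENNReal.ofReal]
    ring
  · subst h
    refine ⟨M, fun ψ f δ n hψ hf hn => (hS2 ψ δ n hψ f hf).trans_eq ?_⟩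
    rw [max_eq_left (by linarith), ENNReal.rpow_one]
    push_cast
    ring
  · refine ⟨Real.toNNReal (q * 4 * ((2 * N) ^ (q - 2) / (q - 2))) * M,
      fun ψ f δ n hψ hf hn => ?_⟩
    have hn0 : (0 : ℝ) < n := by exact_mod_cast hn
    refine (lintegral_rpow_le_of_L2_bdd (S := S ψ δ n) (fun f hf => (hSb ψ δ n f hψ hf).meas)
      (hS0 ψ δ n) (hSadd ψ δ n hψ) (mul_pos hn0 hN) (hS2 ψ δ n hψ) (hSi ψ δ n hψ) h hf).trans_eq ?_
    have hpow : (n : ℝ≥0∞) ^ max 1 (q - 1) = ENNReal.ofReal ((n : ℝ) ^ (q - 2)) * n := by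
      rw [max_eq_right (by linarith), ← ENNReal.ofReal_rpow_of_nonneg hn0.le (by linarith),
        ENNReal.ofReal_natCast]
      conv_rhs => rw [← ENNReal.rpow_one (n : ℝ≥0∞), ← ENNReal.rpow_mul, one_mul,
        ← ENNReal.rpow_add_of_nonneg _ _ (by linarith) zero_le_one]
      congr 1
      ring
    have hconst : q * 4 * ((2 * (n * N)) ^ (q - 2) / (q - 2)) =
        q * 4 * ((2 * N) ^ (q - 2) / (q - 2)) * (n : ℝ) ^ (q - 2) := by
      rw [show 2 * ((n : ℝ) * N) = 2 * N * n by ring, Real.mul_rpow (by positivity) hn0.le]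
      ring
    have hq2 : 0 < q - 2 := by linarith
    rw [hconst, hpow, ENNReal.ofReal_mul (by positivity)]
    push_cast
    rw [ENNReal.ofReal]
    ring

/-- Functions that are bounded and Lipschitz with the same constant. -/
structure IsBL {X : Type*} [SeminormedAddCommGroup X] (f : X → ℝ) (M : ℝ) : Prop where
  bound : ∀ x, |f x| ≤ M
  lip : ∀ x y, |f x - f y| ≤ M * ‖x - y‖

namespace IsBL

variable {X : Type*} [SeminormedAddCommGroup X] {f g : X → ℝ} {M M' : ℝ}

lemma nonneg (hf : IsBL f M) : 0 ≤ M := (abs_nonneg _).trans (hf.bound 0)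

lemma mono (hf : IsBL f M) (h : M ≤ M') : IsBL f M' :=
  ⟨fun x => (hf.bound x).trans h, fun x y => (hf.lip x y).trans (by gcongr)⟩

lemma const (c : ℝ) : IsBL (fun _ : X => c) |c| :=
  ⟨fun _ => le_rfl, fun x y => by simpa using by positivity⟩

lemma sub (hf : IsBL f M) (hg : IsBL g M') : IsBL (fun x => f x - g x) (M + M') := by
  refine ⟨fun x => (abs_sub _ _).trans (add_le_add (hf.bound x) (hg.bound x)), fun x y => ?_⟩
  calc |f x - g x - (f y - g y)| = |(f x - f y) - (g x - g y)| := by ring_nf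
    _ ≤ |f x - f y| + |g x - g y| := abs_sub _ _
    _ ≤ (M + M') * ‖x - y‖ := by linarith [hf.lip x y, hg.lip x y]

lemma mul (hf : IsBL f M) (hg : IsBL g M') : IsBL (fun x => f x * g x) (2 * M * M') := by
  have hM := hf.nonneg
  have hM' := hg.nonneg
  constructor
  · intro x
    rw [abs_mul]
    calc |f x| * |g x| ≤ M * M' := mul_le_mul (hf.bound x) (hg.bound x) (abs_nonneg _) hM
      _ ≤ 2 * M * M' := by nlinarith [mul_nonneg hM hM']
  · intro x y
    calc |f x * g x - f y * g y| = |f x * (g x - g y) + g y * (f x - f y)| := by ring_nf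
      _ ≤ |f x| * |g x - g y| + |g y| * |f x - f y| := by
        rw [← abs_mul, ← abs_mul]
        exact abs_add_le _ _
      _ ≤ M * (M' * ‖x - y‖) + M' * (M * ‖x - y‖) :=
        add_le_add (mul_le_mul (hf.bound x) (hg.lip x y) (abs_nonneg _) hM)
          (mul_le_mul (hg.bound y) (hf.lip x y) (abs_nonneg _) hM')
      _ = 2 * M * M' * ‖x - y‖ := by ring

lemma pow (hf : IsBL f M) (n : ℕ) : IsBL (fun x => f x ^ n) ((2 * M) ^ n) := by
  induction n with
  | zero => simpa using const (X := X) 1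
  | succ n ih => simpa only [pow_succ, mul_assoc, mul_left_comm] using ih.mul hf

lemma comp_norm {u : ℝ → ℝ} (hu : IsBL u M) : IsBL (fun x : X => u ‖x‖) M := by
  refine ⟨fun x => hu.bound _, fun x y => (hu.lip _ _).trans ?_⟩
  have := hu.nonneg
  gcongr
  exact abs_norm_sub_norm_le x y

lemma continuous (hf : IsBL f M) : Continuous f := by
  refine LipschitzWith.continuous (K := ⟨M, hf.nonneg⟩) (LipschitzWith.of_dist_le_mul fun x y => ?_)
  rw [Real.dist_eq, dist_eq_norm]
  exact hf.lip x y

/-- The function `r ↦ min 1 ((r - a)₊ / ε)`. -/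
lemma ramp (a : ℝ) {ε : ℝ} (hε : 0 < ε) (hε1 : ε ≤ 1) :
    IsBL (fun r : ℝ => min 1 (max (r - a) 0 / ε)) ε⁻¹ := by
  have h1 : 1 ≤ ε⁻¹ := (one_le_inv₀ hε).2 hε1
  constructor
  · intro r
    rw [abs_of_nonneg (by positivity)]
    exact (min_le_left _ _).trans h1
  · intro r s
    calc _ ≤ |max (r - a) 0 / ε - max (s - a) 0 / ε| := by
          simpa using abs_min_sub_min_le_max 1 (max (r - a) 0 / ε) 1 (max (s - a) 0 / ε)
      _ = ε⁻¹ * |max (r - a) 0 - max (s - a) 0| := by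
          rw [← sub_div, abs_div, abs_of_pos hε]
          ring
      _ ≤ ε⁻¹ * ‖r - s‖ := by
          gcongr
          simpa using abs_max_sub_max_le_max (r - a) 0 (s - a) 0

lemma comp_neg {u : ℝ → ℝ} (hu : IsBL u M) : IsBL (fun r => u (-r)) M := by
  refine ⟨fun r => hu.bound _, fun r s => (hu.lip _ _).trans_eq ?_⟩
  rw [← norm_neg (r - s)]
  ring_nf

lemma inv_max {ε : ℝ} (hε : 0 < ε) (hε1 : ε ≤ 1) :
    IsBL (fun r : ℝ => (max r ε)⁻¹) (ε⁻¹ ^ 2) := by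
  have h1 : 1 ≤ ε⁻¹ := (one_le_inv₀ hε).2 hε1
  have hpos : ∀ r, 0 < max r ε := fun r => lt_max_of_lt_right hε
  have hinv : ∀ r, (max r ε)⁻¹ ≤ ε⁻¹ := fun r => by
    gcongr
    exact le_max_right _ _
  constructor
  · intro r
    rw [abs_of_pos (inv_pos.2 (hpos r))]
    exact (hinv r).trans (by nlinarith)
  · intro r s
    have h0 : (max r ε)⁻¹ - (max s ε)⁻¹ = (max r ε)⁻¹ * (max s ε)⁻¹ * (max s ε - max r ε) := by
      have := (hpos r).ne'
      have := (hpos s).ne'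
      field_simp
    rw [h0, abs_mul, abs_of_pos (mul_pos (inv_pos.2 (hpos r)) (inv_pos.2 (hpos s))), pow_two]
    gcongr
    · exact le_max_right _ _
    · exact le_max_right _ _
    · rw [abs_sub_comm]
      simpa using abs_max_sub_max_le_max r ε s ε

end IsBL

/-- Kernels supported in a ball with a quantitative `L¹` modulus of continuity. -/
structure IsModKernel {d : ℕ} (ψ : Eu d → ℝ) (N C₀ R s : ℝ) : Prop where
  meas : Measurable ψ
  int : Integrable ψ
  supp : ∀ z, R < ‖z‖ → ψ z = 0
  norm_le : ∫ z, |ψ z| ≤ N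
  modulus : ∀ τ, ∫ z, |ψ (z + τ) - ψ z| ≤ C₀ * ‖τ‖ ^ s

lemma IsModKernel.isOscKernel {d : ℕ} {ψ : Eu d → ℝ} {N C₀ R s : ℝ}
    (h : IsModKernel ψ N C₀ R s) (h0 : ∫ z, ψ z = 0) : IsOscKernel ψ N C₀ R s :=
  ⟨h.meas, h.int, h0, h.supp, h.norm_le, h.modulus⟩

lemma IsModKernel.sub_const_mul {d : ℕ} {ψ φ : Eu d → ℝ} {N N' C₀ C₀' R s m m₀ : ℝ}
    (h : IsModKernel ψ N C₀ R s) (h' : IsModKernel φ N' C₀' R s) (hm : |m| ≤ m₀) :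
    IsModKernel (fun z => ψ z - m * φ z) (N + m₀ * N') (C₀ + m₀ * C₀') R s := by
  have hm0 := (abs_nonneg m).trans hm
  have key : ∀ a b : ℝ, |a - m * b| ≤ |a| + m₀ * |b| := fun a b => by
    refine (abs_sub _ _).trans ?_
    rw [abs_mul]
    gcongr
  have h_int : ∀ {ψ : Eu d → ℝ}, Integrable ψ → ∀ τ, Integrable fun z => ψ (z + τ) - ψ z :=
    fun h τ => (h.comp_add_right τ).sub h
  refine ⟨h.meas.sub (h'.meas.const_mul m), h.int.sub (h'.int.const_mul m), fun z hz => ?_, ?_,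
    fun τ => ?_⟩
  · simp [h.supp z hz, h'.supp z hz]
  · calc ∫ z, |ψ z - m * φ z| ≤ ∫ z, (|ψ z| + m₀ * |φ z|) :=
        integral_mono (h.int.sub (h'.int.const_mul m)).abs
          (h.int.abs.add (h'.int.abs.const_mul _)) fun z => key _ _
      _ = (∫ z, |ψ z|) + m₀ * ∫ z, |φ z| := by
        rw [integral_add h.int.abs (h'.int.abs.const_mul _), integral_const_mul]
      _ ≤ _ := by
        gcongr
        · exact h.norm_le
        · exact h'.norm_le
  · calc ∫ z, |ψ (z + τ) - m * φ (z + τ) - (ψ z - m * φ z)|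
        ≤ ∫ z, (|ψ (z + τ) - ψ z| + m₀ * |φ (z + τ) - φ z|) := by
          refine integral_mono (h_int (h.int.sub (h'.int.const_mul m)) τ).abs
            ((h_int h.int τ).abs.add ((h_int h'.int τ).abs.const_mul _)) fun z => ?_
          refine le_trans (le_of_eq ?_) (key _ _)
          ring_nf
      _ = (∫ z, |ψ (z + τ) - ψ z|) + m₀ * ∫ z, |φ (z + τ) - φ z| := by
        rw [integral_add (h_int h.int τ).abs ((h_int h'.int τ).abs.const_mul _), integral_const_mul]
      _ ≤ C₀ * ‖τ‖ ^ s + m₀ * (C₀' * ‖τ‖ ^ s) := by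
        gcongr
        · exact h.modulus τ
        · exact h'.modulus τ
      _ = _ := by ring

lemma IsBL.integrable {d : ℕ} {χ : Eu d → ℝ} {M R : ℝ} (h : IsBL χ M)
    (hR : ∀ z, R < ‖z‖ → χ z = 0) : Integrable χ :=
  h.continuous.integrable_of_hasCompactSupport
    (HasCompactSupport.intro (isCompact_closedBall 0 R) fun z hz => hR z (by simpa using hz))

/-- A kernel that is well approximated in `L¹` by Lipschitz kernels has a Hölder modulus. -/
lemma isModKernel_of_approx {d : ℕ} {ψ : Eu d → ℝ} {N Λ C R : ℝ} (m : ℕ) (hψm : Measurable ψ)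
    (hψ : Integrable ψ) (hR : ∀ z, R < ‖z‖ → ψ z = 0) (hN : ∫ z, |ψ z| ≤ N) (hΛ : 0 ≤ Λ)
    (hC : 0 ≤ C)
    (happ : ∀ ε ∈ Ioc (0 : ℝ) 1, ∃ χ : Eu d → ℝ, IsBL χ (Λ * ε⁻¹ ^ m) ∧
      (∀ z, R < ‖z‖ → χ z = 0) ∧ ∫ z, |ψ z - χ z| ≤ C * ε) :
    IsModKernel ψ N (2 * C + Λ * volume.real (closedBall (0 : Eu d) (R + 1)) + 2 * N) R
      (1 / (m + 1)) := by
  refine ⟨hψm, hψ, hR, hN, fun τ => ?_⟩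
  have hN0 : 0 ≤ N := le_trans (integral_nonneg fun _ => abs_nonneg _) hN
  set s : ℝ := 1 / (m + 1) with hs
  have hs0 : 0 < s := by positivity
  set V := volume.real (closedBall (0 : Eu d) (R + 1)) with hV
  have hV0 : 0 ≤ V := measureReal_nonneg
  have hψτ : Integrable fun z => ψ (z + τ) := hψ.comp_add_right τ
  rcases eq_or_ne τ 0 with rfl | hτ
  · simp [Real.zero_rpow hs0.ne']
  have hτ0 : 0 < ‖τ‖ := norm_pos_iff.2 hτ
  rcases le_or_gt 1 ‖τ‖ with h1 | h1
  · calc ∫ z, |ψ (z + τ) - ψ z| ≤ ∫ z, (|ψ (z + τ)| + |ψ z|) :=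
          integral_mono (hψτ.sub hψ).abs (hψτ.abs.add hψ.abs) fun z => abs_sub _ _
      _ = (∫ z, |ψ z|) + ∫ z, |ψ z| := by
          rw [integral_add hψτ.abs hψ.abs, integral_add_right_eq_self (fun z => |ψ z|) τ]
      _ ≤ 2 * N * 1 := by linarith
      _ ≤ (2 * C + Λ * V + 2 * N) * ‖τ‖ ^ s := by
          have : 1 ≤ ‖τ‖ ^ s := Real.one_le_rpow h1 hs0.le
          gcongr
          linarith [mul_nonneg hΛ hV0]
  · set ε := ‖τ‖ ^ s with hε
    have hε0 : 0 < ε := Real.rpow_pos_of_pos hτ0 s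
    have hε1 : ε ≤ 1 := Real.rpow_le_one hτ0.le h1.le hs0.le
    have hετ : ε ^ (m + 1) = ‖τ‖ := by
      rw [hε, ← Real.rpow_natCast, ← Real.rpow_mul hτ0.le, hs]
      push_cast
      rw [one_div_mul_cancel (by positivity), Real.rpow_one]
    obtain ⟨χ, hχ, hχR, hχψ⟩ := happ ε ⟨hε0, hε1⟩
    have hχi : Integrable χ := hχ.integrable hχR
    have hχτ : Integrable fun z => χ (z + τ) := hχi.comp_add_right τ
    have hmid : ∫ z, |χ (z + τ) - χ z| ≤ Λ * V * ε := by
      calc ∫ z, |χ (z + τ) - χ z|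
          ≤ ∫ z, (closedBall (0 : Eu d) (R + 1)).indicator (fun _ => Λ * ε) z := by
            refine integral_mono (hχτ.sub hχi).abs
              ((integrable_indicator_iff isClosed_closedBall.measurableSet).2
                (integrableOn_const (isCompact_closedBall _ _).measure_lt_top.ne)) fun z => ?_
            by_cases hz : z ∈ closedBall (0 : Eu d) (R + 1)
            · rw [indicator_of_mem hz]
              refine (hχ.lip _ _).trans_eq ?_
              rw [add_sub_cancel_left, ← hετ, pow_succ, inv_pow]
              field_simp
            · rw [indicator_of_notMem hz]
              rw [mem_closedBall_zero_iff, not_le] at hz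
              have h3 : R < ‖z + τ‖ := by
                have := norm_sub_norm_le z (-τ)
                rw [sub_neg_eq_add, norm_neg] at this
                linarith
              simp [hχR _ h3, hχR z (by linarith)]
        _ = Λ * V * ε := by
            rw [integral_indicator isClosed_closedBall.measurableSet, setIntegral_const, smul_eq_mul]
            ring
    have h4 : ∫ z, |ψ (z + τ) - χ (z + τ)| ≤ C * ε :=
      (integral_add_right_eq_self (fun z => |ψ z - χ z|) τ).trans_le hχψ
    calc ∫ z, |ψ (z + τ) - ψ z|
        ≤ ∫ z, (|ψ (z + τ) - χ (z + τ)| + |χ (z + τ) - χ z| + |ψ z - χ z|) := by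
          refine integral_mono (hψτ.sub hψ).abs (((hψτ.sub hχτ).abs.add (hχτ.sub hχi).abs).add
            (hψ.sub hχi).abs) fun z => ?_
          have e : ψ (z + τ) - ψ z = (ψ (z + τ) - χ (z + τ)) + (χ (z + τ) - χ z) - (ψ z - χ z) := by
            ring
          simp only [e]
          exact (abs_sub _ _).trans (add_le_add_left (abs_add_le _ _) _)
      _ = (∫ z, |ψ (z + τ) - χ (z + τ)|) + (∫ z, |χ (z + τ) - χ z|) + ∫ z, |ψ z - χ z| := by
          have i1 : Integrable fun z => |ψ (z + τ) - χ (z + τ)| := (hψτ.sub hχτ).abs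
          have i2 : Integrable fun z => |χ (z + τ) - χ z| := (hχτ.sub hχi).abs
          have i3 : Integrable fun z => |ψ z - χ z| := (hψ.sub hχi).abs
          have i12 : Integrable fun z => |ψ (z + τ) - χ (z + τ)| + |χ (z + τ) - χ z| := i1.add i2
          rw [integral_add i12 i3, integral_add i1 i2]
      _ ≤ C * ε + Λ * V * ε + C * ε := by gcongr
      _ ≤ (2 * C + Λ * V + 2 * N) * ε := by nlinarith [mul_nonneg hN0 hε0.le]

/-- The surface area of the unit sphere. -/
noncomputable def area (d : ℕ) : ℝ := d * volume.real (ball (0 : Eu d) 1)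

lemma area_pos {d : ℕ} (hd : 1 ≤ d) : 0 < area d := by
  have : 0 < volume.real (ball (0 : Eu d) 1) :=
    ENNReal.toReal_pos (measure_ball_pos _ _ one_pos).ne' measure_ball_lt_top.ne
  have : (0 : ℝ) < d := by exact_mod_cast hd
  unfold area
  positivity

lemma pow_mul_indicator_eq {d : ℕ} {J : Set ℝ} {y : ℝ} (hy : y ∈ Ioi (0 : ℝ)) :
    y ^ (d - 1) * J.indicator (fun r => (r ^ (d - 1))⁻¹) y = J.indicator 1 y := by
  by_cases h : y ∈ J
  · rw [indicator_of_mem h, indicator_of_mem h, Pi.one_apply]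
    exact mul_inv_cancel₀ (pow_pos hy _).ne'
  · simp [h]

lemma integrable_radial {d : ℕ} (hd : 1 ≤ d) {J : Set ℝ} (hJ : MeasurableSet J)
    (hJ1 : J ⊆ Ioc 0 1) :
    Integrable fun z : Eu d => J.indicator (fun r => (r ^ (d - 1))⁻¹) ‖z‖ := by
  have : Nonempty (Fin d) := ⟨⟨0, hd⟩⟩
  rw [integrable_fun_norm_addHaar (μ := (volume : Measure (Eu d)))]
  have h : IntegrableOn (J.indicator (1 : ℝ → ℝ)) (Ioi 0) :=
    (IntegrableOn.integrable_indicator (integrableOn_const (lt_of_le_of_lt (measure_mono hJ1)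
      measure_Ioc_lt_top).ne) hJ).integrableOn
  refine h.congr_fun (fun y hy => ?_) measurableSet_Ioi
  simp only [finrank_euclideanSpace, Fintype.card_fin, smul_eq_mul]
  exact (pow_mul_indicator_eq hy).symm

lemma integral_radial {d : ℕ} (hd : 1 ≤ d) {J : Set ℝ} (hJ : MeasurableSet J)
    (hJ1 : J ⊆ Ioc 0 1) :
    ∫ z : Eu d, J.indicator (fun r => (r ^ (d - 1))⁻¹) ‖z‖ = area d * volume.real J := by
  have : Nonempty (Fin d) := ⟨⟨0, hd⟩⟩
  rw [integral_fun_norm_addHaar (volume : Measure (Eu d)), area]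
  simp only [finrank_euclideanSpace, Fintype.card_fin, smul_eq_mul, nsmul_eq_mul]
  rw [setIntegral_congr_fun measurableSet_Ioi fun y hy => pow_mul_indicator_eq hy,
    setIntegral_indicator hJ, inter_eq_self_of_subset_right (hJ1.trans Ioc_subset_Ioi_self)]
  simp [mul_assoc]

/-- The homogeneous kernel `ℓ(z) |z|^{-d}` restricted to the annulus `|z| ∈ J`. -/
noncomputable def annKernel {d : ℕ} (J : Set ℝ) (ℓ : Eu d → ℝ) (z : Eu d) : ℝ :=
  J.indicator (fun r => (r ^ d)⁻¹) ‖z‖ * ℓ z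

lemma abs_annKernel_le {d : ℕ} (hd : 1 ≤ d) {J J' : Set ℝ} {ℓ : Eu d → ℝ} {K : ℝ} (hK : 0 ≤ K)
    (hJ : ∀ r ∈ J, 0 < r) {z : Eu d} (hℓ : ‖z‖ ∈ J → |ℓ z| ≤ K * ‖z‖) (hJJ : ‖z‖ ∈ J → ‖z‖ ∈ J') :
    |annKernel J ℓ z| ≤ K * J'.indicator (fun r => (r ^ (d - 1))⁻¹) ‖z‖ := by
  unfold annKernel
  by_cases h : ‖z‖ ∈ J
  · have hz := hJ _ h
    rw [indicator_of_mem h, indicator_of_mem (hJJ h), abs_mul, abs_of_pos (by positivity)]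
    calc (‖z‖ ^ d)⁻¹ * |ℓ z| ≤ (‖z‖ ^ d)⁻¹ * (K * ‖z‖) := by
          gcongr
          exact hℓ h
      _ = K * (‖z‖ ^ (d - 1))⁻¹ := by
          obtain ⟨e, rfl⟩ := Nat.exists_eq_add_of_le' hd
          rw [Nat.add_sub_cancel, pow_succ]
          field_simp
  · rw [indicator_of_notMem h, zero_mul, abs_zero]
    classical
    rw [indicator_apply]
    split_ifs <;> positivity

lemma measurable_annKernel {d : ℕ} {J : Set ℝ} (hJ : MeasurableSet J) {ℓ : Eu d → ℝ}
    (hℓ : Measurable ℓ) : Measurable (annKernel J ℓ) :=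
  ((((measurable_id.pow_const d).inv).indicator hJ).comp measurable_norm).mul hℓ

/-- The constant in the modulus of continuity of annular kernels. -/
noncomputable def annConst (d : ℕ) (K : ℝ) : ℝ :=
  2 * (2 * K * area d) + 8 * K * 2 ^ d * volume.real (closedBall (0 : Eu d) (2 + 1)) +
    2 * (K * area d)

lemma isModKernel_annKernel {d : ℕ} (hd : 1 ≤ d) {K : ℝ} (hK : 0 ≤ K) {r₀ : ℝ} (hr₀ : 0 ≤ r₀)
    {J : Set ℝ} (hJ : MeasurableSet J) (hJ1 : Ioo r₀ 1 ⊆ J) (hJ2 : J ⊆ Ioc r₀ 1)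
    {ℓ : Eu d → ℝ} (hℓ : IsBL ℓ K) (hℓz : ∀ z, ‖z‖ ∈ J → |ℓ z| ≤ K * ‖z‖) :
    IsModKernel (annKernel J ℓ) (K * area d) (annConst d K) 2 (1 / ((2 * d + 2 : ℕ) + 1)) := by
  have hA := (area_pos hd).le
  have hJ0 : ∀ r ∈ J, 0 < r := fun r hr => lt_of_le_of_lt hr₀ (hJ2 hr).1
  have hJ01 : J ⊆ Ioc 0 1 := fun r hr => ⟨hJ0 r hr, (hJ2 hr).2⟩
  have hmeas : Measurable (annKernel J ℓ) := measurable_annKernel hJ hℓ.continuous.measurable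
  have hle : ∀ z, |annKernel J ℓ z| ≤ K * (Ioc 0 1).indicator (fun r => (r ^ (d - 1))⁻¹) ‖z‖ :=
    fun z => abs_annKernel_le hd hK hJ0 (hℓz z) fun h => hJ01 h
  have hrad := (integrable_radial hd measurableSet_Ioc (Subset.refl (Ioc (0 : ℝ) 1))).const_mul K
  have h_int : Integrable (annKernel J ℓ) := hrad.mono' hmeas.aestronglyMeasurable
    (Eventually.of_forall hle)
  have hsupp : ∀ z : Eu d, 1 ≤ ‖z‖ → ‖z‖ ∉ J ∨ ‖z‖ = 1 := fun z hz => by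
    by_cases h : ‖z‖ ∈ J
    · exact Or.inr (le_antisymm (hJ2 h).2 hz)
    · exact Or.inl h
  refine isModKernel_of_approx (C := 2 * K * area d) (Λ := 8 * K * 2 ^ d) (2 * d + 2) hmeas h_int
    (fun z hz => ?_) ?_ (by positivity) (by positivity) fun ε hε => ?_
  · rcases hsupp z (by linarith) with h | h
    · simp [annKernel, h]
    · linarith
  · refine (integral_mono h_int.abs hrad hle).trans_eq ?_
    rw [integral_const_mul, integral_radial hd measurableSet_Ioc Subset.rfl]
    simp
  · obtain ⟨hε0, hε1⟩ := hε
    set η : Eu d → ℝ := fun z => min 1 (max (‖z‖ - r₀) 0 / ε) with hη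
    set θ : Eu d → ℝ := fun z => min 1 (max (-‖z‖ - (-1)) 0 / ε) with hθ
    have bη : IsBL η ε⁻¹ := (IsBL.ramp r₀ hε0 hε1).comp_norm
    have bθ : IsBL θ ε⁻¹ := (IsBL.ramp (-1) hε0 hε1).comp_neg.comp_norm
    have bp : IsBL (fun z : Eu d => (max ‖z‖ ε)⁻¹ ^ d) ((2 * ε⁻¹ ^ 2) ^ d) :=
      (IsBL.inv_max hε0 hε1).comp_norm.pow d
    have bχ := ((hℓ.mul bp).mul bη).mul bθ
    have hη01 : ∀ z, 0 ≤ η z ∧ η z ≤ 1 := fun z => ⟨by positivity, min_le_left _ _⟩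
    have hθ01 : ∀ z, 0 ≤ θ z ∧ θ z ≤ 1 := fun z => ⟨by positivity, min_le_left _ _⟩
    have hη0 : ∀ z, ‖z‖ ≤ r₀ → η z = 0 := fun z hz => by
      simp [hη, max_eq_right (sub_nonpos.2 hz)]
    have hθ0 : ∀ z, 1 ≤ ‖z‖ → θ z = 0 := fun z hz => by
      simp [hθ, max_eq_right (show -‖z‖ + 1 ≤ 0 by linarith)]
    have hχR : ∀ z, 2 < ‖z‖ → ℓ z * (max ‖z‖ ε)⁻¹ ^ d * η z * θ z = 0 := fun z hz => by
      rw [hθ0 z (by linarith), mul_zero]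
    refine ⟨_, bχ.mono (le_of_eq ?_), hχR, ?_⟩
    · rw [mul_pow, ← pow_mul, pow_add]
      ring
    · have hχi := bχ.integrable hχR
      set J' : Set ℝ := (Ioo r₀ (r₀ + ε) ∪ Ioc (1 - ε) 1) ∩ Ioc 0 1 with hJ'
      have hJ'm : MeasurableSet J' := (measurableSet_Ioo.union measurableSet_Ioc).inter
        measurableSet_Ioc
      have hrad' := (integrable_radial hd hJ'm inter_subset_right).const_mul K
      have hvol : volume.real J' ≤ 2 * ε := by
        calc volume.real J' ≤ volume.real (Ioo r₀ (r₀ + ε) ∪ Ioc (1 - ε) 1) :=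
              measureReal_mono inter_subset_left
                (measure_union_lt_top measure_Ioo_lt_top measure_Ioc_lt_top).ne
          _ ≤ volume.real (Ioo r₀ (r₀ + ε)) + volume.real (Ioc (1 - ε) 1) :=
              measureReal_union_le _ _
          _ = 2 * ε := by
              simp [Real.volume_real_Ioo, Real.volume_real_Ioc, hε0.le]
              ring
      have hpt : ∀ z, |annKernel J ℓ z - ℓ z * (max ‖z‖ ε)⁻¹ ^ d * η z * θ z| ≤
          K * J'.indicator (fun r => (r ^ (d - 1))⁻¹) ‖z‖ := by
        intro z
        by_cases hzJ : ‖z‖ ∈ J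
        · have hz0 := hJ0 _ hzJ
          by_cases hz' : ‖z‖ ∈ J'
          · refine le_trans ?_ (abs_annKernel_le hd hK hJ0 (hℓz z) fun _ => hz')
            set t := (‖z‖ / max ‖z‖ ε) ^ d * η z * θ z with ht
            have hmax : 0 < max ‖z‖ ε := lt_max_of_lt_left hz0
            have h1 : (‖z‖ / max ‖z‖ ε) ^ d ≤ 1 :=
              pow_le_one₀ (by positivity) ((div_le_one hmax).2 (le_max_left _ _))
            have ht0 : 0 ≤ t := mul_nonneg (mul_nonneg (by positivity) (hη01 z).1) (hθ01 z).1
            have ht1 : t ≤ 1 := mul_le_one₀ (mul_le_one₀ h1 (hη01 z).1 (hη01 z).2) (hθ01 z).1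
              (hθ01 z).2
            have e : annKernel J ℓ z - ℓ z * (max ‖z‖ ε)⁻¹ ^ d * η z * θ z =
                annKernel J ℓ z * (1 - t) := by
              rw [annKernel, indicator_of_mem hzJ, ht, div_pow, inv_pow]
              field_simp
            rw [e, abs_mul, abs_of_nonneg (sub_nonneg.2 ht1)]
            exact mul_le_of_le_one_right (abs_nonneg _) (by linarith)
          · have h1 : r₀ + ε ≤ ‖z‖ := by
              by_contra! h
              exact hz' ⟨Or.inl ⟨(hJ2 hzJ).1, h⟩, hJ01 hzJ⟩
            have h2 : ‖z‖ ≤ 1 - ε := by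
              by_contra! h
              exact hz' ⟨Or.inr ⟨h, (hJ2 hzJ).2⟩, hJ01 hzJ⟩
            have e1 : η z = 1 := min_eq_left ((one_le_div hε0).2 (le_max_of_le_left (by linarith)))
            have e2 : θ z = 1 := min_eq_left ((one_le_div hε0).2 (le_max_of_le_left (by linarith)))
            rw [e1, e2, max_eq_left (by linarith), annKernel, indicator_of_mem hzJ,
              indicator_of_notMem hz', inv_pow]
            simp [mul_comm]
        · have h0 : η z * θ z = 0 := by
            rcases le_or_gt ‖z‖ r₀ with h | h
            · rw [hη0 z h, zero_mul]
            · rw [hθ0 z (by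
                by_contra! h'
                exact hzJ (hJ1 ⟨h, h'⟩)), mul_zero]
          classical
          rw [mul_assoc, h0, annKernel, indicator_of_notMem hzJ, indicator_apply]
          simp only [zero_mul, mul_zero, sub_zero, abs_zero]
          split_ifs <;> positivity
      calc _ ≤ ∫ z : Eu d, K * J'.indicator (fun r => (r ^ (d - 1))⁻¹) ‖z‖ :=
            integral_mono (h_int.sub hχi).abs hrad' hpt
        _ = K * (area d * volume.real J') := by
            rw [integral_const_mul, integral_radial hd hJ'm inter_subset_right]
        _ ≤ K * (area d * (2 * ε)) := by gcongr
        _ = _ := by ring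

/-- The unnormalised tent function. -/
noncomputable def tent (d : ℕ) (z : Eu d) : ℝ := max (1 - ‖z‖) 0

lemma isBL_tent (d : ℕ) : IsBL (tent d) 1 := by
  constructor
  · intro z
    unfold tent
    rw [abs_of_nonneg (le_max_right _ _)]
    exact max_le (by linarith [norm_nonneg z]) zero_le_one
  · intro z w
    unfold tent
    rw [one_mul]
    calc _ ≤ |(1 - ‖z‖) - (1 - ‖w‖)| := by
          simpa using abs_max_sub_max_le_max (1 - ‖z‖) 0 (1 - ‖w‖) 0
      _ = |‖w‖ - ‖z‖| := by ring_nf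
      _ ≤ ‖z - w‖ := by
          rw [norm_sub_rev]
          exact abs_norm_sub_norm_le _ _

lemma tent_eq_zero {d : ℕ} {z : Eu d} (hz : 1 < ‖z‖) : tent d z = 0 :=
  max_eq_right (by linarith)

lemma integral_tent_pos (d : ℕ) : 0 < ∫ z, tent d z := by
  refine (isBL_tent d).continuous.integral_pos_of_hasCompactSupport_nonneg_nonzero
    (HasCompactSupport.intro (isCompact_closedBall 0 1) fun z hz =>
      tent_eq_zero (by simpa using hz)) (fun z => le_max_right _ _) (x := 0) (by simp [tent])

/-- The tent function with integral one, dilated by `ρ⁻¹`. -/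
noncomputable def bump (d : ℕ) (ρ : ℝ) (z : Eu d) : ℝ :=
  ρ ^ d * ((∫ w, tent d w)⁻¹ * tent d (ρ • z))

lemma isBL_bump (d : ℕ) {ρ : ℝ} (hρ : ρ ∈ Ioc (1 / 2 : ℝ) 1) :
    IsBL (bump d ρ) (∫ w, tent d w)⁻¹ := by
  have hI := integral_tent_pos d
  have h0 : 0 < ρ := by linarith [hρ.1]
  have hp : ρ ^ d ≤ 1 := pow_le_one₀ h0.le hρ.2
  constructor
  · intro z
    unfold bump
    rw [abs_mul, abs_mul, abs_of_pos (pow_pos h0 d), abs_of_pos (inv_pos.2 hI)]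
    calc _ ≤ 1 * ((∫ w, tent d w)⁻¹ * 1) := by
          gcongr
          exact (isBL_tent d).bound _
      _ = _ := by ring
  · intro z w
    unfold bump
    rw [← mul_sub, ← mul_sub, abs_mul, abs_mul, abs_of_pos (pow_pos h0 d),
      abs_of_pos (inv_pos.2 hI)]
    calc _ ≤ 1 * ((∫ w, tent d w)⁻¹ * (1 * ‖ρ • z - ρ • w‖)) := by
          gcongr
          exact (isBL_tent d).lip _ _
      _ = (∫ w, tent d w)⁻¹ * (ρ * ‖z - w‖) := by
          rw [← smul_sub, norm_smul, Real.norm_of_nonneg h0.le]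
          ring
      _ ≤ (∫ w, tent d w)⁻¹ * (1 * ‖z - w‖) := by
          gcongr
          exact hρ.2
      _ = _ := by ring

lemma bump_nonneg (d : ℕ) {ρ : ℝ} (hρ : 0 < ρ) (z : Eu d) : 0 ≤ bump d ρ z :=
   mul_nonneg (pow_nonneg hρ.le d)
    (mul_nonneg (inv_nonneg.2 (integral_tent_pos d).le) (le_max_right _ _))

lemma bump_eq_zero {d : ℕ} {ρ : ℝ} (hρ : ρ ∈ Ioc (1 / 2 : ℝ) 1) {z : Eu d} (hz : 2 < ‖z‖) :
    bump d ρ z = 0 := by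
  unfold bump
  rw [tent_eq_zero, mul_zero, mul_zero]
  rw [norm_smul, Real.norm_of_nonneg (by linarith [hρ.1])]
  nlinarith [hρ.1]

lemma integral_pow_mul_comp_smul {d : ℕ} {ρ : ℝ} (hρ : 0 < ρ) (F : Eu d → ℝ) :
    ∫ z, ρ ^ d * F (ρ • z) = ∫ z, F z := by
  rw [integral_const_mul, Measure.integral_comp_smul, finrank_euclideanSpace, Fintype.card_fin,
    smul_eq_mul, abs_of_pos (by positivity), mul_inv_cancel_left₀ (by positivity)]

lemma integral_bump (d : ℕ) {ρ : ℝ} (hρ : 0 < ρ) : ∫ z, bump d ρ z = 1 := by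
  unfold bump
  rw [integral_pow_mul_comp_smul hρ fun z => (∫ w, tent d w)⁻¹ * tent d z, integral_const_mul,
    inv_mul_cancel₀ (integral_tent_pos d).ne']

lemma avg_bump {d : ℕ} {ρ : ℝ} (hρ : 0 < ρ) (δ : ℝ) (f : Eu d → ℝ) (x : Eu d) :
    avg (bump d ρ) (δ * ρ) f x = avg (bump d 1) δ f x := by
  unfold avg bump
  rw [← integral_pow_mul_comp_smul hρ fun z =>
    1 ^ d * ((∫ w, tent d w)⁻¹ * tent d ((1 : ℝ) • z)) * f (x + δ • z)]
  refine integral_congr_ae (Eventually.of_forall fun z => ?_)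
  simp only [mul_smul, one_smul, one_pow]
  ring

lemma isModKernel_bump (d m : ℕ) {ρ : ℝ} (hρ : ρ ∈ Ioc (1 / 2 : ℝ) 1) :
    IsModKernel (bump d ρ) 1
      ((∫ w, tent d w)⁻¹ * volume.real (closedBall (0 : Eu d) (2 + 1)) + 2) 2 (1 / (m + 1)) := by
  have hI := integral_tent_pos d
  have h0 : 0 < ρ := by linarith [hρ.1]
  have hb := isBL_bump d hρ
  have h := isModKernel_of_approx (ψ := bump d ρ) (N := 1) (Λ := (∫ w, tent d w)⁻¹) (C := 0)
    (R := 2) m hb.continuous.measurable (hb.integrable fun z hz => bump_eq_zero hρ hz)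
    (fun z hz => bump_eq_zero hρ hz)
    (by simp only [abs_of_nonneg (bump_nonneg d h0 _), integral_bump d h0, le_refl])
    (by positivity) le_rfl fun ε hε => ⟨bump d ρ, hb.mono ?_, fun z hz => bump_eq_zero hρ hz, ?_⟩
  · simpa using h
  · exact le_mul_of_one_le_right (by positivity) (one_le_pow₀ ((one_le_inv₀ hε.1).2 hε.2))
  · simp

/-- The coordinate functions truncated to `[-1, 1]`. -/
noncomputable def clamp {d : ℕ} (k : Fin d) (y : Eu d) : ℝ := max (-1) (min 1 (y k))

lemma abs_coord_le {d : ℕ} (k : Fin d) (y : Eu d) : |y k| ≤ ‖y‖ := by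
  simpa using PiLp.norm_apply_le y k

lemma isBL_clamp {d : ℕ} (k : Fin d) : IsBL (clamp k) 1 := by
  constructor
  · intro y
    exact abs_le.2 ⟨le_max_left _ _, max_le (by norm_num) (min_le_left _ _)⟩
  · intro y w
    unfold clamp
    calc _ ≤ |min 1 (y k) - min 1 (w k)| := by
          simpa using abs_max_sub_max_le_max (-1) (min 1 (y k)) (-1) (min 1 (w k))
      _ ≤ |y k - w k| := by simpa using abs_min_sub_min_le_max 1 (y k) 1 (w k)
      _ ≤ 1 * ‖y - w‖ := by simpa using abs_coord_le k (y - w)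

lemma clamp_eq {d : ℕ} (k : Fin d) {y : Eu d} (hy : ‖y‖ ≤ 1) : clamp k y = y k := by
  have h := abs_le.1 ((abs_coord_le k y).trans hy)
  rw [clamp, min_eq_right h.2, max_eq_right h.1]

/-- A bounded Lipschitz function that equals `y_k y_l / |y|² - δ_{kl} / d` for `1/2 ≤ |y| ≤ 1`. -/
noncomputable def quad {d : ℕ} (k l : Fin d) (y : Eu d) : ℝ :=
  clamp k y * clamp l y * (max ‖y‖ (1 / 2))⁻¹ ^ 2 - if k = l then 1 / (d : ℝ) else 0

lemma isBL_quad {d : ℕ} (k l : Fin d) : IsBL (quad k l) 257 := by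
  have h1 := ((isBL_clamp k).mul (isBL_clamp l)).mul
    (((IsBL.inv_max (ε := 1 / 2) (by norm_num) (by norm_num)).comp_norm (X := Eu d)).pow 2)
  refine (h1.sub (IsBL.const (if k = l then 1 / (d : ℝ) else 0))).mono ?_
  have hd : (1 : ℝ) ≤ d := by exact_mod_cast k.pos
  have : |if k = l then 1 / (d : ℝ) else 0| ≤ 1 := by
    split_ifs
    · rw [abs_of_nonneg (by positivity)]
      exact div_le_one_of_le₀ hd (by positivity)
    · simp
  norm_num at this ⊢
  linarith

lemma quad_smul {d : ℕ} (k l : Fin d) {ρ : ℝ} (hρ : ρ ∈ Ioc (1 / 2 : ℝ) 1) {ω : Eu d}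
    (hω : ‖ω‖ = 1) :
    quad k l (ρ • ω) = ω k * ω l - if k = l then 1 / (d : ℝ) else 0 := by
  have h0 : 0 < ρ := by linarith [hρ.1]
  have hn : ‖ρ • ω‖ = ρ := by rw [norm_smul, hω, Real.norm_of_nonneg h0.le, mul_one]
  rw [quad, clamp_eq k (hn.trans_le hρ.2), clamp_eq l (hn.trans_le hρ.2), hn, max_eq_left hρ.1.le,
    inv_pow]
  simp only [PiLp.smul_apply, smul_eq_mul]
  congr 1
  field_simp

lemma isModKernel_annKernel_quad {d : ℕ} (k l : Fin d) {c C : ℝ} (hc : |c| ≤ C) :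
    IsModKernel (annKernel (Ioc (1 / 2) 1) fun y => c * quad k l y) (2 * C * 514 * area d)
      (annConst d (2 * C * 514)) 2 (1 / ((2 * d + 2 : ℕ) + 1)) := by
  have hC : 0 ≤ C := (abs_nonneg c).trans hc
  have hb : IsBL (fun y => c * quad k l y) (C * 514) :=
    ((IsBL.const c).mul (isBL_quad k l)).mono (by nlinarith)
  refine isModKernel_annKernel k.pos (by positivity) (by norm_num) measurableSet_Ioc
    Ioo_subset_Ioc_self Subset.rfl (hb.mono (by nlinarith)) fun y hy => (hb.bound y).trans ?_
  nlinarith [hy.1, mul_nonneg hC (sub_nonneg.2 hy.1.le)]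

lemma integral_annKernel_comp {d : ℕ} (J : Set ℝ) (ℓ : Eu d → ℝ) (e : Eu d ≃ₗᵢ[ℝ] Eu d) :
    ∫ y, annKernel J (fun y => ℓ (e y)) y = ∫ y, annKernel J ℓ y := by
  rw [← e.measurePreserving.integral_comp e.toHomeomorph.measurableEmbedding (annKernel J ℓ)]
  simp [annKernel]

lemma integral_annKernel_const_mul {d : ℕ} (J : Set ℝ) (c : ℝ) (ℓ : Eu d → ℝ) :
    ∫ y, annKernel J (fun y => c * ℓ y) y = c * ∫ y, annKernel J ℓ y := by
  rw [← integral_const_mul]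
  simp only [annKernel, mul_left_comm]

lemma clamp_neg {t : ℝ} : max (-1) (min 1 (-t)) = -max (-1) (min 1 t) := by
  grind

lemma integral_annKernel_quad {d : ℕ} (k l : Fin d) :
    ∫ y, annKernel (Ioc (1 / 2) 1) (quad k l) y = 0 := by
  by_cases hkl : k = l
  · subst hkl
    have hd : (0 : ℝ) < d := by exact_mod_cast k.pos
    have hi : ∀ j : Fin d, Integrable (annKernel (Ioc (1 / 2) 1) (quad j j)) := fun j => by
      simpa using (isModKernel_annKernel_quad j j (c := 1) (C := 1) (by simp)).int
    have heq : ∀ j : Fin d, ∫ y, annKernel (Ioc (1 / 2) 1) (quad j j) y =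
        ∫ y, annKernel (Ioc (1 / 2) 1) (quad k k) y := fun j => by
      rw [← integral_annKernel_comp _ (quad k k)
        (LinearIsometryEquiv.piLpCongrLeft 2 ℝ ℝ (Equiv.swap k j))]
      congr! 4 with y
      simp [quad, clamp, LinearIsometryEquiv.piLpCongrLeft_apply, Equiv.piCongrLeft']
    have hsum : ∑ j : Fin d, ∫ y, annKernel (Ioc (1 / 2) 1) (quad j j) y = 0 := by
      rw [← integral_finsetSum _ fun j _ => hi j]
      refine integral_eq_zero_of_ae (Eventually.of_forall fun y => ?_)
      by_cases hy : ‖y‖ ∈ Ioc (1 / 2 : ℝ) 1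
      · have hy0 : 0 < ‖y‖ := by linarith [hy.1]
        simp only [annKernel, ← Finset.mul_sum, quad, clamp_eq _ hy.2, max_eq_left hy.1.le, if_true,
          Finset.sum_sub_distrib, ← Finset.sum_mul, ← pow_two]
        rw [← EuclideanSpace.real_norm_sq_eq]
        simp [hy0.ne', hd.ne']
      · simp only [annKernel, indicator_of_notMem hy, zero_mul, Finset.sum_const_zero, Pi.zero_apply]
    simp only [heq, Finset.sum_const, Finset.card_univ, Fintype.card_fin, nsmul_eq_mul] at hsum
    exact (mul_eq_zero.1 hsum).resolve_left hd.ne'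
  · have h := integral_annKernel_comp (Ioc (1 / 2) 1) (quad k l)
      (LinearIsometryEquiv.piLpCongrRight 2 fun i : Fin d =>
        if i = k then LinearIsometryEquiv.neg ℝ else LinearIsometryEquiv.refl ℝ ℝ)
    have h' : ∀ y : Eu d, quad k l (LinearIsometryEquiv.piLpCongrRight 2 (fun i : Fin d =>
        if i = k then LinearIsometryEquiv.neg ℝ else LinearIsometryEquiv.refl ℝ ℝ) y) =
        (-1) * quad k l y := fun y => by
      rw [quad, LinearIsometryEquiv.norm_map]
      simp [quad, clamp, hkl, Ne.symm hkl, clamp_neg]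
    simp only [h', integral_annKernel_const_mul] at h
    linarith

lemma eLpNorm_ofReal_le_iff {α : Type*} [MeasurableSpace α] {μ : Measure α} {E : Type*}
    [NormedAddCommGroup E] {f : α → E} {q : ℝ} (hq : 0 < q) {B : ℝ≥0∞} :
    eLpNorm f (ENNReal.ofReal q) μ ≤ B ↔ ∫⁻ x, ‖f x‖ₑ ^ q ∂μ ≤ B ^ q := by
  rw [eLpNorm_eq_lintegral_rpow_enorm_toReal (by simpa using hq) ENNReal.ofReal_ne_top,
    ENNReal.toReal_ofReal hq.le, one_div, ENNReal.rpow_inv_le_iff hq]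

lemma enorm_rpow_le_rpow_mul_sq {p : ℝ} (hp : 0 < p) {y Λ : ℝ≥0∞} (hy : y ≠ ⊤)
    (h : 2 ≤ p ∧ y ≤ Λ ∨ p ≤ 2 ∧ Λ ≤ y) :
    y ^ p ≤ Λ ^ (p - 2) * y ^ (2 : ℝ) := by
  rcases eq_or_ne y 0 with rfl | hy0
  · simp [ENNReal.zero_rpow_of_pos hp]
  · have e : y ^ p = y ^ (p - 2) * y ^ (2 : ℝ) := by
      rw [← ENNReal.rpow_add _ _ hy0 hy, sub_add_cancel]
    rw [e]
    gcongr ?_ * _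
    rcases h with ⟨h1, h2⟩ | ⟨h1, h2⟩
    · exact ENNReal.rpow_le_rpow h2 (by linarith)
    · rw [← neg_sub, ENNReal.rpow_neg, ENNReal.rpow_neg, ENNReal.inv_le_inv]
      exact ENNReal.rpow_le_rpow h2 (by linarith)

/-- Hölder's inequality for a sum of integrals of products. -/
lemma lintegral_sum_mul_le {d : ℕ} {p q : ℝ} (hpq : q.HolderConjugate p) (n : ℕ)
    {a b : ℕ → Eu d → ℝ≥0∞} (ha : ∀ k, Measurable (a k)) (hb : ∀ k, Measurable (b k))
    {A B : ℝ≥0∞} (hA : ∀ k, ∫⁻ x, a k x ^ q ≤ A ^ q)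
    (hB : ∑ k ∈ Finset.range n, ∫⁻ x, b k x ^ p ≤ B ^ p) :
    ∫⁻ x, ∑ k ∈ Finset.range n, a k x * b k x ≤ (n : ℝ≥0∞) ^ (1 / q) * A * B := by
  have hq := hpq.pos
  have hp := hpq.symm.pos
  rw [lintegral_finsetSum (f := fun k x => a k x * b k x) _ fun k _ => (ha k).mul (hb k)]
  calc ∑ k ∈ Finset.range n, ∫⁻ x, a k x * b k x
      ≤ ∑ k ∈ Finset.range n, (∫⁻ x, a k x ^ q) ^ (1 / q) * (∫⁻ x, b k x ^ p) ^ (1 / p) :=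
        Finset.sum_le_sum fun k _ =>
          ENNReal.lintegral_mul_le_Lp_mul_Lq _ hpq (ha k).aemeasurable (hb k).aemeasurable
    _ ≤ (∑ k ∈ Finset.range n, ((∫⁻ x, a k x ^ q) ^ (1 / q)) ^ q) ^ (1 / q) *
        (∑ k ∈ Finset.range n, ((∫⁻ x, b k x ^ p) ^ (1 / p)) ^ p) ^ (1 / p) :=
        ENNReal.inner_le_Lp_mul_Lq _ _ _ hpq
    _ = (∑ k ∈ Finset.range n, ∫⁻ x, a k x ^ q) ^ (1 / q) *
        (∑ k ∈ Finset.range n, ∫⁻ x, b k x ^ p) ^ (1 / p) := by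
        simp only [← ENNReal.rpow_mul, one_div_mul_cancel hq.ne', one_div_mul_cancel hp.ne',
          ENNReal.rpow_one]
    _ ≤ (n * A ^ q) ^ (1 / q) * (B ^ p) ^ (1 / p) := by
        gcongr
        calc ∑ k ∈ Finset.range n, ∫⁻ x, a k x ^ q ≤ ∑ k ∈ Finset.range n, A ^ q :=
              Finset.sum_le_sum fun k _ => hA k
          _ = n * A ^ q := by simp
    _ = (n : ℝ≥0∞) ^ (1 / q) * A * B := by
        rw [ENNReal.mul_rpow_of_nonneg _ _ (by positivity), ← ENNReal.rpow_mul, ← ENNReal.rpow_mul,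
          mul_one_div_cancel hq.ne', mul_one_div_cancel hp.ne', ENNReal.rpow_one, ENNReal.rpow_one]

/-- Splitting of a paraproduct `∑ aₖ gₖ` into an `L¹` part and an `L^q` part. -/
lemma exists_paraproduct_split {d : ℕ} {q : ℝ} (hq : 1 < q) {n : ℕ} (hn : 1 ≤ n)
    {a g : ℕ → Eu d → ℝ} (ha : ∀ k, Measurable (a k)) (hg : ∀ k, Measurable (g k))
    {Λ B : ℝ≥0∞} (hΛ0 : Λ ≠ 0) (hΛt : Λ ≠ ⊤) (hB : ∀ k, ∫⁻ x, ‖a k x‖ₑ ^ q ≤ B ^ q)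
    (hgΛ : ∀ k x, ‖g k x‖ₑ ≤ Λ)
    (hg2 : ∑ k ∈ Finset.range n, ∫⁻ x, ‖g k x‖ₑ ^ (2 : ℝ) ≤ Λ ^ (2 : ℝ)) :
    ∃ u : Eu d → ℝ, Measurable u ∧
      ∫⁻ x, ‖u x‖ₑ ≤ (n : ℝ≥0∞) ^ (max 1 (q - 1) / q) * Λ * B ∧
      eLpNorm (fun x => (∑ k ∈ Finset.range n, a k x * g k x) - u x) (ENNReal.ofReal q) volume ≤
        (n : ℝ≥0∞) ^ (max 1 (q - 1) / q) * Λ * B := by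
  have hq0 : 0 < q := by linarith
  have hpq := Real.HolderConjugate.conjExponent hq
  set p := q.conjExponent with hp
  have hp0 := hpq.symm.pos
  have hpe : 1 / p = 1 - 1 / q := by
    have := hpq.inv_add_inv_eq_one
    rw [one_div, one_div]
    linarith
  have hn1 : (1 : ℝ≥0∞) ≤ n := by exact_mod_cast hn
  have hn0 : (n : ℝ≥0∞) ≠ 0 := by
    have : n ≠ 0 := by omega
    exact_mod_cast this
  have hnt : (n : ℝ≥0∞) ≠ ⊤ := ENNReal.natCast_ne_top n
  have key : ∀ (s : ℕ → Set (Eu d)) (M : ℝ≥0∞), (∀ k, MeasurableSet (s k)) →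
      (∀ k, ∀ x ∈ s k, 2 ≤ p ∧ ‖g k x‖ₑ ≤ M ∨ p ≤ 2 ∧ M ≤ ‖g k x‖ₑ) →
      ∫⁻ x, ‖∑ k ∈ Finset.range n, (s k).indicator (fun x => a k x * g k x) x‖ₑ ≤
        (n : ℝ≥0∞) ^ (1 / q) * B * (M ^ (p - 2) * Λ ^ (2 : ℝ)) ^ (1 / p) := by
    intro s M hs hM
    calc ∫⁻ x, ‖∑ k ∈ Finset.range n, (s k).indicator (fun x => a k x * g k x) x‖ₑ
        ≤ ∫⁻ x, ∑ k ∈ Finset.range n, ‖a k x‖ₑ * (s k).indicator (fun x => ‖g k x‖ₑ) x := by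
          refine lintegral_mono fun x => (enorm_sum_le _ _).trans
            (Finset.sum_le_sum fun k _ => ?_)
          by_cases hx : x ∈ s k <;> simp [hx, enorm_mul]
      _ ≤ _ := by
          refine lintegral_sum_mul_le hpq n (fun k => (ha k).enorm)
            (fun k => (hg k).enorm.indicator (hs k)) hB ?_
          rw [← ENNReal.rpow_mul, one_div_mul_cancel hp0.ne', ENNReal.rpow_one]
          calc _ ≤ ∑ k ∈ Finset.range n, ∫⁻ x, M ^ (p - 2) * ‖g k x‖ₑ ^ (2 : ℝ) := by
                refine Finset.sum_le_sum fun k _ => lintegral_mono fun x => ?_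
                by_cases hx : x ∈ s k
                · rw [indicator_of_mem hx]
                  exact enorm_rpow_le_rpow_mul_sq hp0 enorm_ne_top (hM k x hx)
                · rw [indicator_of_notMem hx, ENNReal.zero_rpow_of_pos hp0]
                  exact zero_le
            _ = M ^ (p - 2) * ∑ k ∈ Finset.range n, ∫⁻ x, ‖g k x‖ₑ ^ (2 : ℝ) := by
                rw [Finset.mul_sum]
                exact Finset.sum_congr rfl fun k _ =>
                  lintegral_const_mul _ ((hg k).enorm.pow_const _)
            _ ≤ _ := by gcongr
  rcases le_or_gt 2 p with h2 | h2
  · refine ⟨fun x => ∑ k ∈ Finset.range n, a k x * g k x,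
      Finset.measurable_sum _ fun k _ => (ha k).mul (hg k), ?_, by simp⟩
    have h := key (fun _ => univ) Λ (fun _ => .univ) fun k x _ => Or.inl ⟨h2, hgΛ k x⟩
    simp only [indicator_univ] at h
    refine h.trans ?_
    rw [← ENNReal.rpow_add _ _ hΛ0 hΛt, sub_add_cancel, ← ENNReal.rpow_mul,
      mul_one_div_cancel hp0.ne', ENNReal.rpow_one, mul_right_comm]
    gcongr
    exact le_max_left _ _
  · have hhalf : (1 / 2 : ℝ) ≤ max 1 (q - 1) / q := by
      have h3 : 1 / 2 ≤ 1 / p := one_div_le_one_div_of_le hp0 h2.le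
      calc (1 / 2 : ℝ) ≤ 1 - 1 / q := by linarith
        _ = (q - 1) / q := by field_simp
        _ ≤ _ := by
          gcongr
          exact le_max_right _ _
    set M := (n : ℝ≥0∞) ^ (-(1 / 2) : ℝ) * Λ with hM
    have hnrt : (n : ℝ≥0∞) ^ (-(1 / 2) : ℝ) ≠ ⊤ := ENNReal.rpow_ne_top_of_ne_zero hn0 hnt
    have hsm : ∀ k, MeasurableSet {x | M ≤ ‖g k x‖ₑ} := fun k =>
      measurableSet_le measurable_const (hg k).enorm
    refine ⟨fun x => ∑ k ∈ Finset.range n, {x | M ≤ ‖g k x‖ₑ}.indicator (fun x => a k x * g k x) x,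
      Finset.measurable_sum _ fun k _ => ((ha k).mul (hg k)).indicator (hsm k), ?_, ?_⟩
    · refine (key _ M hsm fun k x hx => Or.inr ⟨h2.le, hx⟩).trans ?_
      have e : (M ^ (p - 2) * Λ ^ (2 : ℝ)) ^ (1 / p) = (n : ℝ≥0∞) ^ (1 / 2 - 1 / q) * Λ := by
        rw [hM, ENNReal.mul_rpow_of_ne_top hnrt hΛt, mul_assoc, ← ENNReal.rpow_add _ _ hΛ0 hΛt,
          sub_add_cancel, ENNReal.mul_rpow_of_nonneg _ _ (by positivity), ← ENNReal.rpow_mul,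
          ← ENNReal.rpow_mul, ← ENNReal.rpow_mul, mul_one_div_cancel hp0.ne', ENNReal.rpow_one]
        congr 2
        have : (-(1 / 2)) * ((p - 2) * (1 / p)) = - (1 / 2) + 1 / p := by
          field_simp
          ring
        rw [this, hpe]
        ring
      rw [e]
      calc _ = ((n : ℝ≥0∞) ^ (1 / q) * (n : ℝ≥0∞) ^ (1 / 2 - 1 / q)) * Λ * B := by ring
        _ = (n : ℝ≥0∞) ^ (1 / 2 : ℝ) * Λ * B := by
          rw [← ENNReal.rpow_add _ _ hn0 hnt]
          ring_nf
        _ ≤ _ := by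
          gcongr
    · have hterm : ∀ k, eLpNorm (fun x => a k x * g k x -
          {x | M ≤ ‖g k x‖ₑ}.indicator (fun x => a k x * g k x) x) (ENNReal.ofReal q) volume ≤
          M * B := fun k => by
        rw [eLpNorm_ofReal_le_iff hq0]
        calc _ ≤ ∫⁻ x, M ^ q * ‖a k x‖ₑ ^ q := by
              refine lintegral_mono fun x => ?_
              rw [← ENNReal.mul_rpow_of_nonneg _ _ hq0.le]
              by_cases hx : M ≤ ‖g k x‖ₑ
              · rw [indicator_of_mem (by exact hx)]
                simp [hq0]
              · rw [indicator_of_notMem (by exact hx), sub_zero, enorm_mul, mul_comm]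
                gcongr
                exact (not_le.1 hx).le
          _ ≤ M ^ q * B ^ q := by
              rw [lintegral_const_mul _ ((ha k).enorm.pow_const _)]
              gcongr
              exact hB k
          _ = _ := (ENNReal.mul_rpow_of_nonneg _ _ hq0.le).symm
      simp only [← Finset.sum_sub_distrib]
      have := eLpNorm_sum_le (μ := volume) (p := ENNReal.ofReal q) (s := Finset.range n)
        (f := fun k x => a k x * g k x -
          {x | M ≤ ‖g k x‖ₑ}.indicator (fun x => a k x * g k x) x)
        (fun k _ => (((ha k).mul (hg k)).sub
          (((ha k).mul (hg k)).indicator (hsm k))).aestronglyMeasurable)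
        (by simpa using hq.le)
      rw [Finset.sum_fn] at this
      calc _ ≤ _ := this
        _ ≤ ∑ k ∈ Finset.range n, M * B := Finset.sum_le_sum fun k _ => hterm k
        _ = (n : ℝ≥0∞) ^ (1 : ℝ) * (n : ℝ≥0∞) ^ (-(1 / 2) : ℝ) * Λ * B := by
          rw [Finset.sum_const, Finset.card_range, nsmul_eq_mul, hM, ENNReal.rpow_one]
          ring
        _ = (n : ℝ≥0∞) ^ (1 / 2 : ℝ) * Λ * B := by
          rw [← ENNReal.rpow_add _ _ hn0 hnt]
          norm_num
        _ ≤ _ := by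
          gcongr

/-- The radial weight `r^d / (r + h)^{d+1}`. -/
noncomputable def wt (d : ℕ) (h r : ℝ) : ℝ := r ^ d / (r + h) ^ (d + 1)

/-- The difference between the radial weight and `1/r` truncated at `2^{-n}`. -/
noncomputable def wtErr (d n : ℕ) (h r : ℝ) : ℝ :=
  wt d h r - (Ioc ((1 / 2 : ℝ) ^ n) 1).indicator (fun r => r⁻¹) r

lemma measurable_wt (d : ℕ) (h : ℝ) : Measurable (wt d h) := by
  unfold wt
  fun_prop

lemma measurable_wtErr (d n : ℕ) (h : ℝ) : Measurable (wtErr d n h) :=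
  (measurable_wt d h).sub (measurable_inv.indicator measurableSet_Ioc)

lemma wt_le {d : ℕ} {h r : ℝ} (hh : 0 < h) (hr : 0 < r) : wt d h r ≤ (r + h)⁻¹ := by
  have h0 : 0 < r + h := by linarith
  unfold wt
  rw [pow_succ, ← div_div, ← div_pow, div_eq_mul_inv]
  exact mul_le_of_le_one_left (by positivity)
    (pow_le_one₀ (by positivity) ((div_le_one h0).2 (by linarith)))

lemma wt_nonneg {d : ℕ} {h r : ℝ} (hh : 0 < h) (hr : 0 < r) : 0 ≤ wt d h r := by
  unfold wt
  positivity

lemma abs_wtErr_le {d n : ℕ} {h r : ℝ} (hn : (1 / 2 : ℝ) ^ n ≤ h) (hn' : h < 2 * (1 / 2 : ℝ) ^ n)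
    (hr : r ∈ Ioc (0 : ℝ) 1) : |wtErr d n h r| ≤ 3 * (d + 1) * (h / (r + h) ^ 2) := by
  have hh : 0 < h := lt_of_lt_of_le (by positivity) hn
  have hr0 := hr.1
  have h0 : 0 < r + h := by linarith
  have hd : (0 : ℝ) ≤ d := by positivity
  unfold wtErr
  by_cases hrn : (1 / 2 : ℝ) ^ n < r
  · rw [indicator_of_mem (show r ∈ Ioc ((1 / 2 : ℝ) ^ n) 1 from ⟨hrn, hr.2⟩)]
    set t := h / (r + h) with ht
    have ht0 : 0 ≤ t := by positivity
    have ht1 : t ≤ 1 := (div_le_one h0).2 (by linarith)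
    have e : r⁻¹ - wt d h r = r⁻¹ * (1 - (1 - t) ^ (d + 1)) := by
      have : 1 - t = r / (r + h) := by
        rw [ht]
        field_simp
        ring
      rw [this, wt, div_pow, pow_succ r]
      field_simp
    have hb : 1 - (1 - t) ^ (d + 1) ≤ (d + 1) * t := by
      have := one_add_mul_le_pow (a := -t) (by linarith) (d + 1)
      push_cast at this
      rw [← sub_eq_add_neg] at this
      linarith
    have hb0 : 0 ≤ 1 - (1 - t) ^ (d + 1) :=
      sub_nonneg.2 (pow_le_one₀ (by linarith) (by linarith))
    rw [abs_sub_comm, e, abs_of_nonneg (mul_nonneg (by positivity) hb0)]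
    have hinv : r⁻¹ ≤ 3 * (r + h)⁻¹ := by
      rw [← div_eq_mul_inv, inv_eq_one_div, div_le_div_iff₀ hr0 h0]
      linarith
    calc r⁻¹ * (1 - (1 - t) ^ (d + 1)) ≤ (3 * (r + h)⁻¹) * ((d + 1) * t) := by gcongr
      _ = _ := by
        rw [ht]
        field_simp
  · rw [indicator_of_notMem fun h => hrn h.1, sub_zero, abs_of_nonneg (wt_nonneg hh hr0)]
    refine (wt_le hh hr0).trans ?_
    rw [inv_eq_one_div, mul_div_assoc', div_le_div_iff₀ h0 (by positivity)]
    have : r ≤ h := (not_lt.1 hrn).trans hn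
    nlinarith [mul_nonneg hd hh.le, mul_nonneg (mul_nonneg hd hh.le) h0.le]

lemma lintegral_weight_le_one {h : ℝ} (hh : 0 < h) :
    ∫⁻ r in Ioc (0 : ℝ) 1, ENNReal.ofReal (h / (r + h) ^ 2) ≤ 1 := by
  have hc : ContinuousOn (fun r => h / (r + h) ^ 2) (uIcc 0 1) := by
    rw [uIcc_of_le zero_le_one]
    refine continuousOn_const.div (by fun_prop) fun r hr => ?_
    have := hr.1
    positivity
  have hi : IntervalIntegrable (fun r => h / (r + h) ^ 2) volume 0 1 := hc.intervalIntegrable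
  rw [← ofReal_integral_eq_lintegral_ofReal
    ((intervalIntegrable_iff_integrableOn_Ioc_of_le zero_le_one).1 hi)
    (Eventually.of_forall fun r => by positivity), ← intervalIntegral.integral_of_le zero_le_one,
    intervalIntegral.integral_eq_sub_of_hasDerivAt (f := fun r => -h / (r + h)) (fun r hr => ?_) hi]
  · refine ENNReal.ofReal_le_one.2 ?_
    have : -h / (0 + h) = -1 := by
      rw [zero_add]
      field_simp
    rw [this]
    have : 0 ≤ h / (1 + h) := by positivity
    rw [neg_div]
    linarith
  · rw [uIcc_of_le zero_le_one] at hr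
    have hr0 : r + h ≠ 0 := by linarith [hr.1]
    exact ((hasDerivAt_const r (-h)).div ((hasDerivAt_id r).add_const h) hr0).congr_deriv
      (by simp)

lemma integrableOn_inv_mul {T : ℝ → ℝ} (hT : Measurable T) {B : ℝ} (hB : ∀ r, |T r| ≤ B) {c : ℝ}
    (hc : 0 < c) (b : ℝ) : IntegrableOn (fun r => r⁻¹ * T r) (Ioc c b) := by
  refine Measure.integrableOn_of_bounded (M := c⁻¹ * B) measure_Ioc_lt_top.ne
    (measurable_inv.mul hT).aestronglyMeasurable ?_
  filter_upwards [ae_restrict_mem measurableSet_Ioc] with r hr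
  have hr0 : 0 < r := hc.trans hr.1
  rw [norm_mul, Real.norm_of_nonneg (by positivity)]
  gcongr
  · exact hr.1.le
  · exact hB r

lemma integral_rad {T : ℝ → ℝ} :
    ∫ ρ, T ρ ∂rad = ∫ ρ in Ioc (1 / 2 : ℝ) 1, ρ⁻¹ * T ρ := by
  unfold rad
  rw [integral_withDensity_eq_integral_toReal_smul (by fun_prop)
    (Eventually.of_forall fun _ => ENNReal.ofReal_lt_top)]
  refine setIntegral_congr_fun measurableSet_Ioc fun ρ hρ => ?_
  have : 0 < ρ := by linarith [hρ.1]
  simp only [smul_eq_mul]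
  rw [ENNReal.toReal_ofReal (by positivity)]

lemma integral_inv_mul_eq_sum {T : ℝ → ℝ} (hT : Measurable T) {B : ℝ} (hB : ∀ r, |T r| ≤ B)
    (n : ℕ) :
    ∫ r in Ioc ((1 / 2 : ℝ) ^ n) 1, r⁻¹ * T r =
      ∑ k ∈ Finset.range n, ∫ ρ, T ((1 / 2) ^ k * ρ) ∂rad := by
  induction n with
  | zero => simp
  | succ n ih =>
    have hle : (1 / 2 : ℝ) ^ (n + 1) ≤ (1 / 2) ^ n := by
      rw [pow_succ]
      linarith [pow_pos (one_half_pos (α := ℝ)) n]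
    have hle1 : (1 / 2 : ℝ) ^ n ≤ 1 := pow_le_one₀ (by norm_num) (by norm_num)
    have hI := fun b => integrableOn_inv_mul hT hB (c := (1 / 2) ^ (n + 1)) (by positivity) b
    have hI' := integrableOn_inv_mul hT hB (c := (1 / 2) ^ n) (by positivity) 1
    rw [Finset.sum_range_succ, ← ih, ← Ioc_union_Ioc_eq_Ioc hle hle1,
      setIntegral_union (Ioc_disjoint_Ioc_of_le le_rfl) measurableSet_Ioc (hI _) hI', add_comm,
      integral_rad, ← intervalIntegral.integral_of_le hle,
      ← intervalIntegral.integral_of_le (by norm_num : (1 / 2 : ℝ) ≤ 1)]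
    congr 1
    have hc : (1 / 2 : ℝ) ^ n ≠ 0 := by positivity
    have := intervalIntegral.integral_comp_mul_left (a := 1 / 2) (b := 1)
      (fun r => r⁻¹ * T r) hc
    rw [mul_one, ← pow_succ, smul_eq_mul, eq_inv_mul_iff_mul_eq₀ hc] at this
    rw [← this, ← intervalIntegral.integral_const_mul]
    congr 1 with ρ
    rw [mul_inv]
    field_simp

lemma integral_wt_mul_eq {d : ℕ} {h : ℝ} (hh : 0 < h) {T : ℝ → ℝ} (hT : Measurable T) {B : ℝ}
    (hB : ∀ r, |T r| ≤ B) (n : ℕ) :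
    ∫ r in Ioc (0 : ℝ) 1, wt d h r * T r =
      (∫ r in Ioc (0 : ℝ) 1, wtErr d n h r * T r) +
        ∑ k ∈ Finset.range n, ∫ ρ, T ((1 / 2) ^ k * ρ) ∂rad := by
  have hw : IntegrableOn (fun r => wt d h r * T r) (Ioc 0 1) := by
    refine Measure.integrableOn_of_bounded (M := h⁻¹ * B) measure_Ioc_lt_top.ne
      ((measurable_wt d h).mul hT).aestronglyMeasurable ?_
    filter_upwards [ae_restrict_mem measurableSet_Ioc] with r hr
    rw [norm_mul, Real.norm_of_nonneg (wt_nonneg hh hr.1)]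
    have : wt d h r ≤ h⁻¹ := (wt_le hh hr.1).trans (by
      gcongr
      linarith [hr.1])
    gcongr
    exact hB r
  have hsub : Ioc ((1 / 2 : ℝ) ^ n) 1 ⊆ Ioc 0 1 := Ioc_subset_Ioc_left (by positivity)
  have hi := integrableOn_inv_mul hT hB (c := (1 / 2) ^ n) (by positivity) 1
  have hi' : IntegrableOn ((Ioc ((1 / 2 : ℝ) ^ n) 1).indicator fun r => r⁻¹ * T r) (Ioc 0 1) :=
    ((integrable_indicator_iff measurableSet_Ioc).2 hi).integrableOn
  have e : ∀ r, wtErr d n h r * T r = wt d h r * T r -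
      (Ioc ((1 / 2 : ℝ) ^ n) 1).indicator (fun r => r⁻¹ * T r) r := fun r => by
    rw [wtErr, sub_mul]
    by_cases hr : r ∈ Ioc ((1 / 2 : ℝ) ^ n) 1
    · rw [indicator_of_mem hr, indicator_of_mem hr]
    · rw [indicator_of_notMem hr, indicator_of_notMem hr, zero_mul]
  simp only [e]
  rw [integral_sub hw hi', setIntegral_indicator measurableSet_Ioc,
    inter_eq_self_of_subset_right hsub, integral_inv_mul_eq_sum hT hB]
  ring

/-- Scalar kernels `ℓ(z, ω)` that satisfy the cancellation condition for the entry `(k, l)`. -/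
structure IsAdm {d : ℕ} (ℓ : Eu d → Eu d → ℝ) (k l : Fin d) (K α : ℝ) : Prop where
  pos : 0 < K
  cont : Continuous fun p : Eu d × Eu d => ℓ p.1 p.2
  bl : ∀ ω, IsBL (fun z => ℓ z ω) K
  le : ∀ ω ∈ sphere (0 : Eu d) 1, ∀ z ∈ ball (0 : Eu d) 1, |ℓ z ω| ≤ K * ‖z‖
  canc : ∀ ω ∈ sphere (0 : Eu d) 1, ∫ z, annKernel (Ioo 0 1) (fun z => ℓ z ω) z =
    α * (ω k * ω l - if k = l then 1 / (d : ℝ) else 0)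

/-- The average `∫ ℓ(z, ω) |z|^{-d} a(x + r z) dz` over the unit ball, with `p = (r, ω)`. -/
noncomputable def ballAvg {d : ℕ} (ℓ : Eu d → Eu d → ℝ) (a : Eu d → ℝ) (p : ℝ × Eu d)
    (x : Eu d) : ℝ := avg (annKernel (Ioo 0 1) fun z => ℓ z p.2) p.1 a x

/-- The average of `ballAvg` against `g(x + r ω)` over the unit sphere. -/
noncomputable def sphAvg {d : ℕ} (ℓ : Eu d → Eu d → ℝ) (a g : Eu d → ℝ) (r : ℝ) (x : Eu d) : ℝ :=
  ∫ ω, ballAvg ℓ a (r, ω) x * g (x + r • ω) ∂(surf d)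

section

variable {d : ℕ} {ℓ : Eu d → Eu d → ℝ} {a g : Eu d → ℝ}

lemma measurable_ballAvg (hℓ : Continuous fun p : Eu d × Eu d => ℓ p.1 p.2) (ha : Measurable a) :
    Measurable fun y : (ℝ × Eu d) × Eu d => ballAvg ℓ a y.1 y.2 := by
  have h : Measurable fun y : ((ℝ × Eu d) × Eu d) × Eu d =>
      annKernel (Ioo 0 1) (fun z => ℓ z y.1.1.2) y.2 * a (y.1.2 + y.1.1.1 • y.2) := by
    refine Measurable.mul (Measurable.mul ?_ ?_) (ha.comp (by fun_prop))
    · exact (((measurable_id.pow_const d).inv).indicator measurableSet_Ioo).comp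
        (measurable_norm.comp measurable_snd)
    · exact hℓ.measurable.comp
        (f := fun y : ((ℝ × Eu d) × Eu d) × Eu d => (y.2, y.1.1.2)) (by fun_prop)
  exact h.stronglyMeasurable.integral_prod_right'.measurable

lemma measurable_sphAvg (hd : 2 ≤ d) (hℓ : Continuous fun p : Eu d × Eu d => ℓ p.1 p.2)
    (ha : Measurable a) (hg : Measurable g) :
    Measurable fun y : ℝ × Eu d => sphAvg ℓ a g y.1 y.2 := by
  have := isFiniteMeasure_surf hd
  have h : Measurable fun y : (ℝ × Eu d) × Eu d =>
      ballAvg ℓ a (y.1.1, y.2) y.1.2 * g (y.1.2 + y.1.1 • y.2) := by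
    refine Measurable.mul ?_ (hg.comp (by fun_prop))
    exact (measurable_ballAvg hℓ ha).comp
      (f := fun y : (ℝ × Eu d) × Eu d => ((y.1.1, y.2), y.1.2)) (by fun_prop)
  exact h.stronglyMeasurable.integral_prod_right'.measurable

lemma ae_surf_mem (d : ℕ) : ∀ᵐ ω ∂(surf d), ω ∈ sphere (0 : Eu d) 1 :=
  ae_restrict_mem isClosed_sphere.measurableSet

variable {k l : Fin d} {K α : ℝ}

lemma IsAdm.isModKernel (h : IsAdm ℓ k l K α) {ω : Eu d} (hω : ω ∈ sphere (0 : Eu d) 1) :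
    IsModKernel (annKernel (Ioo 0 1) fun z => ℓ z ω) (K * area d) (annConst d K) 2
      (1 / ((2 * d + 2 : ℕ) + 1)) :=
  isModKernel_annKernel k.pos h.pos.le le_rfl measurableSet_Ioo Subset.rfl Ioo_subset_Ioc_self
    (h.bl ω) fun z hz => h.le ω hω z (by simpa using hz.2)

lemma IsAdm.abs_ballAvg_le (h : IsAdm ℓ k l K α) {B : ℝ} (hB : ∀ x, |a x| ≤ B) {p : ℝ × Eu d}
    (hp : p.2 ∈ sphere (0 : Eu d) 1) (x : Eu d) : |ballAvg ℓ a p x| ≤ K * area d * B := by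
  have hm := h.isModKernel hp
  refine (abs_avg_le hm.int hB x).trans ?_
  have := (abs_nonneg _).trans (hB 0)
  gcongr
  exact hm.norm_le

lemma IsAdm.abs_sphAvg_le (hd : 2 ≤ d) (h : IsAdm ℓ k l K α) {B G : ℝ} (hB : ∀ x, |a x| ≤ B)
    (hG : ∀ x, |g x| ≤ G) (r : ℝ) (x : Eu d) :
    |sphAvg ℓ a g r x| ≤ K * area d * B * G * (surf d).real univ := by
  have := isFiniteMeasure_surf hd
  have hae : ∀ᵐ ω ∂(surf d), ‖ballAvg ℓ a (r, ω) x * g (x + r • ω)‖ ≤ K * area d * B * G := by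
    filter_upwards [ae_surf_mem d] with ω hω
    have h1 := h.abs_ballAvg_le hB (p := (r, ω)) hω x
    rw [Real.norm_eq_abs, abs_mul]
    exact mul_le_mul h1 (hG _) (abs_nonneg _) ((abs_nonneg _).trans h1)
  exact norm_integral_le_of_norm_le_const hae

lemma lintegral_rpow_lintegral_le {P : Type*} [MeasurableSpace P] (ν : Measure P)
    [IsFiniteMeasure ν] {q : ℝ} (hq : 1 ≤ q) {Φ : P → Eu d → ℝ≥0∞}
    (hΦ : Measurable fun y : P × Eu d => Φ y.1 y.2) {B : ℝ≥0∞}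
    (hB : ∀ᵐ p ∂ν, ∫⁻ x, Φ p x ^ q ≤ B) :
    ∫⁻ x, (∫⁻ p, Φ p x ∂ν) ^ q ≤ ν univ ^ q * B := by
  have hsw : Measurable fun y : Eu d × P => Φ y.2 y.1 := hΦ.comp measurable_swap
  calc ∫⁻ x, (∫⁻ p, Φ p x ∂ν) ^ q ≤ ∫⁻ x, ν univ ^ (q - 1) * ∫⁻ p, Φ p x ^ q ∂ν :=
        lintegral_mono fun x =>
          lintegral_rpow_le ν hq (hsw.comp measurable_prodMk_left).aemeasurable
    _ = ν univ ^ (q - 1) * ∫⁻ p, (∫⁻ x, Φ p x ^ q) ∂ν := by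
        rw [lintegral_const_mul _ (hsw.pow_const q).lintegral_prod_right',
          lintegral_lintegral_swap (hsw.pow_const q).aemeasurable]
    _ ≤ ν univ ^ (q - 1) * ∫⁻ p, B ∂ν := by
        exact mul_le_mul' le_rfl (lintegral_mono_ae hB)
    _ = ν univ ^ q * B := by
        rw [lintegral_const, mul_comm B, ← mul_assoc]
        congr 1
        nth_rewrite 2 [← ENNReal.rpow_one (ν univ)]
        rw [← ENNReal.rpow_add_of_nonneg _ _ (by linarith) zero_le_one, sub_add_cancel]

lemma IsModKernel.lintegral_enorm_le {ψ : Eu d → ℝ} {N C₀ R s : ℝ} (h : IsModKernel ψ N C₀ R s) :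
    ∫⁻ z, ‖ψ z‖ₑ ≤ ENNReal.ofReal N := by
  rw [← ofReal_integral_norm_eq_lintegral_enorm h.int]
  exact ENNReal.ofReal_le_ofReal h.norm_le

lemma IsModKernel.lintegral_rpow_avg_le {ψ f : Eu d → ℝ} {N C₀ R s q δ : ℝ}
    (h : IsModKernel ψ N C₀ R s) (hq : 1 ≤ q) (hf : Measurable f) :
    ∫⁻ x, ‖QopBound.avg ψ δ f x‖ₑ ^ q ≤ ENNReal.ofReal N ^ q * ∫⁻ x, ‖f x‖ₑ ^ q := by
  refine (QopBound.lintegral_rpow_avg_le hq h.int h.meas hf).trans ?_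
  gcongr
  exact h.lintegral_enorm_le

/-- The contribution of the error in the radial weight is bounded on `L^q`. -/
lemma IsAdm.eLpNorm_wtErr_le (hd : 2 ≤ d) (h : IsAdm ℓ k l K α) {q : ℝ} (hq : 1 ≤ q) {G : ℝ}
    (ha : Measurable a) (hG : ∀ x, |g x| ≤ G) {n : ℕ} {t : ℝ}
    (hn : (1 / 2 : ℝ) ^ n ≤ t) (hn' : t < 2 * (1 / 2 : ℝ) ^ n) :
    eLpNorm (fun x => ∫ r in Ioc (0 : ℝ) 1, wtErr d n t r * sphAvg ℓ a g r x)
        (ENNReal.ofReal q) volume ≤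
      ENNReal.ofReal (3 * (d + 1)) * (surf d univ) * ENNReal.ofReal (K * area d) *
        ENNReal.ofReal G * eLpNorm a (ENNReal.ofReal q) volume := by
  have := isFiniteMeasure_surf hd
  have hq0 : 0 < q := by linarith
  have ht : 0 < t := lt_of_lt_of_le (by positivity) hn
  set w : ℝ → ℝ≥0∞ := fun r => ENNReal.ofReal (t / (r + t) ^ 2) with hw
  have hwm : Measurable w := by fun_prop
  set ν₁ := (volume.restrict (Ioc (0 : ℝ) 1)).withDensity w with hν₁
  have hν₁u : ν₁ univ ≤ 1 := by
    rw [hν₁, withDensity_apply _ .univ, Measure.restrict_univ]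
    exact lintegral_weight_le_one ht
  have : IsFiniteMeasure ν₁ := ⟨hν₁u.trans_lt ENNReal.one_lt_top⟩
  have hbm := measurable_ballAvg h.cont ha
  have hpt : ∀ x, ‖∫ r in Ioc (0 : ℝ) 1, wtErr d n t r * sphAvg ℓ a g r x‖ₑ ≤
      ENNReal.ofReal (3 * (d + 1)) * ENNReal.ofReal G *
        ∫⁻ p, ‖ballAvg ℓ a p x‖ₑ ∂(ν₁.prod (surf d)) := by
    intro x
    have hbx : Measurable fun p : ℝ × Eu d => ‖ballAvg ℓ a p x‖ₑ :=
      (hbm.comp measurable_prodMk_right).enorm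
    calc _ ≤ ∫⁻ r in Ioc (0 : ℝ) 1, ‖wtErr d n t r * sphAvg ℓ a g r x‖ₑ :=
          enorm_integral_le_lintegral_enorm _
      _ ≤ ∫⁻ r in Ioc (0 : ℝ) 1, ENNReal.ofReal (3 * (d + 1)) * ENNReal.ofReal G *
            (w r * ∫⁻ ω, ‖ballAvg ℓ a (r, ω) x‖ₑ ∂(surf d)) := by
          refine setLIntegral_mono' measurableSet_Ioc fun r hr => ?_
          rw [enorm_mul]
          have h1 : ‖wtErr d n t r‖ₑ ≤ ENNReal.ofReal (3 * (d + 1)) * w r := by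
            rw [hw, ← ENNReal.ofReal_mul (by positivity), ← ofReal_norm]
            exact ENNReal.ofReal_le_ofReal (abs_wtErr_le hn hn' hr)
          have h2 : ‖sphAvg ℓ a g r x‖ₑ ≤
              (∫⁻ ω, ‖ballAvg ℓ a (r, ω) x‖ₑ ∂(surf d)) * ENNReal.ofReal G := by
            refine (enorm_integral_le_lintegral_enorm _).trans ?_
            have hbr : Measurable fun ω => ‖ballAvg ℓ a (r, ω) x‖ₑ :=
              hbx.comp measurable_prodMk_left
            rw [← lintegral_mul_const _ hbr]
            refine lintegral_mono fun ω => ?_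
            rw [enorm_mul, ← ofReal_norm (g _)]
            gcongr
            exact hG _
          calc _ ≤ (ENNReal.ofReal (3 * (d + 1)) * w r) *
                ((∫⁻ ω, ‖ballAvg ℓ a (r, ω) x‖ₑ ∂(surf d)) * ENNReal.ofReal G) :=
                mul_le_mul' h1 h2
            _ = _ := by ring
      _ = _ := by
          rw [lintegral_const_mul
              (f := fun r => w r * ∫⁻ ω, ‖ballAvg ℓ a (r, ω) x‖ₑ ∂(surf d)) _
              (hwm.mul hbx.lintegral_prod_right'),
            lintegral_prod _ hbx.aemeasurable, hν₁,
            lintegral_withDensity_eq_lintegral_mul _ hwm hbx.lintegral_prod_right']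
          rfl
  set Aq := eLpNorm a (ENNReal.ofReal q) volume with hAq
  have ha' : ∫⁻ x, ‖a x‖ₑ ^ q ≤ Aq ^ q := (eLpNorm_ofReal_le_iff hq0).1 le_rfl
  rw [eLpNorm_ofReal_le_iff hq0]
  have hae : ∀ᵐ p ∂(ν₁.prod (surf d)), p.2 ∈ sphere (0 : Eu d) 1 :=
    (Measure.ae_prod_mem_iff_ae_ae_mem (s := {p : ℝ × Eu d | p.2 ∈ sphere (0 : Eu d) 1})
      (measurable_snd isClosed_sphere.measurableSet)).2
      (Eventually.of_forall fun _ => ae_surf_mem d)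
  calc _ ≤ ∫⁻ x, (ENNReal.ofReal (3 * (d + 1)) * ENNReal.ofReal G) ^ q *
        (∫⁻ p, ‖ballAvg ℓ a p x‖ₑ ∂(ν₁.prod (surf d))) ^ q := by
        refine lintegral_mono fun x => ?_
        rw [← ENNReal.mul_rpow_of_nonneg _ _ hq0.le]
        exact ENNReal.rpow_le_rpow (hpt x) hq0.le
    _ ≤ (ENNReal.ofReal (3 * (d + 1)) * ENNReal.ofReal G) ^ q *
        ((ν₁.prod (surf d)) univ ^ q * (ENNReal.ofReal (K * area d) ^ q * Aq ^ q)) := by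
        rw [lintegral_const_mul' _ _ (by finiteness)]
        refine mul_le_mul' le_rfl ?_
        refine lintegral_rpow_lintegral_le _ hq (Φ := fun p x => ‖ballAvg ℓ a p x‖ₑ) hbm.enorm ?_
        filter_upwards [hae] with p hp
        refine ((h.isModKernel hp).lintegral_rpow_avg_le hq ha).trans ?_
        gcongr
    _ ≤ (ENNReal.ofReal (3 * (d + 1)) * ENNReal.ofReal G) ^ q *
        ((surf d univ) ^ q * (ENNReal.ofReal (K * area d) ^ q * Aq ^ q)) := by
        gcongr
        rw [← univ_prod_univ, Measure.prod_prod]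
        exact mul_le_of_le_one_left zero_le hν₁u
    _ = _ := by
        simp only [← ENNReal.mul_rpow_of_nonneg _ _ hq0.le]
        ring_nf

end

lemma annConst_pos {d : ℕ} (hd : 1 ≤ d) {K : ℝ} (hK : 0 < K) : 0 < annConst d K := by
  have := area_pos hd
  unfold annConst
  positivity

/-- The part of `ballAvg` that remains after a multiple of a smooth average is subtracted. -/
noncomputable def oscAvg {d : ℕ} (ℓ : Eu d → Eu d → ℝ) (k l : Fin d) (α : ℝ) (a : Eu d → ℝ)
    (δ : ℝ) (p : ℝ × Eu d) (x : Eu d) : ℝ :=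
  ballAvg ℓ a (δ * p.1, p.2) x - α * quad k l (p.1 • p.2) * avg (bump d 1) δ a x

/-- The modulus constant of `bump`. -/
noncomputable def bumpConst (d : ℕ) : ℝ :=
  (∫ w, tent d w)⁻¹ * volume.real (closedBall (0 : Eu d) (2 + 1)) + 2

section

variable {d : ℕ} {ℓ : Eu d → Eu d → ℝ} {a g : Eu d → ℝ} {k l : Fin d} {K α : ℝ}

lemma bump_isModKernel (d : ℕ) {ρ : ℝ} (hρ : ρ ∈ Ioc (1 / 2 : ℝ) 1) :
    IsModKernel (bump d ρ) 1 (bumpConst d) 2 (1 / ((2 * d + 2 : ℕ) + 1)) :=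
  isModKernel_bump d (2 * d + 2) hρ

lemma bump_one_isModKernel (d : ℕ) :
    IsModKernel (bump d 1) 1 (bumpConst d) 2 (1 / ((2 * d + 2 : ℕ) + 1)) :=
  bump_isModKernel d ⟨by norm_num, le_rfl⟩

lemma measurable_oscAvg (hℓ : Continuous fun p : Eu d × Eu d => ℓ p.1 p.2) (ha : Measurable a)
    (δ : ℝ) : Measurable fun y : (ℝ × Eu d) × Eu d => oscAvg ℓ k l α a δ y.1 y.2 := by
  have h1 : Measurable fun y : (ℝ × Eu d) × Eu d => ballAvg ℓ a (δ * y.1.1, y.1.2) y.2 :=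
    (measurable_ballAvg hℓ ha).comp
      (f := fun y : (ℝ × Eu d) × Eu d => ((δ * y.1.1, y.1.2), y.2)) (by fun_prop)
  have h2 : Measurable fun y : (ℝ × Eu d) × Eu d => quad k l (y.1.1 • y.1.2) :=
    (isBL_quad k l).continuous.measurable.comp (by fun_prop)
  exact h1.sub ((h2.const_mul α).mul
    ((measurable_avg (bump_one_isModKernel d).meas ha).comp measurable_snd))

lemma IsAdm.isOscKernel (h : IsAdm ℓ k l K α) {p : ℝ × Eu d} (hp1 : p.1 ∈ Ioc (1 / 2 : ℝ) 1)
    (hp2 : p.2 ∈ sphere (0 : Eu d) 1) :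
    IsOscKernel (fun z => annKernel (Ioo 0 1) (fun z => ℓ z p.2) z -
        α * quad k l (p.1 • p.2) * bump d p.1 z)
      (K * area d + |α| * 257 * 1) (annConst d K + |α| * 257 * bumpConst d) 2
      (1 / ((2 * d + 2 : ℕ) + 1)) := by
  have hm : |α * quad k l (p.1 • p.2)| ≤ |α| * 257 := by
    rw [abs_mul]
    gcongr
    exact (isBL_quad k l).bound _
  have h1 := h.isModKernel hp2
  have h2 := bump_isModKernel d hp1
  refine (h1.sub_const_mul h2 hm).isOscKernel ?_
  rw [integral_sub h1.int (h2.int.const_mul _), integral_const_mul,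
    integral_bump d (by linarith [hp1.1]), h.canc _ hp2,
    quad_smul k l hp1 (by simpa using hp2)]
  ring

lemma IsAdm.oscAvg_eq (h : IsAdm ℓ k l K α) (ha : BddInt a) {p : ℝ × Eu d}
    (hp1 : p.1 ∈ Ioc (1 / 2 : ℝ) 1) (hp2 : p.2 ∈ sphere (0 : Eu d) 1) (δ : ℝ) (x : Eu d) :
    oscAvg ℓ k l α a δ p x = avg (fun z => annKernel (Ioo 0 1) (fun z => ℓ z p.2) z -
        α * quad k l (p.1 • p.2) * bump d p.1 z) (p.1 * δ) a x := by
  have h1 := h.isModKernel hp2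
  have h2 := bump_isModKernel d hp1
  obtain ⟨B, hB⟩ := ha.bdd
  have hi : ∀ ψ : Eu d → ℝ, Integrable ψ → Integrable fun z => ψ z * a (x + (p.1 * δ) • z) :=
    fun ψ hψ => hψ.mul_bdd (c := B) (ha.meas.comp (by fun_prop)).aestronglyMeasurable
      (Eventually.of_forall fun z => hB _)
  rw [oscAvg, ← avg_bump (ρ := p.1) (by linarith [hp1.1]), ballAvg, mul_comm δ p.1]
  simp only [avg, sub_mul, mul_assoc]
  rw [integral_sub (hi _ h1.int), integral_const_mul, integral_const_mul]
  simpa only [mul_assoc] using hi _ (h2.int.const_mul (α * quad k l (p.1 • p.2)))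

/-- The oscillating part of the dyadic sum is controlled on `L^q`. -/
lemma IsAdm.exists_eLpNorm_oscAvg_le (hd : 2 ≤ d) (h : IsAdm ℓ k l K α) {q : ℝ} (hq : 1 < q) :
    ∃ C : ℝ≥0, ∀ (a g : Eu d → ℝ) (G : ℝ) (n : ℕ), BddInt a → Measurable g →
      (∀ x, |g x| ≤ G) → 1 ≤ n →
      eLpNorm (fun x => ∑ j ∈ Finset.range n, ∫ p, oscAvg ℓ k l α a ((1 / 2) ^ j) p x *
          g (x + ((1 / 2) ^ j * p.1) • p.2) ∂(par d)) (ENNReal.ofReal q) volume ≤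
        C * (n : ℝ≥0∞) ^ (max 1 (q - 1) / q) * ENNReal.ofReal G *
          eLpNorm a (ENNReal.ofReal q) volume := by
  have hfin := isFiniteMeasure_par hd
  have hq0 : 0 < q := by linarith
  have hA := area_pos (d := d) (by omega)
  have hI := integral_tent_pos d
  have hK := h.pos
  have hcb : 0 < bumpConst d := by unfold bumpConst; positivity
  have hca := annConst_pos (d := d) (by omega) hK
  obtain ⟨C, hC⟩ := exists_lintegral_sum_avg_rpow_le d
    (N := K * area d + |α| * 257 * 1) (C₀ := annConst d K + |α| * 257 * bumpConst d) (R := 2)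
    (s := 1 / ((2 * d + 2 : ℕ) + 1)) (by positivity) (by positivity) (by norm_num)
    (by positivity) hq
  refine ⟨(par d univ).toNNReal * C ^ q⁻¹, fun a g G n ha hg hG hn => ?_⟩
  set Aq := eLpNorm a (ENNReal.ofReal q) volume with hAq
  have ha' : ∫⁻ x, ‖a x‖ₑ ^ q ≤ Aq ^ q := (eLpNorm_ofReal_le_iff hq0).1 le_rfl
  have hom : ∀ j : ℕ, Measurable fun y : (ℝ × Eu d) × Eu d =>
      oscAvg ℓ k l α a ((1 / 2) ^ j) y.1 y.2 := fun j => measurable_oscAvg h.cont ha.meas _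
  set Φ : ℝ × Eu d → Eu d → ℝ≥0∞ := fun p x =>
    ‖∑ j ∈ Finset.range n, |oscAvg ℓ k l α a ((1 / 2) ^ j) p x|‖ₑ with hΦ
  have hΦm : Measurable fun y : (ℝ × Eu d) × Eu d => Φ y.1 y.2 :=
    (Finset.measurable_fun_sum _ fun j _ => (hom j).abs).enorm
  have hpt : ∀ x, ‖∑ j ∈ Finset.range n, ∫ p, oscAvg ℓ k l α a ((1 / 2) ^ j) p x *
      g (x + ((1 / 2) ^ j * p.1) • p.2) ∂(par d)‖ₑ ≤
      ENNReal.ofReal G * ∫⁻ p, Φ p x ∂(par d) := by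
    intro x
    have hm : ∀ j : ℕ, Measurable fun p : ℝ × Eu d => oscAvg ℓ k l α a ((1 / 2) ^ j) p x :=
      fun j => (hom j).comp measurable_prodMk_right
    calc _ ≤ ∑ j ∈ Finset.range n, ∫⁻ p, ENNReal.ofReal G *
          ‖oscAvg ℓ k l α a ((1 / 2) ^ j) p x‖ₑ ∂(par d) := by
          refine (enorm_sum_le _ _).trans (Finset.sum_le_sum fun j _ => ?_)
          refine (enorm_integral_le_lintegral_enorm _).trans (lintegral_mono fun p => ?_)
          rw [enorm_mul, mul_comm, ← ofReal_norm (g _)]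
          gcongr
          exact hG _
      _ = ∫⁻ p, ENNReal.ofReal G * Φ p x ∂(par d) := by
          rw [← lintegral_finsetSum _ fun j _ => (hm j).enorm.const_mul _]
          refine lintegral_congr fun p => ?_
          rw [← Finset.mul_sum, hΦ]
          simp only
          rw [← ofReal_norm (∑ j ∈ Finset.range n, _), Real.norm_of_nonneg
            (Finset.sum_nonneg fun _ _ => abs_nonneg _),
            ENNReal.ofReal_sum_of_nonneg fun _ _ => abs_nonneg _]
          simp only [← Real.norm_eq_abs, ofReal_norm]
      _ = _ := lintegral_const_mul' _ _ ENNReal.ofReal_ne_top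
  rw [eLpNorm_ofReal_le_iff hq0]
  calc _ ≤ ∫⁻ x, ENNReal.ofReal G ^ q * (∫⁻ p, Φ p x ∂(par d)) ^ q := by
        refine lintegral_mono fun x => ?_
        rw [← ENNReal.mul_rpow_of_nonneg _ _ hq0.le]
        exact ENNReal.rpow_le_rpow (hpt x) hq0.le
    _ ≤ ENNReal.ofReal G ^ q * (par d univ ^ q *
          (C * (n : ℝ≥0∞) ^ max 1 (q - 1) * Aq ^ q)) := by
        rw [lintegral_const_mul' _ _ (by finiteness)]
        refine mul_le_mul' le_rfl (lintegral_rpow_lintegral_le _ hq.le hΦm ?_)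
        filter_upwards [ae_par_mem hd] with p hp
        simp only [hΦ, h.oscAvg_eq ha hp.1 hp.2]
        refine (hC _ a p.1 n (h.isOscKernel hp.1 hp.2) ha hn).trans ?_
        gcongr
    _ = _ := by
        have e1 : (C : ℝ≥0∞) = ((C ^ q⁻¹ : ℝ≥0) : ℝ≥0∞) ^ q := by
          rw [← ENNReal.coe_rpow_of_nonneg _ hq0.le, ← NNReal.rpow_mul, inv_mul_cancel₀ hq0.ne',
            NNReal.rpow_one]
        have e2 : (n : ℝ≥0∞) ^ max 1 (q - 1) = ((n : ℝ≥0∞) ^ (max 1 (q - 1) / q)) ^ q := by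
          rw [← ENNReal.rpow_mul, div_mul_cancel₀ _ hq0.ne']
        rw [e1, e2, ENNReal.coe_mul, ENNReal.coe_toNNReal (measure_ne_top _ _)]
        simp only [← ENNReal.mul_rpow_of_nonneg _ _ hq0.le]
        ring_nf

/-- Each dyadic piece splits into an oscillating part and a product of two averages. -/
lemma exists_integral_sphAvg_eq (hd : 2 ≤ d) : ∃ c : ℝ, ∀ (ℓ : Eu d → Eu d → ℝ) (k l : Fin d)
    (K α : ℝ) (a g : Eu d → ℝ) (δ : ℝ) (x : Eu d), IsAdm ℓ k l K α → BddInt a → BddInt g →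
    ∫ ρ, sphAvg ℓ a g (δ * ρ) x ∂rad =
      (∫ p, oscAvg ℓ k l α a δ p x * g (x + (δ * p.1) • p.2) ∂(par d)) +
        avg (bump d 1) δ a x *
          avg (annKernel (Ioc (1 / 2) 1) fun y => c * α * quad k l y) δ g x := by
  obtain ⟨c, hc⟩ := exists_integral_par_eq hd
  have hfin := isFiniteMeasure_par hd
  have hfs := isFiniteMeasure_surf hd
  refine ⟨c, fun ℓ k l K α a g δ x h ha hg => ?_⟩
  obtain ⟨B, hB⟩ := ha.bdd
  obtain ⟨G, hG⟩ := hg.bdd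
  have hgm : Measurable fun p : ℝ × Eu d => g (x + (δ * p.1) • p.2) :=
    hg.meas.comp (by fun_prop)
  have hbm : Measurable fun p : ℝ × Eu d => ballAvg ℓ a (δ * p.1, p.2) x :=
    (measurable_ballAvg h.cont ha.meas).comp
      (f := fun p : ℝ × Eu d => ((δ * p.1, p.2), x)) (by fun_prop)
  have hqm : Measurable fun y => α * quad k l y :=
    (isBL_quad k l).continuous.measurable.const_mul α
  have hbi : Integrable (fun p : ℝ × Eu d => ballAvg ℓ a (δ * p.1, p.2) x *
      g (x + (δ * p.1) • p.2)) (par d) := by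
    refine .of_bound (hbm.mul hgm).aestronglyMeasurable (K * area d * B * G) ?_
    filter_upwards [ae_par_mem hd] with p hp
    have h1 := h.abs_ballAvg_le hB (p := (δ * p.1, p.2)) hp.2 x
    rw [Real.norm_eq_abs, abs_mul]
    exact mul_le_mul h1 (hG _) (abs_nonneg _) ((abs_nonneg _).trans h1)
  have hqi : Integrable (fun p : ℝ × Eu d => α * quad k l (p.1 • p.2) *
      g (x + (δ * p.1) • p.2)) (par d) := by
    refine .of_bound ((hqm.comp (f := fun p : ℝ × Eu d => p.1 • p.2)
      (by fun_prop)).mul hgm).aestronglyMeasurable (|α| * 257 * G) (Eventually.of_forall fun p => ?_)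
    rw [Real.norm_eq_abs, abs_mul, abs_mul]
    gcongr
    · exact (isBL_quad k l).bound _
    · exact hG _
  have hpar : ∫ p, α * quad k l (p.1 • p.2) * g (x + (δ * p.1) • p.2) ∂(par d) =
      avg (annKernel (Ioc (1 / 2) 1) fun y => c * α * quad k l y) δ g x := by
    have := hc (fun y => α * quad k l y * g (x + δ • y)) (hqm.mul (hg.meas.comp (by fun_prop)))
    simp only [smul_smul] at this
    rw [this, avg]
    congr 1 with y
    by_cases hy : ‖y‖ ∈ Ioc (1 / 2 : ℝ) 1
    · rw [annKernel, indicator_of_mem (show y ∈ ann d from hy), indicator_of_mem hy]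
      ring
    · rw [annKernel, indicator_of_notMem (show y ∉ ann d from hy), indicator_of_notMem hy]
      ring
  have hsplit : ∫ p, oscAvg ℓ k l α a δ p x * g (x + (δ * p.1) • p.2) ∂(par d) =
      (∫ p, ballAvg ℓ a (δ * p.1, p.2) x * g (x + (δ * p.1) • p.2) ∂(par d)) -
        avg (bump d 1) δ a x *
          ∫ p, α * quad k l (p.1 • p.2) * g (x + (δ * p.1) • p.2) ∂(par d) := by
    rw [← integral_const_mul, ← integral_sub hbi (hqi.const_mul _)]
    congr 1 with p
    rw [oscAvg]
    ring
  rw [hsplit, hpar, sub_add_cancel, par, integral_prod _ (by simpa only [par] using hbi)]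
  rfl

/-- The scalar form of the estimate, for a single matrix entry. -/
theorem IsAdm.exists_split (hd : 2 ≤ d) (h : IsAdm ℓ k l K α) {q : ℝ} (hq : 1 < q) :
    ∃ C : ℝ≥0, ∀ (a g : Eu d → ℝ) (t G : ℝ) (n : ℕ), BddInt a → BddInt g → 0 < G →
      (∀ x, |g x| ≤ G) → ∫ x, g x ^ 2 ≤ G ^ 2 → 1 ≤ n → (1 / 2 : ℝ) ^ n ≤ t →
      t < 2 * (1 / 2 : ℝ) ^ n →
      ∃ u : Eu d → ℝ, Measurable u ∧
        ∫⁻ x, ‖u x‖ₑ ≤ C * (n : ℝ≥0∞) ^ (max 1 (q - 1) / q) * ENNReal.ofReal G *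
          eLpNorm a (ENNReal.ofReal q) volume ∧
        eLpNorm (fun x => (∫ r in Ioc (0 : ℝ) 1, wt d t r * sphAvg ℓ a g r x) - u x)
          (ENNReal.ofReal q) volume ≤ C * (n : ℝ≥0∞) ^ (max 1 (q - 1) / q) * ENNReal.ofReal G *
          eLpNorm a (ENNReal.ofReal q) volume := by
  have hfin := isFiniteMeasure_par hd
  have hfs := isFiniteMeasure_surf hd
  have hq0 : 0 < q := by linarith
  obtain ⟨C₁, hC₁⟩ := h.exists_eLpNorm_oscAvg_le hd hq
  obtain ⟨c, hc⟩ := exists_integral_sphAvg_eq hd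
  set M : Eu d → ℝ := annKernel (Ioc (1 / 2) 1) fun y => c * α * quad k l y with hM
  set b := |c * α| + 1 with hb
  have hb0 : 0 < b := by positivity
  set s : ℝ := 1 / ((2 * d + 2 : ℕ) + 1) with hs
  have hs0 : 0 < s := by positivity
  set N := 2 * b * 514 * area d with hN
  set C₀ := annConst d (2 * b * 514) with hC₀
  have hN0 : 0 < N := by have := area_pos (d := d) (by omega); positivity
  have hC₀0 : 0 < C₀ := annConst_pos (by omega) (by positivity)
  have hMk : IsModKernel M N C₀ 2 s := isModKernel_annKernel_quad k l (by linarith)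
  have hM0 : ∫ y, M y = 0 := by
    rw [hM, integral_annKernel_const_mul, integral_annKernel_quad, mul_zero]
  set X := N * C₀ * 2 ^ s * (2 / (1 - (1 / 2) ^ s)) with hX
  have hX0 : 0 < X := by
    have hb1 : ((1 : ℝ) / 2) ^ s < 1 := Real.rpow_lt_one (by norm_num) (by norm_num) hs0
    have : 0 < 1 - ((1 : ℝ) / 2) ^ s := by linarith
    positivity
  set c₁ := 1 + N + X with hc₁
  have hc₁0 : 0 < c₁ := by positivity
  set C₂ : ℝ≥0∞ := ENNReal.ofReal (3 * (d + 1)) * (surf d univ) * ENNReal.ofReal (K * area d)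
    with hC₂
  have hC₂t : C₂ ≠ ⊤ := by finiteness
  refine ⟨C₁ + C₂.toNNReal + c₁.toNNReal, fun a g t G n ha hg hG0 hG hg2 hn hn1 hn2 => ?_⟩
  have ht : 0 < t := lt_of_lt_of_le (by positivity) hn1
  set Aq := eLpNorm a (ENNReal.ofReal q) volume with hAq
  set γ := max 1 (q - 1) / q with hγ
  have hγ0 : 0 < γ := by positivity
  have ha' : ∫⁻ x, ‖a x‖ₑ ^ q ≤ Aq ^ q := (eLpNorm_ofReal_le_iff hq0).1 le_rfl
  have hbk := bump_one_isModKernel d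
  obtain ⟨u, hum, hu1, hu2⟩ := exists_paraproduct_split (d := d) hq hn
    (a := fun j => avg (bump d 1) ((1 / 2) ^ j) a) (g := fun j => avg M ((1 / 2) ^ j) g)
    (fun j => measurable_avg hbk.meas ha.meas) (fun j => measurable_avg hMk.meas hg.meas)
    (Λ := ENNReal.ofReal (c₁ * G)) (B := Aq) (by simpa using by positivity)
    ENNReal.ofReal_ne_top
    (fun j => (hbk.lintegral_rpow_avg_le hq.le ha.meas).trans (by simpa using ha'))
    (fun j x => by
      rw [← ofReal_norm]
      refine ENNReal.ofReal_le_ofReal ((abs_avg_le hMk.int hG x).trans ?_)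
      gcongr
      linarith [hMk.norm_le])
    (by
      have h1 := sum_integral_avg_sq_le (δ := 1) hMk.meas hMk.int hM0 hMk.supp hMk.norm_le hN0
        hC₀0 hs0 hMk.modulus two_pos hg n
      simp only [one_mul] at h1
      simp only [(hg.avg hMk.int hMk.meas).lintegral_sq_eq]
      rw [← ENNReal.ofReal_sum_of_nonneg fun j _ => integral_nonneg fun x => sq_nonneg _,
        ENNReal.ofReal_rpow_of_nonneg (by positivity) zero_le_two]
      refine ENNReal.ofReal_le_ofReal (h1.trans ?_)
      rw [← hX, Real.rpow_two, mul_pow]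
      have : X ≤ c₁ ^ 2 := by nlinarith
      gcongr)
  have hcast : ((C₁ + C₂.toNNReal + c₁.toNNReal : ℝ≥0) : ℝ≥0∞) =
      C₁ + C₂ + ENNReal.ofReal c₁ := by
    rw [ENNReal.coe_add, ENNReal.coe_add, ENNReal.coe_toNNReal hC₂t]
    rfl
  rw [hcast]
  have hpiece : (n : ℝ≥0∞) ^ γ * ENNReal.ofReal (c₁ * G) * Aq =
      ENNReal.ofReal c₁ * (n : ℝ≥0∞) ^ γ * ENNReal.ofReal G * Aq := by
    rw [ENNReal.ofReal_mul hc₁0.le]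
    ring
  rw [hpiece] at hu1 hu2
  refine ⟨u, hum, hu1.trans ?_, ?_⟩
  · gcongr
    exact le_add_self
  obtain ⟨B, hB⟩ := ha.bdd
  have hsm := measurable_sphAvg hd h.cont ha.meas hg.meas
  set E : Eu d → ℝ := fun x => ∫ r in Ioc (0 : ℝ) 1, wtErr d n t r * sphAvg ℓ a g r x with hE
  set V : Eu d → ℝ := fun x => ∑ j ∈ Finset.range n, ∫ p, oscAvg ℓ k l α a ((1 / 2) ^ j) p x *
          g (x + ((1 / 2) ^ j * p.1) • p.2) ∂(par d) with hV
  set W : Eu d → ℝ := fun x => (∑ j ∈ Finset.range n, avg (bump d 1) ((1 / 2) ^ j) a x *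
    avg M ((1 / 2) ^ j) g x) - u x with hW
  have hEm : Measurable E := by
    have : Measurable fun y : Eu d × ℝ => wtErr d n t y.2 * sphAvg ℓ a g y.2 y.1 :=
      ((measurable_wtErr d n t).comp measurable_snd).mul (hsm.comp measurable_swap)
    exact this.stronglyMeasurable.integral_prod_right'.measurable
  have hVm : Measurable V := by
    refine Finset.measurable_fun_sum _ fun j _ => ?_
    have : Measurable fun y : Eu d × (ℝ × Eu d) => oscAvg ℓ k l α a ((1 / 2) ^ j) y.2 y.1 *
          g (y.1 + ((1 / 2) ^ j * y.2.1) • y.2.2) :=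
      ((measurable_oscAvg h.cont ha.meas _).comp measurable_swap).mul
        (hg.meas.comp (by fun_prop))
    exact this.stronglyMeasurable.integral_prod_right'.measurable
  have hWm : Measurable W :=
    (Finset.measurable_fun_sum _ fun j _ =>
      (measurable_avg hbk.meas ha.meas).mul (measurable_avg hMk.meas hg.meas)).sub hum
  have hsum : (fun x => (∫ r in Ioc (0 : ℝ) 1, wt d t r * sphAvg ℓ a g r x) - u x) =
      (E + V) + W := by
    ext x
    rw [integral_wt_mul_eq ht (T := fun r => sphAvg ℓ a g r x) (hsm.comp measurable_prodMk_right)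
      (fun r => h.abs_sphAvg_le hd hB hG r x) n]
    simp only [hc ℓ k l K α a g _ x h ha hg, Finset.sum_add_distrib, Pi.add_apply, hE, hV, hW]
    ring
  have h1q : 1 ≤ ENNReal.ofReal q := by simpa using hq.le
  have hn1' : (1 : ℝ≥0∞) ≤ (n : ℝ≥0∞) ^ γ := ENNReal.one_le_rpow (by exact_mod_cast hn) hγ0
  rw [hsum]
  calc _ ≤ (eLpNorm E (ENNReal.ofReal q) volume + eLpNorm V (ENNReal.ofReal q) volume) +
        eLpNorm W (ENNReal.ofReal q) volume :=
        (eLpNorm_add_le (hEm.add hVm).aestronglyMeasurable hWm.aestronglyMeasurable h1q).trans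
          (add_le_add (eLpNorm_add_le hEm.aestronglyMeasurable hVm.aestronglyMeasurable h1q) le_rfl)
    _ ≤ (C₂ * (n : ℝ≥0∞) ^ γ * ENNReal.ofReal G * Aq +
          C₁ * (n : ℝ≥0∞) ^ γ * ENNReal.ofReal G * Aq) +
          ENNReal.ofReal c₁ * (n : ℝ≥0∞) ^ γ * ENNReal.ofReal G * Aq := by
        gcongr
        · refine (h.eLpNorm_wtErr_le hd hq.le ha.meas hG hn1 hn2).trans ?_
          rw [← hC₂]
          gcongr
          exact le_mul_of_one_le_right zero_le hn1'
        · exact hC₁ a g G n ha hg.meas hG hn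
    _ = _ := by ring

end

section

variable {d : ℕ} {L : Eu d → Eu d → EuclideanSpace ℝ (Fin d × Fin d)}

lemma rpow_mul_eq_annKernel (hd : 2 ≤ d) {ℓ : Eu d → Eu d → ℝ} {k l : Fin d} {z ω : Eu d}
    (hℓ : ℓ z ω = ‖z‖ * L z ω (k, l)) (hz : z ∈ ball (0 : Eu d) 1) :
    ‖z‖ ^ (1 - (d : ℝ)) * L z ω (k, l) = annKernel (Ioo 0 1) (fun z => ℓ z ω) z := by
  have hd' : (2 : ℝ) ≤ d := by exact_mod_cast hd
  rw [annKernel]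
  by_cases h0 : z = 0
  · subst h0
    rw [norm_zero, Real.zero_rpow (by linarith), indicator_of_notMem (by simp), zero_mul, zero_mul]
  · have hz0 : 0 < ‖z‖ := norm_pos_iff.2 h0
    rw [indicator_of_mem (show ‖z‖ ∈ Ioo (0 : ℝ) 1 from ⟨hz0, by simpa using hz⟩), hℓ,
      Real.rpow_sub hz0, Real.rpow_one, Real.rpow_natCast]
    field_simp

/-- The rescaled entries of the kernel extend to admissible scalar kernels. -/
lemma exists_isAdm (hd : 2 ≤ d)
    (hLbdd : ∃ M : ℝ, ∀ z ∈ ball (0 : Eu d) 1, ∀ ω ∈ sphere (0 : Eu d) 1, ‖‖z‖ • L z ω‖ ≤ M)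
    (hLlip : ∃ K : ℝ≥0, LipschitzOnWith K (fun q : Eu d × Eu d => ‖q.1‖ • L q.1 q.2)
      (ball 0 1 ×ˢ sphere 0 1))
    {α : ℝ} (k l : Fin d)
    (hcanc : ∀ ω ∈ sphere (0 : Eu d) 1,
      (∫ z in ball (0 : Eu d) 1, (‖z‖ ^ (1 - (d : ℝ))) * L z ω (k, l)) =
        α * (ω k * ω l - if k = l then 1 / (d : ℝ) else 0)) :
    ∃ (ℓ : Eu d → Eu d → ℝ) (K : ℝ), IsAdm ℓ k l K α ∧
      ∀ z ∈ ball (0 : Eu d) 1, ∀ ω ∈ sphere (0 : Eu d) 1, ℓ z ω = ‖z‖ * L z ω (k, l) := by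
  obtain ⟨M, hM⟩ := hLbdd
  obtain ⟨K₀, hK₀⟩ := hLlip
  have hf : LipschitzOnWith K₀ (fun q : Eu d × Eu d => ‖q.1‖ * L q.1 q.2 (k, l))
      (ball 0 1 ×ˢ sphere 0 1) := by
    refine LipschitzOnWith.of_dist_le_mul fun x hx y hy => ?_
    refine le_trans ?_ (hK₀.dist_le_mul x hx y hy)
    rw [dist_eq_norm, dist_eq_norm]
    simpa using PiLp.norm_apply_le (‖x.1‖ • L x.1 x.2 - ‖y.1‖ • L y.1 y.2) (k, l)
  obtain ⟨f, hfl, hfe⟩ := hf.extend_real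
  set K : ℝ := max (K₀ : ℝ) M + 1 with hK
  have hK0 : 0 < K := by have : (0 : ℝ) ≤ max (K₀ : ℝ) M := le_max_of_le_left K₀.2; positivity
  have hcl : LipschitzWith K₀ fun q => max (-K) (min K (f q)) := (hfl.const_min K).const_max (-K)
  have hK₀K : (K₀ : ℝ) ≤ K := by linarith [le_max_left (K₀ : ℝ) M]
  have hEq : ∀ z ∈ ball (0 : Eu d) 1, ∀ ω ∈ sphere (0 : Eu d) 1,
      max (-K) (min K (f (z, ω))) = ‖z‖ * L z ω (k, l) := by
    intro z hz ω hω
    have h1 : ‖z‖ * L z ω (k, l) = f (z, ω) := @hfe (z, ω) (mk_mem_prod hz hω)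
    have h2 : |‖z‖ * L z ω (k, l)| ≤ K := by
      have := (PiLp.norm_apply_le (‖z‖ • L z ω) (k, l)).trans (hM z hz ω hω)
      simp only [PiLp.smul_apply, smul_eq_mul, Real.norm_eq_abs] at this
      linarith [le_max_right (K₀ : ℝ) M]
    rw [← h1, min_eq_right (abs_le.1 h2).2, max_eq_right (abs_le.1 h2).1]
  refine ⟨fun z ω => max (-K) (min K (f (z, ω))), K, ⟨hK0, hcl.continuous, fun ω => ⟨fun z => ?_,
    fun z z' => ?_⟩, fun ω hω z hz => ?_, fun ω hω => ?_⟩, hEq⟩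
  · exact abs_le.2 ⟨le_max_left _ _, max_le (by linarith) (min_le_left _ _)⟩
  · have := hcl.dist_le_mul (z, ω) (z', ω)
    rw [Prod.dist_eq, dist_self, max_eq_left dist_nonneg, dist_eq_norm, dist_eq_norm] at this
    exact this.trans (by gcongr)
  · have h0 := hEq 0 (by simp) ω hω
    have := hcl.dist_le_mul (z, ω) (0, ω)
    rw [h0, Prod.dist_eq, dist_self, max_eq_left dist_nonneg, norm_zero, zero_mul, dist_zero_right,
      dist_zero_right] at this
    exact this.trans (by gcongr)
  · rw [← hcanc ω hω, ← setIntegral_eq_integral_of_forall_compl_eq_zero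
      (s := ball (0 : Eu d) 1)]
    · exact setIntegral_congr_fun measurableSet_ball fun z hz =>
        (rpow_mul_eq_annKernel (L := L) (ℓ := fun z ω => max (-K) (min K (f (z, ω)))) hd
          (hEq z hz ω hω) hz).symm
    · intro z hz
      rw [annKernel, indicator_of_notMem, zero_mul]
      exact fun h => hz (by simpa using h.2)

variable {ℓ : Eu d → Eu d → ℝ} {k l : Fin d} {K α : ℝ} {a g : Eu d → ℝ}

lemma IsAdm.integrable_prod (hd : 2 ≤ d) (h : IsAdm ℓ k l K α) (ha : BddInt a) (hg : BddInt g)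
    (r : ℝ) (x : Eu d) :
    Integrable (fun y : Eu d × Eu d => annKernel (Ioo 0 1) (fun z => ℓ z y.2) y.1 *
      a (x + r • y.1) * g (x + r • y.2)) (volume.prod (surf d)) := by
  have := isFiniteMeasure_surf hd
  obtain ⟨B, hB⟩ := ha.bdd
  obtain ⟨G, hG⟩ := hg.bdd
  have hB0 := (abs_nonneg _).trans (hB 0)
  have hG0 := (abs_nonneg _).trans (hG 0)
  have hm : Measurable fun y : Eu d × Eu d => annKernel (Ioo 0 1) (fun z => ℓ z y.2) y.1 *
      a (x + r • y.1) * g (x + r • y.2) := by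
    refine ((Measurable.mul ?_ h.cont.measurable).mul (ha.meas.comp (by fun_prop))).mul
      (hg.meas.comp (by fun_prop))
    exact (((measurable_id.pow_const d).inv).indicator measurableSet_Ioo).comp
        (measurable_norm.comp measurable_fst)
  have hi : ∀ᵐ ω ∂(surf d), Integrable (fun z => annKernel (Ioo 0 1) (fun z => ℓ z ω) z *
      a (x + r • z) * g (x + r • ω)) := by
    filter_upwards [ae_surf_mem d] with ω hω
    exact ((h.isModKernel hω).int.mul_bdd (c := B)
      (ha.meas.comp (by fun_prop)).aestronglyMeasurable
      (Eventually.of_forall fun z => hB _)).mul_const _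
  rw [integrable_prod_iff' hm.aestronglyMeasurable]
  refine ⟨hi, .of_bound hm.norm.stronglyMeasurable.integral_prod_left'.aestronglyMeasurable
    (K * area d * (B * G)) ?_⟩
  filter_upwards [ae_surf_mem d, hi] with ω hω hiω
  have hk := h.isModKernel hω
  rw [Real.norm_of_nonneg (integral_nonneg fun _ => norm_nonneg _)]
  calc _ ≤ ∫ z, |annKernel (Ioo 0 1) (fun z => ℓ z ω) z| * (B * G) := by
        refine integral_mono hiω.norm (hk.int.abs.mul_const _) fun z => ?_
        simp only [norm_mul, Real.norm_eq_abs, mul_assoc]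
        gcongr
        · exact hB _
        · exact hG _
    _ ≤ _ := by
        rw [integral_mul_const]
        gcongr
        exact hk.norm_le

lemma Qop_eq_sum (hd : 2 ≤ d) {t : ℝ} (ht : 0 < t) {α : ℝ}
    {A : Eu d → EuclideanSpace ℝ (Fin d × Fin d)} {ℓ : Fin d × Fin d → Eu d → Eu d → ℝ}
    {K : Fin d × Fin d → ℝ} (hadm : ∀ i, IsAdm (ℓ i) i.1 i.2 (K i) α)
    (hℓ : ∀ i, ∀ z ∈ ball (0 : Eu d) 1, ∀ ω ∈ sphere (0 : Eu d) 1, ℓ i z ω = ‖z‖ * L z ω i)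
    (hA : ∀ i, BddInt fun x => A x i) (hg : BddInt g) (x : Eu d) :
    Qop d t L A g x = ∑ i, ∫ r in Ioc (0 : ℝ) 1, wt d t r * sphAvg (ℓ i) (fun x => A x i) g r x := by
  have := isFiniteMeasure_surf hd
  choose B hB using fun i => (hA i).bdd
  obtain ⟨G, hG⟩ := hg.bdd
  have h_int : ∀ i, IntegrableOn (fun r => wt d t r * sphAvg (ℓ i) (fun x => A x i) g r x)
      (Ioc 0 1) := fun i => by
    refine Measure.integrableOn_of_bounded
      (M := t⁻¹ * (K i * area d * B i * G * (surf d).real univ)) measure_Ioc_lt_top.ne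
      ((measurable_wt d t).mul ((measurable_sphAvg hd (hadm i).cont (hA i).meas hg.meas).comp
        measurable_prodMk_right)).aestronglyMeasurable ?_
    filter_upwards [ae_restrict_mem measurableSet_Ioc] with r hr
    rw [norm_mul]
    refine mul_le_mul ?_ ((hadm i).abs_sphAvg_le hd (hB i) hG r x) (norm_nonneg _) (by positivity)
    rw [Real.norm_of_nonneg (wt_nonneg ht hr.1)]
    refine (wt_le ht hr.1).trans ?_
    gcongr
    linarith [hr.1]
  rw [← integral_finsetSum _ fun i _ => h_int i, Qop]
  refine setIntegral_congr_fun measurableSet_Ioc fun r hr => ?_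
  simp only [← Finset.mul_sum]
  set f : Fin d × Fin d → Eu d × Eu d → ℝ := fun i y =>
    annKernel (Ioo 0 1) (fun z => ℓ i z y.2) y.1 * A (x + r • y.1) i * g (x + r • y.2) with hf
  have hfi : ∀ i, Integrable (f i) (volume.prod (surf d)) := fun i =>
    (hadm i).integrable_prod hd (hA i) hg r x
  have hz : ∀ z ∈ ball (0 : Eu d) 1,
      ∫ ω in sphere (0 : Eu d) 1, (r ^ d / (r + t) ^ (d + 1)) * (‖z‖ ^ (1 - (d : ℝ))) *
        (∑ i, L z ω i * A (x + r • z) i) * g (x + r • ω) ∂(μH[(d : ℝ) - 1]) =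
      wt d t r * ∫ ω, ∑ i, f i (z, ω) ∂(surf d) := fun z hz => by
    rw [← integral_const_mul, surf]
    refine setIntegral_congr_fun isClosed_sphere.measurableSet fun ω hω => ?_
    simp only [hf, wt, ← rpow_mul_eq_annKernel hd (hℓ _ z hz ω hω) hz, Finset.mul_sum,
      Finset.sum_mul]
    refine Finset.sum_congr rfl fun i _ => ?_
    ring
  rw [setIntegral_congr_fun measurableSet_ball hz, integral_const_mul,
    setIntegral_eq_integral_of_forall_compl_eq_zero]
  · congr 1
    rw [← integral_prod (fun y => ∑ i, f i y) (integrable_finsetSum _ fun i _ => hfi i),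
      integral_finsetSum _ fun i _ => hfi i]
    refine Finset.sum_congr rfl fun i _ => ?_
    rw [integral_prod_symm _ (hfi i)]
    simp only [hf, integral_mul_const]
    rfl
  · intro z hz
    have h0 : ∀ i ω, f i (z, ω) = 0 := fun i ω => by
      simp only [hf, annKernel]
      rw [indicator_of_notMem (fun h => hz (by simpa using h.2)), zero_mul, zero_mul, zero_mul]
    simp [h0]

end

lemma exists_dyadic_scale {t : ℝ} (ht : t ∈ Ioo (0 : ℝ) (1 / 2)) : ∃ n : ℕ, 1 ≤ n ∧
    (1 / 2 : ℝ) ^ n ≤ t ∧ t < 2 * (1 / 2 : ℝ) ^ n ∧ (n : ℝ) ≤ 2 / Real.log 2 * |Real.log t| := by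
  obtain ⟨m, hm1, hm2⟩ : ∃ m : ℕ, t < (1 / 2 : ℝ) ^ (m + 1) ∧ (1 / 2 : ℝ) ^ (m + 2) ≤ t := by
    have hex : ∃ n : ℕ, (1 / 2 : ℝ) ^ n ≤ t :=
      (exists_pow_lt_of_lt_one ht.1 (by norm_num)).imp fun _ => le_of_lt
    classical
    have h0 : 2 ≤ Nat.find hex := by
      rw [Nat.le_find_iff]
      intro m hm
      have := ht.2
      interval_cases m <;> norm_num <;> linarith
    obtain ⟨m, hm⟩ : ∃ m, Nat.find hex = m + 2 := ⟨Nat.find hex - 2, by omega⟩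
    refine ⟨m, not_le.1 (Nat.find_min hex (by omega)), ?_⟩
    rw [← hm]
    exact Nat.find_spec hex
  refine ⟨m + 2, by omega, hm2, by rw [pow_succ]; linarith, ?_⟩
  have hl2 : 0 < Real.log 2 := Real.log_pos (by norm_num)
  have h1 : Real.log t < -((m + 1) * Real.log 2) := by
    have := Real.log_lt_log ht.1 hm1
    rw [Real.log_pow, one_div, Real.log_inv] at this
    push_cast at this
    linarith
  have h2 : (m + 1) * Real.log 2 ≤ |Real.log t| := by linarith [neg_le_abs (Real.log t)]
  rw [div_mul_eq_mul_div, le_div_iff₀ hl2]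
  push_cast
  nlinarith [mul_nonneg m.cast_nonneg hl2.le]

lemma max_div_eq {q : ℝ} (hq : 1 < q) : max 1 (q - 1) / q = 1 / min q (q / (q - 1)) := by
  have h1 : 0 < q - 1 := by linarith
  rcases le_total q 2 with h | h
  · rw [max_eq_left (by linarith), min_eq_left]
    rw [le_div_iff₀ h1]
    nlinarith
  · rw [max_eq_right (by linarith), min_eq_right, one_div_div]
    rw [div_le_iff₀ h1]
    nlinarith

lemma enorm_le_eLpNorm_top {d : ℕ} {f : Eu d → ℝ} (hf : Continuous f) (x : Eu d) :
    ‖f x‖ₑ ≤ eLpNorm f ⊤ volume := by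
  have h : ∀ᵐ y, ‖f y‖ₑ ≤ eLpNorm f ⊤ volume := by
    rw [eLpNorm_exponent_top]
    exact enorm_ae_le_eLpNormEssSup f volume
  have hd := Measure.dense_of_ae h
  have hc : IsClosed {y | ‖f y‖ₑ ≤ eLpNorm f ⊤ volume} :=
    isClosed_le hf.enorm continuous_const
  have := hc.closure_eq ▸ hd x
  exact this

end QopBound

open QopBound

/-- `L¹ + L^q` bound for `Q`:
`‖Q(A,g)‖_{L¹+L^q} ≤ C |log h|^{1/q̄} (‖g‖_{L^∞} + ‖g‖_{L²}) ‖A‖_{L^q}`,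
with `q̄ = min(q, q/(q−1))`, for a kernel `L` with `|z|L` bounded and Lipschitz and
satisfying the cancellation `∫_{B(0,1)} L(z,ω)|z|^{1−d} dz = α(ω⊗ω − (1/d) Id)`. -/
theorem Qop_L1_plus_Lq_bound (d : ℕ) (hd : 2 ≤ d)
    (L : EuclideanSpace ℝ (Fin d) → EuclideanSpace ℝ (Fin d) →
      EuclideanSpace ℝ (Fin d × Fin d))
    (hLbdd : ∃ M : ℝ, ∀ z ∈ Metric.ball (0 : EuclideanSpace ℝ (Fin d)) 1,
      ∀ ω ∈ Metric.sphere (0 : EuclideanSpace ℝ (Fin d)) 1, ‖‖z‖ • L z ω‖ ≤ M)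
    (hLlip : ∃ K : NNReal, LipschitzOnWith K
      (fun q : EuclideanSpace ℝ (Fin d) × EuclideanSpace ℝ (Fin d) => ‖q.1‖ • L q.1 q.2)
      (Metric.ball 0 1 ×ˢ Metric.sphere 0 1))
    (hcanc : ∃ α : ℝ, ∀ ω ∈ Metric.sphere (0 : EuclideanSpace ℝ (Fin d)) 1,
      ∀ k l : Fin d,
        (∫ z in Metric.ball (0 : EuclideanSpace ℝ (Fin d)) 1,
            (‖z‖ ^ (1 - (d : ℝ))) * L z ω (k, l))
          = α * (ω k * ω l - if k = l then 1 / (d : ℝ) else 0))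
    (q : ℝ) (hq : 1 < q) :
    ∃ C : ℝ, 0 < C ∧
      ∀ h : ℝ, h ∈ Set.Ioo (0 : ℝ) (1/2) →
      ∀ A : SchwartzMap (EuclideanSpace ℝ (Fin d)) (EuclideanSpace ℝ (Fin d × Fin d)),
      ∀ g : SchwartzMap (EuclideanSpace ℝ (Fin d)) ℝ,
        ∃ u v : EuclideanSpace ℝ (Fin d) → ℝ,
          Measurable u ∧ Measurable v ∧
          (Qop d h L (⇑A) (⇑g) =ᵐ[volume] u + v) ∧
          eLpNorm u 1 volume + eLpNorm v (ENNReal.ofReal q) volume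
            ≤ ENNReal.ofReal (C * |Real.log h| ^ (1 / min q (q / (q - 1)))) *
                (eLpNorm (⇑g) ⊤ volume + eLpNorm (⇑g) 2 volume) *
                eLpNorm (⇑A) (ENNReal.ofReal q) volume := by
  obtain ⟨α, hα⟩ := hcanc
  choose ℓ K hadm hℓ using fun i : Fin d × Fin d =>
    exists_isAdm hd hLbdd hLlip i.1 i.2 fun ω hω => hα ω hω i.1 i.2
  choose C hC using fun i => (hadm i).exists_split hd hq
  set γ := max 1 (q - 1) / q with hγ
  have hγ0 : 0 < γ := by positivity
  have hl2 : 0 < Real.log 2 := Real.log_pos (by norm_num)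
  set c : ℝ := (2 / Real.log 2) ^ γ with hc
  have hc0 : 0 < c := by positivity
  set D : ℝ≥0 := ∑ i, C i with hD
  refine ⟨2 * D * c + 1, by positivity, fun h hh A g => ?_⟩
  obtain ⟨n, hn, hn1, hn2, hn3⟩ := exists_dyadic_scale hh
  have hA : ∀ i, BddInt fun x => A x i := fun i => by
    have hcont : Continuous fun x => A x i :=
      (EuclideanSpace.proj (𝕜 := ℝ) i).continuous.comp A.continuous
    exact ⟨hcont.measurable, (EuclideanSpace.proj (𝕜 := ℝ) i).integrable_comp A.integrable,
      SchwartzMap.seminorm ℝ 0 0 A,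
      fun x => (PiLp.norm_apply_le (A x) i).trans (A.norm_le_seminorm ℝ x)⟩
  have hg : BddInt g := ⟨g.continuous.measurable, g.integrable, SchwartzMap.seminorm ℝ 0 0 g,
    g.norm_le_seminorm ℝ⟩
  set Gₑ : ℝ≥0∞ := eLpNorm g ⊤ volume + eLpNorm g 2 volume with hGₑ
  have hGt : Gₑ ≠ ⊤ :=
    ENNReal.add_ne_top.2 ⟨(g.memLp ⊤ volume).eLpNorm_ne_top, (g.memLp 2 volume).eLpNorm_ne_top⟩
  have hGof : ENNReal.ofReal Gₑ.toReal = Gₑ := ENNReal.ofReal_toReal hGt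
  have hgG : ∀ x, |g x| ≤ Gₑ.toReal := fun x => by
    rw [← Real.norm_eq_abs, ← toReal_enorm]
    exact ENNReal.toReal_mono hGt
      ((enorm_le_eLpNorm_top g.continuous x).trans le_self_add)
  have hsum := Qop_eq_sum hd hh.1 hadm hℓ hA hg
  rcases (ENNReal.toReal_nonneg (a := Gₑ)).eq_or_lt with hG0 | hG0
  · have hg0 : ∀ x, g x = 0 := fun x => abs_nonpos_iff.1 (hG0 ▸ hgG x)
    refine ⟨0, 0, measurable_zero, measurable_zero, Eventually.of_forall fun x => ?_, by simp⟩
    simp [hsum, sphAvg, hg0]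
  have hg2 : ∫ x, g x ^ 2 ≤ Gₑ.toReal ^ 2 := by
    rw [← ENNReal.ofReal_le_ofReal_iff (by positivity), ← hg.lintegral_sq_eq,
      ENNReal.ofReal_pow hG0.le, hGof]
    have h2 := (eLpNorm_ofReal_le_iff (f := g) (μ := (volume : Measure (Eu d)))
      (B := eLpNorm g (ENNReal.ofReal 2) volume) (q := 2) two_pos).1 le_rfl
    rw [ENNReal.ofReal_ofNat, ENNReal.rpow_two] at h2
    exact h2.trans (by gcongr; exact le_add_self)
  choose u hum hu1 hu2 using fun i =>
    hC i (fun x => A x i) g h Gₑ.toReal n (hA i) hg hG0 hgG hg2 hn hn1 hn2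
  set S : Fin d × Fin d → Eu d → ℝ := fun i x =>
    ∫ r in Ioc (0 : ℝ) 1, wt d h r * sphAvg (ℓ i) (fun x => A x i) g r x with hS
  have hSm : ∀ i, Measurable (S i) := fun i => by
    have := isFiniteMeasure_surf hd
    have hm : Measurable fun y : Eu d × ℝ => wt d h y.2 * sphAvg (ℓ i) (fun x => A x i) g y.2 y.1 :=
      ((measurable_wt d h).comp measurable_snd).mul
        ((measurable_sphAvg hd (hadm i).cont (hA i).meas hg.meas).comp measurable_swap)
    exact hm.stronglyMeasurable.integral_prod_right'.measurable
  have hvm : ∀ i, Measurable fun x => S i x - u i x := fun i => (hSm i).sub (hum i)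
  have hms : ∀ w : Fin d × Fin d → Eu d → ℝ, (∀ i, Measurable (w i)) → Measurable (∑ i, w i) :=
    fun w hw => by
      rw [Finset.sum_fn]
      exact Finset.measurable_fun_sum _ fun i _ => hw i
  refine ⟨∑ i, u i, ∑ i, fun x => S i x - u i x, hms _ hum, hms _ hvm, Eventually.of_forall fun x => ?_, ?_⟩
  · simp [hsum, hS, Finset.sum_apply]
  set Aq := eLpNorm A (ENNReal.ofReal q) volume with hAq
  have hAi : ∀ i, eLpNorm (fun x => A x i) (ENNReal.ofReal q) volume ≤ Aq := fun i =>
    eLpNorm_mono fun x => PiLp.norm_apply_le (A x) i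
  have hnγ : (n : ℝ≥0∞) ^ γ ≤ ENNReal.ofReal (c * |Real.log h| ^ γ) := by
    rw [hc, ← Real.mul_rpow (by positivity) (abs_nonneg _), ← ENNReal.ofReal_natCast,
      ENNReal.ofReal_rpow_of_nonneg n.cast_nonneg hγ0.le]
    gcongr
  have hbound : ∀ i, C i * (n : ℝ≥0∞) ^ γ * ENNReal.ofReal Gₑ.toReal *
      eLpNorm (fun x => A x i) (ENNReal.ofReal q) volume ≤
      C i * (ENNReal.ofReal (c * |Real.log h| ^ γ) * Gₑ * Aq) := fun i => by
    rw [hGof, mul_assoc, mul_assoc, mul_assoc]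
    gcongr
    exact hAi i
  have hu : eLpNorm (∑ i, u i) 1 volume ≤
      D * (ENNReal.ofReal (c * |Real.log h| ^ γ) * Gₑ * Aq) := by
    refine (eLpNorm_sum_le (fun i _ => (hum i).aestronglyMeasurable) le_rfl).trans ?_
    rw [hD, ENNReal.ofNNReal_finsetSum, Finset.sum_mul]
    refine Finset.sum_le_sum fun i _ => ?_
    rw [eLpNorm_one_eq_lintegral_enorm]
    exact (hu1 i).trans (hbound i)
  have hv : eLpNorm (∑ i, fun x => S i x - u i x) (ENNReal.ofReal q) volume ≤
      D * (ENNReal.ofReal (c * |Real.log h| ^ γ) * Gₑ * Aq) := by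
    refine (eLpNorm_sum_le (fun i _ => (hvm i).aestronglyMeasurable) (by simpa using hq.le)).trans ?_
    rw [hD, ENNReal.ofNNReal_finsetSum, Finset.sum_mul]
    exact Finset.sum_le_sum fun i _ => (hu2 i).trans (hbound i)
  rw [← max_div_eq hq, ← hγ]
  calc _ ≤ D * (ENNReal.ofReal (c * |Real.log h| ^ γ) * Gₑ * Aq) +
        D * (ENNReal.ofReal (c * |Real.log h| ^ γ) * Gₑ * Aq) := add_le_add hu hv
    _ = ENNReal.ofReal (2 * D * c * |Real.log h| ^ γ) * Gₑ * Aq := by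
        rw [show 2 * (D : ℝ) * c * |Real.log h| ^ γ = 2 * (D * (c * |Real.log h| ^ γ)) by ring,
          ENNReal.ofReal_mul zero_le_two, ENNReal.ofReal_mul D.coe_nonneg, ENNReal.ofReal_coe_nnreal,
          ENNReal.ofReal_ofNat]
        ring
    _ ≤ _ := by
        gcongr
        linarith
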